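/- arXiv:1710.02893 — 4 statements merged into one kernel-verified Lean document; each statement's English description precedes it below -/
import Mathlib

section
/- Let f be a germ of holomorphic function at 0 ∈ ℂⁿ with f ≠ 0 and f(0) = 0, and suppose f is not a power in the ring of holomorphic germs, i.e., there is no germ of holomorphic function g at 0 and integer k ≥ 2 with f = g^k. Then Re(f) and Im(f) are irreducible in the ring of germs at 0 ∈ ℂⁿ of real-valued real-analytic functions: whenever Re(f) = g·h (respectively Im(f) = g·h) with g, h germs of real-valued real-analytic functions at 0, then g(0) ≠ 0 or h(0) ≠ 0. -/
open Filter Topology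

/-!
Suppose `Re f = g h` with `g` and `h` real-analytic germs vanishing at `0`. Replacing `conj z` by an
independent variable `w` (`exists_polarization`, `eventually_zero_of_antidiagonal`) gives an identity
of holomorphic germs `f z + conj (f (conj w)) = 2 g̃ (z, w) h̃ (z, w)`. Restricting `w` to a complex
line on which the second summand is nonzero, and choosing a coordinate `s` on that line in which
this summand becomes `s ^ m`, one obtains a factorization of `f z + s ^ m` into two nonunits `G`, `H`.

Taking norms of `G` and `H` over the `m`-th roots of unity acting on `s` yields germs in `z` and
`τ = f z + s ^ m` with product `τ ^ m` (`norm_descends`). As `τ` is prime, the norm of `G` is `τ ^ d`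
times a unit with `0 < d < m`, and at `s = 0` this reads `G (z, 0) ^ m = f z ^ d * U z` with a unit `U`
(`factor_add_pow`). A Bézout argument then shows that `f` is a proper power (`is_power_of_pow_eq`),
contrary to hypothesis. The imaginary part is the real part of `-i f`.

The analytic tool throughout is the Riemann extension theorem `riemann_extension`, which supplies
both the descended norm and the quotients of germs; it is proved with a Cauchy mean over circles.
-/

/-! ### Analyticity of parameter integrals -/

/-- Near a point of analyticity, the Taylor series at all nearby points converge on a ball of common
radius, with a common geometric bound on the coefficients. -/
theorem taylor_local {E : Type*} [NormedAddCommGroup E] [NormedSpace ℂ E] {A : E → ℂ} {x₀ : E}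
    (hA : AnalyticAt ℂ A x₀) :
    ∃ ρ : ℝ, 0 < ρ ∧ ∃ C : ℝ, ∀ᶠ x in 𝓝 x₀,
      (∀ k : ℕ, ‖((k.factorial : ℂ)⁻¹ • iteratedFDeriv ℂ k A x)‖ * ρ ^ k ≤ C) ∧
      (∀ z : E, ‖z‖ < ρ →
        HasSum (fun k : ℕ => ((k.factorial : ℂ)⁻¹ • iteratedFDeriv ℂ k A x) fun _ => z)
          (A (x + z))) := by
  obtain ⟨p, r, hp⟩ := hA
  obtain ⟨R, hR0, hRr⟩ := ENNReal.lt_iff_exists_nnreal_btwn.1 hp.r_pos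
  have hR0' : 0 < R := by exact_mod_cast hR0
  set ρ : NNReal := R / 2 with hρ
  have hρ0 : 0 < ρ := by positivity
  have hsum : (ρ + ρ : ENNReal) < p.radius := by
    have : (ρ + ρ : ENNReal) = R := by
      rw [← ENNReal.coe_add, hρ, add_halves]
    rw [this]; exact hRr.trans_le hp.r_le
  have hS := p.changeOriginSeries_summable_aux₁ hsum
  have hS2 := NNReal.summable_sigma.1 hS
  have hρrad : (ρ : ENNReal) < p.radius := lt_of_le_of_lt (by simp) hsum
  refine ⟨ρ, by exact_mod_cast hρ0,
    ((∑' k, ∑' s : Σ l : ℕ, { s : Finset (Fin (k + l)) // s.card = l },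
      ‖p (k + s.1)‖₊ * ρ ^ s.1 * ρ ^ k : NNReal) : ℝ), ?_⟩
  filter_upwards [Metric.ball_mem_nhds x₀ (show (0:ℝ) < ρ by exact_mod_cast hρ0)] with x hx
  obtain ⟨y, rfl⟩ : ∃ y, x = x₀ + y := ⟨x - x₀, by abel⟩
  have hy : ‖y‖₊ < ρ := by
    rw [mem_ball_iff_norm, add_sub_cancel_left] at hx
    exact_mod_cast hx
  have hρR : ρ ≤ R := half_le_self zero_le
  have hyr : (‖y‖₊ : ENNReal) < r :=
    lt_trans (by exact_mod_cast hy.trans_le hρR : (‖y‖₊ : ENNReal) < R) hRr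
  have hq := hp.changeOrigin hyr
  refine ⟨fun k => ?_, fun z hz => ?_⟩
  · have h1 : ‖((k.factorial : ℂ)⁻¹ • iteratedFDeriv ℂ k A (x₀ + y))‖ ≤ ‖p.changeOrigin y k‖ := by
      refine ContinuousMultilinearMap.opNorm_le_bound (norm_nonneg _) fun v => ?_
      rw [_root_.smul_apply, hq.iteratedFDeriv_eq_sum_of_completeSpace, norm_smul,
        norm_inv, Complex.norm_natCast]
      rw [inv_mul_le_iff₀ (by positivity)]
      calc _ ≤ ∑ σ : Equiv.Perm (Fin k), ‖p.changeOrigin y k (fun i => v (σ i))‖ := norm_sum_le _ _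
        _ ≤ ∑ σ : Equiv.Perm (Fin k), ‖p.changeOrigin y k‖ * ∏ i, ‖v i‖ := by
            refine Finset.sum_le_sum fun σ _ => ?_
            refine (ContinuousMultilinearMap.le_opNorm _ _).trans_eq ?_
            rw [Equiv.prod_comp σ (fun i => ‖v i‖)]
        _ = _ := by
            rw [Finset.sum_const, Finset.card_univ, Fintype.card_perm, Fintype.card_fin,
              nsmul_eq_mul]
    have h2 : ‖p.changeOrigin y k‖₊ * ρ ^ k ≤
        ∑' s : Σ l : ℕ, { s : Finset (Fin (k + l)) // s.card = l },
          ‖p (k + s.1)‖₊ * ρ ^ s.1 * ρ ^ k := by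
      rw [NNReal.tsum_mul_right]
      refine mul_le_mul_left ?_ _
      refine (p.nnnorm_changeOrigin_le k (lt_trans (by exact_mod_cast hy) hρrad)).trans ?_
      refine Summable.tsum_le_tsum (fun s => ?_)
        (p.changeOriginSeries_summable_aux₂ (lt_trans (by exact_mod_cast hy) hρrad) k)
        (p.changeOriginSeries_summable_aux₂ hρrad k)
      gcongr
    have h3 := h2.trans (hS2.2.le_tsum k (fun _ _ => zero_le))
    calc _ ≤ ‖p.changeOrigin y k‖ * (ρ:ℝ) ^ k := by gcongr
      _ ≤ _ := by exact_mod_cast h3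
  · have := hq.hasSum_iteratedFDeriv (y := z) (by
      simp only [Metric.mem_eball, edist_zero_right]
      rw [lt_tsub_iff_right]
      refine lt_of_lt_of_le ?_ hRr.le
      have : ‖z‖₊ + ‖y‖₊ < R := by
        have hz' : ‖z‖₊ < ρ := by exact_mod_cast hz
        calc _ < ρ + ρ := add_lt_add hz' hy
          _ = R := by rw [hρ, add_halves]
      rw [enorm_eq_nnnorm]
      exact_mod_cast this)
    simpa using this

/-- The uniform statement of `taylor_local` over a compact set of base points. -/
theorem taylor_compact {E : Type*} [NormedAddCommGroup E] [NormedSpace ℂ E] {A : E → ℂ} {S : Set E}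
    (hS : IsCompact S) (hA : ∀ x ∈ S, AnalyticAt ℂ A x) :
    ∃ ρ : ℝ, 0 < ρ ∧ ∃ C : ℝ, ∀ x ∈ S,
      (∀ k : ℕ, ‖((k.factorial : ℂ)⁻¹ • iteratedFDeriv ℂ k A x)‖ * ρ ^ k ≤ C) ∧
      (∀ z : E, ‖z‖ < ρ →
        HasSum (fun k : ℕ => ((k.factorial : ℂ)⁻¹ • iteratedFDeriv ℂ k A x) fun _ => z)
          (A (x + z))) := by
  refine hS.induction_on (p := fun S => ∃ ρ : ℝ, 0 < ρ ∧ ∃ C : ℝ, ∀ x ∈ S,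
      (∀ k : ℕ, ‖((k.factorial : ℂ)⁻¹ • iteratedFDeriv ℂ k A x)‖ * ρ ^ k ≤ C) ∧
      (∀ z : E, ‖z‖ < ρ →
        HasSum (fun k : ℕ => ((k.factorial : ℂ)⁻¹ • iteratedFDeriv ℂ k A x) fun _ => z)
          (A (x + z)))) ⟨1, one_pos, 0, by simp⟩ ?_ ?_ ?_
  · rintro s t hst ⟨ρ, h0, C, h⟩
    exact ⟨ρ, h0, C, fun x hx => h x (hst hx)⟩
  · rintro s t ⟨ρ, h0, C, h⟩ ⟨ρ', h0', C', h'⟩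
    refine ⟨min ρ ρ', lt_min h0 h0', max C C', ?_⟩
    rintro x (hx | hx)
    · refine ⟨fun k => le_trans ?_ ((h x hx).1 k |>.trans (le_max_left _ _)),
        fun z hz => (h x hx).2 z (hz.trans_le (min_le_left _ _))⟩
      gcongr
      exact min_le_left _ _
    · refine ⟨fun k => le_trans ?_ ((h' x hx).1 k |>.trans (le_max_right _ _)),
        fun z hz => (h' x hx).2 z (hz.trans_le (min_le_right _ _))⟩
      gcongr
      exact min_le_right _ _
  · intro x hx
    obtain ⟨ρ, h0, C, h⟩ := taylor_local (hA x hx)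
    exact ⟨_, mem_nhdsWithin_of_mem_nhds h, ρ, h0, C, fun x hx => hx⟩

/-- An integral of translates of an analytic function along a compact curve is analytic in the
translation: integrate the Taylor expansions at the points of the curve term by term. -/
theorem analyticAt_param_integral {E : Type*} [NormedAddCommGroup E] [NormedSpace ℂ E] {A : E → ℂ}
    {γ : ℝ → E} (hγ : Continuous γ) {c : ℝ → ℂ} (hc : Continuous c) (a b : ℝ)
    (hA : ∀ θ, AnalyticAt ℂ A (γ θ)) :
    AnalyticAt ℂ (fun z => ∫ θ in a..b, c θ * A (γ θ + z)) 0 := by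
  obtain ⟨ρ, hρ, C, h⟩ := taylor_compact (A := A) ((isCompact_uIcc (a := a) (b := b)).image hγ)
    (by rintro _ ⟨θ, -, rfl⟩; exact hA θ)
  obtain ⟨M, hM⟩ := (isCompact_uIcc (a := a) (b := b)).exists_bound_of_continuousOn hc.continuousOn
  set q : ℝ → FormalMultilinearSeries ℂ E ℂ :=
    fun θ k => (k.factorial : ℂ)⁻¹ • iteratedFDeriv ℂ k A (γ θ) with hq
  have hqc : ∀ k, Continuous fun θ => q θ k := fun k => by
    refine Continuous.const_smul (g := fun θ => iteratedFDeriv ℂ k A (γ θ)) ?_ ((k.factorial : ℂ)⁻¹)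
    rw [continuous_iff_continuousAt]
    intro θ
    obtain ⟨s, hs, hAs⟩ := (hA θ).exists_mem_nhds_analyticOnNhd
    exact ContinuousAt.comp (f := γ) (g := iteratedFDeriv ℂ k A)
      (hAs.iteratedFDeriv k _ (mem_of_mem_nhds hs)).continuousAt hγ.continuousAt
  have hb : ∀ θ ∈ Set.uIcc a b, ∀ k, ‖q θ k‖ ≤ C * (ρ ^ k)⁻¹ := fun θ hθ k => by
    rw [← div_eq_mul_inv, le_div_iff₀ (by positivity)]
    exact (h (γ θ) ⟨θ, hθ, rfl⟩).1 k
  have hM0 : 0 ≤ M := (norm_nonneg _).trans (hM a Set.left_mem_uIcc)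
  have hC0 : 0 ≤ C := le_trans (by positivity) ((h (γ a) ⟨a, Set.left_mem_uIcc, rfl⟩).1 0)
  set P : FormalMultilinearSeries ℂ E ℂ := fun k => ∫ θ in a..b, c θ • q θ k with hP
  have hPn : ∀ k, ‖P k‖ ≤ (M * C * |b - a|) * (ρ ^ k)⁻¹ := fun k => by
    have := intervalIntegral.norm_integral_le_of_norm_le_const (f := fun θ => c θ • q θ k)
      (a := a) (b := b) (C := M * (C * (ρ ^ k)⁻¹)) (fun θ hθ => by
        rw [norm_smul]
        have hθ' := Set.uIoc_subset_uIcc hθ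
        exact mul_le_mul (hM θ hθ') (hb θ hθ' k) (norm_nonneg _) hM0)
    refine this.trans_eq (by ring)
  have hrad : ENNReal.ofReal ρ ≤ P.radius := by
    refine P.le_radius_of_bound (M * C * |b - a|) (r := ρ.toNNReal) fun k => ?_
    rw [Real.coe_toNNReal _ hρ.le]
    calc _ ≤ (M * C * |b - a|) * (ρ ^ k)⁻¹ * ρ ^ k := by gcongr; exact hPn k
      _ = _ := by field_simp
  refine ⟨P, ENNReal.ofReal ρ, hrad, by simpa using hρ, ?_⟩
  intro z hz
  have hz' : ‖z‖ < ρ := by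
    simpa [Metric.mem_eball, edist_zero_right, ENNReal.lt_ofReal_iff_toReal_lt] using hz
  have key : HasSum (fun k : ℕ => ∫ θ in a..b, c θ * q θ k fun _ => z)
      (∫ θ in a..b, c θ * A (γ θ + z)) := by
    have hgs : Summable fun k : ℕ => M * (C * (‖z‖ / ρ) ^ k) :=
      ((summable_geometric_of_lt_one (by positivity)
        ((div_lt_one hρ).2 hz')).mul_left C).mul_left M
    refine intervalIntegral.hasSum_integral_of_dominated_convergence
      (fun k _ => M * (C * (‖z‖ / ρ) ^ k)) ?_ ?_ ?_ ?_ ?_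
    · intro k
      refine Continuous.aestronglyMeasurable (hc.mul ?_)
      exact (hqc k).eval_const _
    · intro k
      refine Eventually.of_forall fun θ hθ => ?_
      have hθ' := Set.uIoc_subset_uIcc hθ
      rw [norm_mul]
      refine mul_le_mul (hM θ hθ') ?_ (norm_nonneg _) hM0
      refine ((q θ k).le_opNorm _).trans ?_
      rw [Finset.prod_const, Finset.card_univ, Fintype.card_fin, div_pow, div_eq_inv_mul,
        ← mul_assoc]
      gcongr
      exact hb θ hθ' k
    · exact Eventually.of_forall fun θ _ => hgs
    · exact intervalIntegrable_const
    · refine Eventually.of_forall fun θ hθ => ?_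
      exact ((h (γ θ) ⟨θ, Set.uIoc_subset_uIcc hθ, rfl⟩).2 z hz').mul_left _
  simp only [zero_add]
  suffices hk : ∀ k, (P k fun _ => z) = ∫ θ in a..b, c θ * q θ k fun _ => z by
    simpa only [hk] using key
  intro k
  have hintegrable : IntervalIntegrable (fun θ => c θ • q θ k) MeasureTheory.volume a b :=
    (hc.smul (hqc k)).intervalIntegrable _ _
  have := (ContinuousMultilinearMap.apply ℂ (fun _ : Fin k => E) ℂ
    (fun _ => z)).intervalIntegral_comp_comm hintegrable
  simpa [hP] using this.symm

/-! ### The Riemann extension theorem -/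

/-- A nonzero analytic germ is nonzero on some complex line through the origin. -/
theorem exists_line {E : Type*} [NormedAddCommGroup E] [NormedSpace ℂ E] {D : E → ℂ}
    (hD : AnalyticAt ℂ D 0) (hD0 : ¬ ∀ᶠ z in 𝓝 (0 : E), D z = 0) :
    ∃ v : E, ¬ ∀ᶠ t in 𝓝 (0 : ℂ), D (t • v) = 0 := by
  obtain ⟨r, hr, hDr⟩ := hD.exists_ball_analyticOnNhd
  rw [not_eventually] at hD0
  obtain ⟨x, hx, hxr⟩ := (hD0.and_eventually (Metric.ball_mem_nhds (0 : E) hr)).exists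
  refine ⟨x, fun h => hx ?_⟩
  set L : ℂ →L[ℂ] E := (ContinuousLinearMap.id ℂ ℂ).smulRight x with hL
  have hLa : ∀ t, L t = t • x := fun t => by simp [hL]
  have hU : IsPreconnected (L ⁻¹' Metric.ball 0 r) :=
    ((convex_ball (0 : E) r).linear_preimage (L.restrictScalars ℝ).toLinearMap).isPreconnected
  have han : AnalyticOnNhd ℂ (fun t => D (L t)) (L ⁻¹' Metric.ball 0 r) := fun t ht =>
    (hDr _ ht).comp (L.analyticAt t)
  have := han.eqOn_zero_of_preconnected_of_eventuallyEq_zero hU (z₀ := 0) (by simpa using hr)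
    (by filter_upwards [h] with t ht; simpa [hLa] using ht)
  simpa [hLa] using this (x := 1) (by simpa [hLa] using hxr)

/-- One-variable removable singularities: a bounded function holomorphic off the zeros of a nonzero
holomorphic `ψ` on a connected open set extends holomorphically across these zeros. -/
theorem removable_discrete {B ψ : ℂ → ℂ} {O : Set ℂ} (hO : IsOpen O) (hOc : IsPreconnected O)
    (hψ : AnalyticOnNhd ℂ ψ O) {t₁ : ℂ} (ht₁ : t₁ ∈ O) (hψ₁ : ψ t₁ ≠ 0) {C : ℝ}
    (hB : ∀ t ∈ O, ψ t ≠ 0 → DifferentiableAt ℂ B t) (hC : ∀ t ∈ O, ψ t ≠ 0 → ‖B t‖ ≤ C) :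
    ∃ B' : ℂ → ℂ, DifferentiableOn ℂ B' O ∧ ∀ t ∈ O, ψ t ≠ 0 → B' t = B t := by
  classical
  refine ⟨fun t => if ψ t ≠ 0 then B t else limUnder (𝓝[≠] t) B, fun t₀ ht₀ => ?_,
    fun t _ ht => if_pos ht⟩
  refine DifferentiableAt.differentiableWithinAt ?_
  by_cases h0 : ψ t₀ = 0
  · have hne : ∀ᶠ t in 𝓝[≠] t₀, ψ t ≠ 0 := by
      rcases (hψ t₀ ht₀).eventually_eq_zero_or_eventually_ne_zero with h | h
      · exact absurd (hψ.eqOn_zero_of_preconnected_of_eventuallyEq_zero hOc ht₀ h ht₁) hψ₁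
      · exact h
    rw [eventually_nhdsWithin_iff] at hne
    set s : Set ℂ := {t | t ∈ O ∧ (t ≠ t₀ → ψ t ≠ 0)} with hs
    have hsn : s ∈ 𝓝 t₀ := by
      filter_upwards [hO.mem_nhds ht₀, hne] with t h1 h2 using ⟨h1, h2⟩
    have hd := Complex.differentiableOn_update_limUnder_of_bddAbove (f := B) hsn
      (fun t ht => (hB t ht.1.1 (ht.1.2 ht.2)).differentiableWithinAt)
      ⟨C, by rintro _ ⟨t, ht, rfl⟩; exact hC t ht.1.1 (ht.1.2 ht.2)⟩
    refine (hd.differentiableAt hsn).congr_of_eventuallyEq ?_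
    filter_upwards [hsn] with t ht
    by_cases htt : t = t₀
    · subst htt; simp [h0]
    · rw [if_pos (ht.2 htt), Function.update_of_ne htt]
  · refine (hB t₀ ht₀ h0).congr_of_eventuallyEq ?_
    filter_upwards [(hψ t₀ ht₀).continuousAt.eventually_ne h0] with t ht
    rw [if_pos ht]

/-- **Riemann extension theorem** for germs. The extension is the mean of `A` over a small circle,
parallel to a complex line on which `D` is not identically zero; by Cauchy's formula the mean
agrees with `A` wherever `D` does not vanish. -/
theorem riemann_extension {E : Type*} [NormedAddCommGroup E] [NormedSpace ℂ E] {A D : E → ℂ}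
    (hD : AnalyticAt ℂ D 0) (hD0 : ¬ ∀ᶠ z in 𝓝 (0 : E), D z = 0) {C : ℝ}
    (hA : ∀ᶠ z in 𝓝 (0 : E), D z ≠ 0 → AnalyticAt ℂ A z)
    (hC : ∀ᶠ z in 𝓝 (0 : E), D z ≠ 0 → ‖A z‖ ≤ C) :
    ∃ A' : E → ℂ, AnalyticAt ℂ A' 0 ∧ ∀ᶠ z in 𝓝 (0 : E), D z ≠ 0 → A' z = A z := by
  obtain ⟨v, hv⟩ := exists_line hD hD0
  obtain ⟨r, hr, hball⟩ :=
    Metric.eventually_nhds_iff_ball.1 (hD.eventually_analyticAt.and (hA.and hC))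
  set L : ℂ →L[ℂ] E := (ContinuousLinearMap.id ℂ ℂ).smulRight v with hL
  have hLa : ∀ t, L t = t • v := fun t => by simp [hL]
  have hφ : AnalyticAt ℂ (fun t => D (L t)) 0 :=
    AnalyticAt.comp (f := L) (g := D) (by simpa using hD) (L.analyticAt 0)
  have hne : ∀ᶠ t in 𝓝[≠] (0 : ℂ), D (L t) ≠ 0 := by
    rcases hφ.eventually_eq_zero_or_eventually_ne_zero with h | h
    · exact absurd (by simpa only [hLa] using h) hv
    · exact h
  rw [eventually_nhdsWithin_iff] at hne
  have hsmall : ∀ᶠ t in 𝓝 (0 : ℂ), ‖L t‖ < r / 2 := by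
    have : ContinuousAt (fun t => ‖L t‖) 0 := by fun_prop
    exact this.eventually_lt_const (by simpa using hr)
  obtain ⟨ε', hε', hε'b⟩ := Metric.eventually_nhds_iff_ball.1 (hne.and hsmall)
  set ε := ε' / 2 with hε
  have hε0 : 0 < ε := by positivity
  have hεb : ∀ t : ℂ, ‖t‖ ≤ ε → (t ≠ 0 → D (L t) ≠ 0) ∧ ‖L t‖ < r / 2 := fun t ht =>
    hε'b t (by rw [mem_ball_zero_iff]; linarith)
  -- `D` has no zeros on the translated circles, by compactness of the circle.
  have hsph : ∀ᶠ z in 𝓝 (0 : E), ∀ t ∈ Metric.sphere (0 : ℂ) ε, D (L t + z) ≠ 0 := by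
    refine (isCompact_sphere (0 : ℂ) ε).eventually_forall_of_forall_eventually fun t ht => ?_
    have htn : ‖t‖ = ε := by simpa using ht
    have hd : AnalyticAt ℂ D (L t + 0) :=
      (hball (L t + 0) (by
        rw [mem_ball_zero_iff, add_zero]; linarith [(hεb t htn.le).2])).1
    have hc : ContinuousAt (fun y : E × ℂ => D (L y.2 + y.1)) (0, t) :=
      ContinuousAt.comp (f := fun y : E × ℂ => L y.2 + y.1) (g := D) hd.continuousAt (by fun_prop)
    refine hc.eventually_ne ?_
    simpa using (hεb t htn.le).1 (by rw [← norm_pos_iff, htn]; exact hε0)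
  refine ⟨fun z => (2 * Real.pi : ℂ)⁻¹ * ∫ θ in (0 : ℝ)..2 * Real.pi,
    1 * A (L (circleMap 0 ε θ) + z), ?_, ?_⟩
  · refine analyticAt_const.mul (analyticAt_param_integral (γ := fun θ => L (circleMap 0 ε θ))
      (by fun_prop) continuous_const _ _ fun θ => ?_)
    have hn : ‖circleMap 0 ε θ‖ = ε := by simp [abs_of_pos hε0]
    have h1 := hεb _ hn.le
    exact (hball _ (by rw [mem_ball_zero_iff]; linarith [h1.2])).2.1
      (h1.1 (by rw [← norm_pos_iff, hn]; exact hε0))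
  · filter_upwards [hsph, Metric.ball_mem_nhds (0 : E) (half_pos hr)] with z hz hzr hDz
    rw [mem_ball_zero_iff] at hzr
    set O : Set ℂ := (fun t => L t + z) ⁻¹' Metric.ball 0 r with hO
    have hOo : IsOpen O := Metric.isOpen_ball.preimage (by fun_prop)
    have hOc : IsPreconnected O := by
      have : O = L ⁻¹' Metric.ball (-z) r := by
        ext t; simp [hO, dist_eq_norm]
      rw [this]
      exact ((convex_ball (-z) r).linear_preimage
        (L.restrictScalars ℝ).toLinearMap).isPreconnected
    have haff : ∀ t, AnalyticAt ℂ (fun t => L t + z) t := fun t =>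
      (L.analyticAt t).add analyticAt_const
    obtain ⟨B', hB', hBe⟩ := removable_discrete (B := fun t => A (L t + z))
      (ψ := fun t => D (L t + z)) (C := C) hOo hOc
      (fun t ht => AnalyticAt.comp (f := fun t => L t + z) (hball _ ht).1 (haff t)) (t₁ := 0)
      (by simp only [hO, Set.mem_preimage, map_zero, zero_add, mem_ball_zero_iff]; linarith)
      (by simpa using hDz)
      (fun t ht h => (AnalyticAt.comp (f := fun t => L t + z) ((hball _ ht).2.1 h)
        (haff t)).differentiableAt)
      (fun t ht h => (hball _ ht).2.2 h)
    have hcl : Metric.closedBall (0 : ℂ) ε ⊆ O := fun t ht => by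
      rw [mem_closedBall_zero_iff] at ht
      simp only [hO, Set.mem_preimage, mem_ball_zero_iff]
      linarith [norm_add_le (L t) z, (hεb t ht).2]
    have hcir := (hB'.mono hcl).circleIntegral_sub_inv_smul (w := 0) (by simpa using hε0)
    have h0 : B' 0 = A z := by
      simpa using hBe 0 (hcl (by simp [hε0.le])) (by simpa using hDz)
    rw [h0] at hcir
    have hcong : (∮ t in C(0, ε), (t - 0)⁻¹ • B' t) =
        Complex.I * ∫ θ in (0 : ℝ)..2 * Real.pi, 1 * A (L (circleMap 0 ε θ) + z) := by
      rw [circleIntegral, ← intervalIntegral.integral_const_mul]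
      refine intervalIntegral.integral_congr fun θ _ => ?_
      have hs : circleMap 0 ε θ ∈ Metric.sphere (0 : ℂ) ε := circleMap_mem_sphere _ hε0.le _
      have hne0 : circleMap 0 ε θ ≠ 0 := circleMap_ne_center hε0.ne'
      simp only [deriv_circleMap, sub_zero, smul_eq_mul, one_mul]
      rw [hBe _ (hcl (Metric.sphere_subset_closedBall hs)) (hz _ hs)]
      field_simp
    rw [hcong] at hcir
    have hpi : (Real.pi : ℂ) ≠ 0 := by exact_mod_cast Real.pi_ne_zero
    simp only [smul_eq_mul] at hcir
    have hI := Complex.I_ne_zero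
    have : (∫ θ in (0 : ℝ)..2 * Real.pi, 1 * A (L (circleMap 0 ε θ) + z)) =
        2 * Real.pi * A z := by
      apply mul_left_cancel₀ hI
      rw [hcir]; ring
    rw [this]
    field_simp

/-! ### Algebra of analytic germs -/

/-- The ring of analytic germs at `0` has no zero divisors. -/
theorem germ_domain {E : Type*} [NormedAddCommGroup E] [NormedSpace ℂ E] {f g : E → ℂ}
    (hf : AnalyticAt ℂ f 0) (hg : AnalyticAt ℂ g 0) (h : ∀ᶠ z in 𝓝 (0 : E), f z * g z = 0) :
    (∀ᶠ z in 𝓝 (0 : E), f z = 0) ∨ ∀ᶠ z in 𝓝 (0 : E), g z = 0 := by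
  by_contra hcon
  obtain ⟨h1, h2⟩ := not_or.1 hcon
  obtain ⟨r, hr, hb⟩ := Metric.eventually_nhds_iff_ball.1
    ((hf.eventually_analyticAt.and hg.eventually_analyticAt).and h)
  rw [not_eventually] at h1
  obtain ⟨x, hx, hxr⟩ := (h1.and_eventually (Metric.ball_mem_nhds (0 : E) hr)).exists
  have hgx : ∀ᶠ z in 𝓝 x, g z = 0 := by
    filter_upwards [(hb x hxr).1.1.continuousAt.eventually_ne hx,
      Metric.isOpen_ball.mem_nhds hxr] with z hz hzr
    exact (mul_eq_zero.1 (hb z hzr).2).resolve_left hz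
  have := AnalyticOnNhd.eqOn_zero_of_preconnected_of_eventuallyEq_zero (f := g)
    (fun z hz => (hb z hz).1.2) (convex_ball (0 : E) r).isPreconnected hxr hgx
  exact h2 (by filter_upwards [Metric.ball_mem_nhds (0 : E) hr] with z hz using this hz)

/-- Two analytic germs which agree off the zero set of a nonzero germ are equal. -/
theorem germ_eq_of_off {E : Type*} [NormedAddCommGroup E] [NormedSpace ℂ E] {f g D : E → ℂ}
    (hf : AnalyticAt ℂ f 0) (hg : AnalyticAt ℂ g 0) (hD : AnalyticAt ℂ D 0)
    (hD0 : ¬ ∀ᶠ z in 𝓝 (0 : E), D z = 0) (h : ∀ᶠ z in 𝓝 (0 : E), D z ≠ 0 → f z = g z) :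
    ∀ᶠ z in 𝓝 (0 : E), f z = g z := by
  have := (germ_domain (hf.sub hg) hD (by
    filter_upwards [h] with z hz
    by_cases h0 : D z = 0
    · simp [h0]
    · simp [hz h0])).resolve_right hD0
  filter_upwards [this] with z hz using sub_eq_zero.1 hz

theorem germ_prod_eq_zero {E ι : Type*} [NormedAddCommGroup E] [NormedSpace ℂ E] (s : Finset ι)
    {f : ι → E → ℂ} (hf : ∀ i ∈ s, AnalyticAt ℂ (f i) 0)
    (h : ∀ᶠ z in 𝓝 (0 : E), ∏ i ∈ s, f i z = 0) :
    ∃ i ∈ s, ∀ᶠ z in 𝓝 (0 : E), f i z = 0 := by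
  classical
  induction s using Finset.induction_on with
  | empty => exact absurd h.self_of_nhds (by simp)
  | insert a s ha ih =>
    simp only [Finset.prod_insert ha] at h
    rcases germ_domain (hf a (by simp))
      (Finset.analyticAt_fun_prod s fun i hi => hf i (by simp [hi])) h with h | h
    · exact ⟨a, by simp, h⟩
    · obtain ⟨i, hi, h⟩ := ih (fun i hi => hf i (by simp [hi])) h
      exact ⟨i, by simp [hi], h⟩

theorem unit_root {E : Type*} [NormedAddCommGroup E] [NormedSpace ℂ E] {U : E → ℂ}
    (hU : AnalyticAt ℂ U 0) (hU0 : U 0 ≠ 0) {k : ℕ} (hk : k ≠ 0) :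
    ∃ V : E → ℂ, AnalyticAt ℂ V 0 ∧ V 0 ≠ 0 ∧ ∀ᶠ z in 𝓝 (0 : E), V z ^ k = U z := by
  have hkC : (k : ℂ) ≠ 0 := by exact_mod_cast hk
  obtain ⟨c, hc⟩ := IsAlgClosed.exists_pow_nat_eq (U 0) (Nat.pos_of_ne_zero hk)
  have hc0 : c ≠ 0 := by rintro rfl; exact hU0 (by rw [← hc, zero_pow hk])
  refine ⟨fun z => c * Complex.exp (Complex.log (U z / U 0) / k), ?_, ?_, ?_⟩
  · refine analyticAt_const.mul (AnalyticAt.cexp (AnalyticAt.div ?_ analyticAt_const hkC))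
    refine AnalyticAt.clog (hU.div analyticAt_const hU0) ?_
    simp [div_self hU0]
  · simp [hc0]
  · filter_upwards [hU.continuousAt.eventually_ne hU0] with z hz
    rw [mul_pow, hc, ← Complex.exp_nat_mul, mul_div_cancel₀ _ hkC,
      Complex.exp_log (div_ne_zero hz hU0)]
    field_simp

theorem snd_not_zero {E : Type*} [NormedAddCommGroup E] [NormedSpace ℂ E] :
    ¬ ∀ᶠ y in 𝓝 (0 : E × ℂ), y.2 = 0 := by
  intro h
  have h2 : Tendsto (fun t : ℂ => ((0 : E), t)) (𝓝 0) (𝓝 (0 : E × ℂ)) :=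
    (by fun_prop : Continuous fun t : ℂ => ((0 : E), t)).tendsto' _ _ rfl
  have h3 := (h2.eventually h)
  have h4 : ∀ᶠ t in 𝓝[≠] (0 : ℂ), t = 0 := h3.filter_mono nhdsWithin_le_nhds
  obtain ⟨t, ht, ht'⟩ := (h4.and self_mem_nhdsWithin).exists
  exact ht' ht

theorem divide_snd {E : Type*} [NormedAddCommGroup E] [NormedSpace ℂ E] {A : E × ℂ → ℂ}
    (hA : AnalyticAt ℂ A 0) (h0 : ∀ᶠ z in 𝓝 (0 : E), A (z, 0) = 0) :
    ∃ B : E × ℂ → ℂ, AnalyticAt ℂ B 0 ∧ ∀ᶠ y in 𝓝 (0 : E × ℂ), A y = y.2 * B y := by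
  obtain ⟨K, s, hs, hK⟩ := (hA.contDiffAt (n := 1)).exists_lipschitzOnWith
  have hsnd : AnalyticAt ℂ (fun y : E × ℂ => y.2) 0 := analyticAt_snd
  have hπ : Tendsto (fun y : E × ℂ => (y.1, (0 : ℂ))) (𝓝 0) (𝓝 0) :=
    (by fun_prop : Continuous fun y : E × ℂ => (y.1, (0 : ℂ))).tendsto' _ _ rfl
  have hfst : Tendsto (fun y : E × ℂ => y.1) (𝓝 0) (𝓝 0) := continuous_fst.tendsto' _ _ rfl
  obtain ⟨B, hB, hBe⟩ := riemann_extension (A := fun y => A y / y.2) (C := K) hsnd snd_not_zero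
    (by
      filter_upwards [hA.eventually_analyticAt] with y hy hy0
      exact hy.div analyticAt_snd hy0)
    (by
      filter_upwards [hs, hπ.eventually hs, hfst.eventually h0] with y h1 h2 h3 hy0
      rw [norm_div, div_le_iff₀ (norm_pos_iff.2 hy0)]
      have := hK.dist_le_mul y h1 _ h2
      rw [h3, dist_zero_right] at this
      refine this.trans_eq ?_
      rw [dist_eq_norm]
      congr 1
      rw [Prod.norm_def]
      simp)
  refine ⟨B, hB, germ_eq_of_off hA (hsnd.mul hB) hsnd snd_not_zero ?_⟩
  filter_upwards [hBe] with y hy hy0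
  rw [hy hy0]
  field_simp

/-- The second coordinate function is prime in the ring of germs at `0 ∈ E × ℂ`, so a factorization of
its `m`-th power consists of lower powers of it, up to units. -/
theorem factor_snd_pow {E : Type*} [NormedAddCommGroup E] [NormedSpace ℂ E] (m : ℕ) :
    ∀ {A B : E × ℂ → ℂ}, AnalyticAt ℂ A 0 → AnalyticAt ℂ B 0 →
    (∀ᶠ y in 𝓝 (0 : E × ℂ), A y * B y = y.2 ^ m) →
    ∃ d e : ℕ, ∃ u w : E × ℂ → ℂ, d + e = m ∧ AnalyticAt ℂ u 0 ∧ AnalyticAt ℂ w 0 ∧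
      u 0 ≠ 0 ∧ w 0 ≠ 0 ∧ (∀ᶠ y in 𝓝 (0 : E × ℂ), A y = y.2 ^ d * u y) ∧
      (∀ᶠ y in 𝓝 (0 : E × ℂ), B y = y.2 ^ e * w y) := by
  induction m with
  | zero =>
    intro A B hA hB h
    have h0 : A 0 * B 0 = 1 := by simpa using h.self_of_nhds
    exact ⟨0, 0, A, B, rfl, hA, hB, left_ne_zero_of_mul_eq_one h0,
      right_ne_zero_of_mul_eq_one h0, by simp, by simp⟩
  | succ m ih =>
    intro A B hA hB h
    have hsnd : AnalyticAt ℂ (fun y : E × ℂ => y.2) 0 := analyticAt_snd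
    have hj : Tendsto (fun z : E => (z, (0 : ℂ))) (𝓝 0) (𝓝 0) :=
      (by fun_prop : Continuous fun z : E => (z, (0 : ℂ))).tendsto' _ _ rfl
    have hja : AnalyticAt ℂ (fun z : E => (z, (0 : ℂ))) 0 := analyticAt_id.prod analyticAt_const
    have hcan : ∀ {A' B' : E × ℂ → ℂ}, AnalyticAt ℂ A' 0 → AnalyticAt ℂ B' 0 →
        (∀ᶠ y in 𝓝 (0 : E × ℂ), y.2 * (A' y * B' y) = y.2 ^ (m + 1)) →
        ∀ᶠ y in 𝓝 (0 : E × ℂ), A' y * B' y = y.2 ^ m := by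
      intro A' B' hA' hB' h'
      refine germ_eq_of_off (hA'.mul hB') (hsnd.pow m) hsnd snd_not_zero ?_
      filter_upwards [h'] with y hy hy0
      apply mul_left_cancel₀ hy0
      rw [hy, pow_succ']
    rcases germ_domain (f := fun z : E => A (z, 0)) (g := fun z : E => B (z, 0))
      (AnalyticAt.comp (f := fun z : E => (z, (0 : ℂ))) hA hja)
      (AnalyticAt.comp (f := fun z : E => (z, (0 : ℂ))) hB hja)
      (by filter_upwards [hj.eventually h] with z hz; simpa using hz) with h0 | h0
    · obtain ⟨A', hA', hAe⟩ := divide_snd hA h0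
      obtain ⟨d, e, u, w, hde, hu, hw, hu0, hw0, hAu, hBw⟩ := ih hA' hB (hcan hA' hB (by
        filter_upwards [h, hAe] with y h1 h2
        rw [← h1, h2]; ring))
      refine ⟨d + 1, e, u, w, by omega, hu, hw, hu0, hw0, ?_, hBw⟩
      filter_upwards [hAe, hAu] with y h1 h2
      rw [h1, h2]; ring
    · obtain ⟨B', hB', hBe⟩ := divide_snd hB h0
      obtain ⟨d, e, u, w, hde, hu, hw, hu0, hw0, hAu, hBw⟩ := ih hA hB' (hcan hA hB' (by
        filter_upwards [h, hBe] with y h1 h2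
        rw [← h1, h2]; ring))
      refine ⟨d, e + 1, u, w, by omega, hu, hw, hu0, hw0, hAu, ?_⟩
      filter_upwards [hBe, hBw] with y h1 h2
      rw [h1, h2]; ring

/-! ### Factorizations of `f z + s ^ m` -/

/-- The product of `F` over the `m`-th roots of unity multiples of `s` depends only on `s ^ m`. -/
theorem rootsProd_eq {m : ℕ} (hm : m ≠ 0) (F : ℂ → ℂ) {s s' : ℂ} (h : s ^ m = s' ^ m) :
    ∏ ω ∈ Polynomial.nthRootsFinset m (1 : ℂ), F (ω * s) =
      ∏ ω ∈ Polynomial.nthRootsFinset m (1 : ℂ), F (ω * s') := by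
  have hm' := Nat.pos_of_ne_zero hm
  by_cases hs : s = 0
  · subst hs
    rw [zero_pow hm] at h
    rw [pow_eq_zero_iff hm |>.1 h.symm]
  have hs' : s' ≠ 0 := by
    rintro rfl
    rw [zero_pow hm] at h
    exact hs (pow_eq_zero_iff hm |>.1 h)
  refine Finset.prod_bij' (fun ω _ => ω * (s / s')) (fun ω _ => ω * (s' / s)) ?_ ?_ ?_ ?_ ?_
  · intro ω hω
    rw [Polynomial.mem_nthRootsFinset hm'] at hω ⊢
    rw [mul_pow, hω, div_pow, h, div_self (pow_ne_zero _ hs'), one_mul]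
  · intro ω hω
    rw [Polynomial.mem_nthRootsFinset hm'] at hω ⊢
    rw [mul_pow, hω, div_pow, h, div_self (pow_ne_zero _ hs'), one_mul]
  · intro ω hω; field_simp
  · intro ω hω; field_simp
  · intro ω hω; congr 1; field_simp

/-- The norm `∏ G (z, ω s)` over the `m`-th roots of unity `ω` is an analytic function of `(z, s ^ m)`,
hence of `(z, f z + s ^ m)`. It is analytic off `τ = f z` by a local choice of `(τ - f z) ^ (1 / m)`,
and bounded, so that the Riemann extension theorem applies. -/
theorem norm_descends {E : Type*} [NormedAddCommGroup E] [NormedSpace ℂ E] {G : E × ℂ → ℂ}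
    {f : E → ℂ} (hG : AnalyticAt ℂ G 0) (hf : AnalyticAt ℂ f 0) (hf0 : f 0 = 0)
    {m : ℕ} (hm : m ≠ 0) :
    ∃ A : E × ℂ → ℂ, AnalyticAt ℂ A 0 ∧ ∀ᶠ y in 𝓝 (0 : E × ℂ), A (y.1, f y.1 + y.2 ^ m) =
      ∏ ω ∈ Polynomial.nthRootsFinset m (1 : ℂ), G (y.1, ω * y.2) := by
  have hmC : (m : ℂ) ≠ 0 := by exact_mod_cast hm
  set R := Polynomial.nthRootsFinset m (1 : ℂ) with hR
  have hff : AnalyticAt ℂ (fun y : E × ℂ => f y.1) 0 :=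
    AnalyticAt.comp (f := fun y : E × ℂ => y.1) (x := 0) hf analyticAt_fst
  have hD : AnalyticAt ℂ (fun y : E × ℂ => y.2 - f y.1) 0 := analyticAt_snd.sub hff
  have hD0 : ¬ ∀ᶠ y in 𝓝 (0 : E × ℂ), y.2 - f y.1 = 0 := by
    intro h
    have h2 : Tendsto (fun t : ℂ => ((0 : E), t)) (𝓝 0) (𝓝 (0 : E × ℂ)) :=
      (by fun_prop : Continuous fun t : ℂ => ((0 : E), t)).tendsto' _ _ rfl
    have h4 : ∀ᶠ t in 𝓝[≠] (0 : ℂ), t = 0 := by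
      filter_upwards [(h2.eventually h).filter_mono nhdsWithin_le_nhds] with t ht
      simpa [hf0] using ht
    obtain ⟨t, ht, ht'⟩ := (h4.and self_mem_nhdsWithin).exists
    exact ht' ht
  have hrt : Tendsto (fun y : E × ℂ => (y.2 - f y.1) ^ (m : ℂ)⁻¹) (𝓝 0) (𝓝 0) := by
    have h1 : ContinuousAt (fun x : ℂ => x ^ (m : ℂ)⁻¹) 0 := by
      apply Complex.continuousAt_cpow_const_of_re_pos (by simp)
      rw [← Complex.ofReal_natCast, ← Complex.ofReal_inv, Complex.ofReal_re]
      positivity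
    have h2 : Tendsto (fun y : E × ℂ => y.2 - f y.1) (𝓝 0) (𝓝 0) := by
      simpa [hf0] using hD.continuousAt.tendsto
    have h3 := h1.tendsto.comp h2
    rwa [Complex.zero_cpow (inv_ne_zero hmC)] at h3
  have hpt : ∀ ω : ℂ, Tendsto (fun y : E × ℂ => (y.1, ω * (y.2 - f y.1) ^ (m : ℂ)⁻¹))
      (𝓝 0) (𝓝 0) := by
    intro ω
    have h1 : Tendsto (fun y : E × ℂ => y.1) (𝓝 0) (𝓝 0) := continuous_fst.tendsto' _ _ rfl
    have h2 := h1.prodMk_nhds (hrt.const_mul ω)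
    rwa [mul_zero] at h2
  obtain ⟨A, hA, hAe⟩ := riemann_extension
    (A := fun y : E × ℂ => ∏ ω ∈ R, G (y.1, ω * (y.2 - f y.1) ^ (m : ℂ)⁻¹))
    (C := ‖∏ ω ∈ R, G 0‖ + 1) hD hD0
    (by
      have h1 : ∀ᶠ y in 𝓝 (0 : E × ℂ), ∀ ω ∈ R,
          AnalyticAt ℂ G (y.1, ω * (y.2 - f y.1) ^ (m : ℂ)⁻¹) :=
        (eventually_all_finset R).2 fun ω _ => (hpt ω).eventually hG.eventually_analyticAt
      filter_upwards [h1, hD.eventually_analyticAt] with y₀ h1 h2 h3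
      set t₀ := y₀.2 - f y₀.1 with ht₀
      -- On the whole space the branch may be replaced by one which is analytic near `y₀`.
      have heq : (fun y : E × ℂ => ∏ ω ∈ R, G (y.1, ω * (y.2 - f y.1) ^ (m : ℂ)⁻¹)) =
          fun y => ∏ ω ∈ R, G (y.1, ω * (t₀ ^ (m : ℂ)⁻¹ * ((y.2 - f y.1) / t₀) ^ (m : ℂ)⁻¹)) := by
        funext y
        apply rootsProd_eq hm (fun s => G (y.1, s))
        rw [mul_pow, Complex.cpow_nat_inv_pow _ hm, Complex.cpow_nat_inv_pow _ hm,
          Complex.cpow_nat_inv_pow _ hm]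
        field_simp
      rw [heq]
      refine Finset.analyticAt_fun_prod R fun ω hω => ?_
      refine AnalyticAt.comp_of_eq (g := G)
        (f := fun y : E × ℂ =>
          (y.1, ω * (t₀ ^ (m : ℂ)⁻¹ * ((y.2 - f y.1) / t₀) ^ (m : ℂ)⁻¹)))
        (h1 ω hω) ?_ ?_
      · refine analyticAt_fst.prod (analyticAt_const.mul (analyticAt_const.mul ?_))
        refine AnalyticAt.cpow (h2.div analyticAt_const h3) analyticAt_const ?_
        rw [← ht₀, div_self h3]; simp
      · rw [← ht₀, div_self h3]; simp)
    (by
      have h1 : Tendsto (fun y : E × ℂ => ‖∏ ω ∈ R, G (y.1, ω * (y.2 - f y.1) ^ (m : ℂ)⁻¹)‖)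
          (𝓝 0) (𝓝 ‖∏ ω ∈ R, G 0‖) :=
        (tendsto_finsetProd R fun ω _ => hG.continuousAt.tendsto.comp (hpt ω)).norm
      filter_upwards [h1.eventually_lt_const (lt_add_one _)] with y hy _ using hy.le)
  have hφa : AnalyticAt ℂ (fun y : E × ℂ => (y.1, f y.1 + y.2 ^ m)) 0 :=
    analyticAt_fst.prod (hff.add (analyticAt_snd.pow m))
  have hφ0 : (fun y : E × ℂ => (y.1, f y.1 + y.2 ^ m)) 0 = 0 := by simp [hf0, hm]
  refine ⟨A, hA, germ_eq_of_off (D := fun y => y.2) ?_ ?_ analyticAt_snd snd_not_zero ?_⟩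
  · exact AnalyticAt.comp_of_eq (f := fun y : E × ℂ => (y.1, f y.1 + y.2 ^ m)) hA hφa hφ0
  · refine Finset.analyticAt_fun_prod R fun ω hω => ?_
    exact AnalyticAt.comp_of_eq (f := fun y : E × ℂ => (y.1, ω * y.2)) hG
      (analyticAt_fst.prod (analyticAt_const.mul analyticAt_snd)) (by simp)
  · have h1 : Tendsto (fun y : E × ℂ => (y.1, f y.1 + y.2 ^ m)) (𝓝 0) (𝓝 0) := by
      have := hφa.continuousAt.tendsto
      simpa only [Prod.fst_zero, Prod.snd_zero, hf0, zero_pow hm, add_zero, Prod.mk_zero_zero]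
        using this
    filter_upwards [h1.eventually hAe] with y hy hy0
    have h2 : y.2 ^ m ≠ 0 := pow_ne_zero _ hy0
    rw [hy (by simpa using h2)]
    apply rootsProd_eq hm (fun s => G (y.1, s))
    rw [Complex.cpow_nat_inv_pow _ hm]
    simp

/-- From a factorization of `f z + s ^ m` into nonunits, taking norms over the `m`-th roots of unity
gives a factorization of `τ ^ m` in the variables `(z, τ)`, where `τ = f z + s ^ m`. The norm of `G`
is therefore `τ ^ d` times a unit with `0 < d < m`; put `s = 0`, where the norm is `G (z, 0) ^ m`. -/
theorem factor_add_pow {E : Type*} [NormedAddCommGroup E] [NormedSpace ℂ E] {G H : E × ℂ → ℂ}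
    {f : E → ℂ} (hG : AnalyticAt ℂ G 0) (hH : AnalyticAt ℂ H 0) (hf : AnalyticAt ℂ f 0)
    (hf0 : f 0 = 0) (hG0 : G 0 = 0) (hH0 : H 0 = 0) {m : ℕ} (hm : m ≠ 0)
    (h : ∀ᶠ y in 𝓝 (0 : E × ℂ), G y * H y = f y.1 + y.2 ^ m) :
    ∃ (P U : E → ℂ) (d : ℕ), AnalyticAt ℂ P 0 ∧ AnalyticAt ℂ U 0 ∧ U 0 ≠ 0 ∧ 0 < d ∧ d < m ∧
      ∀ᶠ z in 𝓝 (0 : E), P z ^ m = f z ^ d * U z := by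
  have hm' := Nat.pos_of_ne_zero hm
  have hmC : (m : ℂ) ≠ 0 := by exact_mod_cast hm
  obtain ⟨A, hA, hAe⟩ := norm_descends hG hf hf0 hm
  obtain ⟨B, hB, hBe⟩ := norm_descends hH hf hf0 hm
  set R := Polynomial.nthRootsFinset m (1 : ℂ) with hR
  have hcard : R.card = m := (Complex.isPrimitiveRoot_exp m hm).card_nthRootsFinset
  have hff : AnalyticAt ℂ (fun y : E × ℂ => f y.1) 0 :=
    AnalyticAt.comp (f := fun y : E × ℂ => y.1) (x := 0) hf analyticAt_fst
  have hrt : Tendsto (fun y : E × ℂ => (y.1, (y.2 - f y.1) ^ (m : ℂ)⁻¹)) (𝓝 0) (𝓝 0) := by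
    have h1 : ContinuousAt (fun x : ℂ => x ^ (m : ℂ)⁻¹) 0 := by
      apply Complex.continuousAt_cpow_const_of_re_pos (by simp)
      rw [← Complex.ofReal_natCast, ← Complex.ofReal_inv, Complex.ofReal_re]
      positivity
    have h2 : Tendsto (fun y : E × ℂ => y.2 - f y.1) (𝓝 0) (𝓝 0) := by
      simpa [hf0] using (analyticAt_snd.fun_sub hff).continuousAt.tendsto
    have h3 := h1.tendsto.comp h2
    rw [Complex.zero_cpow (inv_ne_zero hmC)] at h3
    exact (continuous_fst.tendsto' (0 : E × ℂ) 0 rfl).prodMk_nhds h3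
  have hprod : ∀ᶠ y in 𝓝 (0 : E × ℂ),
      (∏ ω ∈ R, G (y.1, ω * y.2)) * (∏ ω ∈ R, H (y.1, ω * y.2)) = (f y.1 + y.2 ^ m) ^ m := by
    have h1 : ∀ᶠ y in 𝓝 (0 : E × ℂ), ∀ ω ∈ R,
        G (y.1, ω * y.2) * H (y.1, ω * y.2) = f y.1 + (ω * y.2) ^ m :=
      (eventually_all_finset R).2 fun ω _ =>
        ((by fun_prop : Continuous fun y : E × ℂ => (y.1, ω * y.2)).tendsto' 0 0
          (by simp)).eventually h
    filter_upwards [h1] with y hy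
    rw [← Finset.prod_mul_distrib, Finset.prod_congr rfl (g := fun _ => f y.1 + y.2 ^ m),
      Finset.prod_const, hcard]
    intro ω hω
    rw [hy ω hω, mul_pow, (Polynomial.mem_nthRootsFinset hm' _).1 hω, one_mul]
  -- Every `(z, τ)` is of the form `(z, f z + s ^ m)`, with `s` a root of `τ - f z`.
  have hAB : ∀ᶠ y in 𝓝 (0 : E × ℂ), A y * B y = y.2 ^ m := by
    filter_upwards [hrt.eventually (hAe.and (hBe.and hprod))] with y hy
    obtain ⟨h1, h2, h3⟩ := hy
    simp only [Complex.cpow_nat_inv_pow _ hm, add_sub_cancel] at h1 h2 h3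
    rw [← h3, ← h1, ← h2]
  obtain ⟨d, e, u, w, hde, hu, hw, hu0, hw0, hAu, hBw⟩ := factor_snd_pow m hA hB hAB
  have hj : Tendsto (fun z : E => (z, (0 : ℂ))) (𝓝 0) (𝓝 0) :=
    (by fun_prop : Continuous fun z : E => (z, (0 : ℂ))).tendsto' _ _ rfl
  have hRne : R.Nonempty := Finset.card_pos.1 (by omega)
  have hA0 : A 0 = 0 := by
    have := hAe.self_of_nhds
    simp only [Prod.fst_zero, Prod.snd_zero, hf0, zero_pow hm, mul_zero, add_zero,
      Finset.prod_const, hcard] at this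
    rw [← Prod.zero_eq_mk, hG0, zero_pow hm] at this
    exact this
  have hB0 : B 0 = 0 := by
    have := hBe.self_of_nhds
    simp only [Prod.fst_zero, Prod.snd_zero, hf0, zero_pow hm, mul_zero, add_zero,
      Finset.prod_const, hcard] at this
    rw [← Prod.zero_eq_mk, hH0, zero_pow hm] at this
    exact this
  have hd : d ≠ 0 := by
    rintro rfl
    have := hAu.self_of_nhds
    rw [hA0] at this
    exact hu0 (by simpa using this.symm)
  have he : e ≠ 0 := by
    rintro rfl
    have := hBw.self_of_nhds
    rw [hB0] at this
    exact hw0 (by simpa using this.symm)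
  have hfa : AnalyticAt ℂ (fun z : E => (z, f z)) 0 := analyticAt_id.prod hf
  have hft : Tendsto (fun z : E => (z, f z)) (𝓝 0) (𝓝 0) := by
    have := hfa.continuousAt.tendsto
    rwa [hf0] at this
  refine ⟨fun z => G (z, 0), fun z => u (z, f z), d, ?_, ?_, ?_, by omega, by omega, ?_⟩
  · exact AnalyticAt.comp (f := fun z : E => (z, (0 : ℂ))) hG (analyticAt_id.prod analyticAt_const)
  · exact AnalyticAt.comp_of_eq (f := fun z : E => (z, f z)) hu hfa (by simp [hf0])
  · simpa only [hf0, Prod.mk_zero_zero] using hu0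
  · filter_upwards [hj.eventually hAe, hft.eventually hAu] with z h1 h2
    simp only [zero_pow hm, mul_zero, add_zero, Finset.prod_const, hcard] at h1
    rw [← h1, h2]

/-! ### Detecting powers -/

/-- If `f ^ d`, with `0 < d < m`, is an `m`-th power up to a unit, then `f` is a proper power. After
dividing `m` and `d` by their greatest common divisor and using a Bézout relation
`d' b = a m' + 1`, one finds that `f ^ (a m' + 1)` is an `m'`-th power `Q ^ m'`, and
`Q / f ^ a` is bounded. -/
theorem is_power_of_pow_eq {E : Type*} [NormedAddCommGroup E] [NormedSpace ℂ E] {P U f : E → ℂ}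
    (hP : AnalyticAt ℂ P 0) (hU : AnalyticAt ℂ U 0) (hf : AnalyticAt ℂ f 0) (hf0 : f 0 = 0)
    (hU0 : U 0 ≠ 0) (hfne : ¬ ∀ᶠ z in 𝓝 (0 : E), f z = 0) {m d : ℕ} (hd : 0 < d) (hdm : d < m)
    (h : ∀ᶠ z in 𝓝 (0 : E), P z ^ m = f z ^ d * U z) :
    ∃ (g : E → ℂ) (k : ℕ), AnalyticAt ℂ g 0 ∧ 2 ≤ k ∧ ∀ᶠ z in 𝓝 (0 : E), f z = g z ^ k := by
  -- `e` is the greatest common divisor of `m` and `d`.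
  obtain ⟨e, m', d', he, hcop, rfl, rfl⟩ :
      ∃ e m' d' : ℕ, 0 < e ∧ Nat.Coprime d' m' ∧ m = m' * e ∧ d = d' * e := by
    obtain ⟨d', m', hc, h1, h2⟩ := Nat.exists_coprime d m
    exact ⟨d.gcd m, m', d', Nat.gcd_pos_of_pos_left _ hd, hc, h2, h1⟩
  have hlt : d' < m' := lt_of_mul_lt_mul_right hdm (Nat.zero_le e)
  have hd' : 0 < d' := Nat.pos_of_mul_pos_right hd
  have hm2 : 1 < m' := by omega
  obtain ⟨V, hV, hV0, hVU⟩ := unit_root hU hU0 (Nat.pos_iff_ne_zero.1 he)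
  -- `(P ^ m') ^ e = (f ^ d' * V) ^ e`, so the bases agree up to an `e`-th root of unity `ω`.
  obtain ⟨ω, hω, hPω⟩ := germ_prod_eq_zero (Polynomial.nthRootsFinset e (1 : ℂ))
    (f := fun ω z => P z ^ m' - ω * (f z ^ d' * V z))
    (fun ω _ => (hP.pow m').sub (analyticAt_const.mul ((hf.pow d').mul hV)))
    (by
      filter_upwards [h, hVU] with z h1 h2
      rw [← (Complex.isPrimitiveRoot_exp e he.ne').pow_sub_pow_eq_prod_sub_mul _ _ he,
        ← pow_mul, h1, mul_pow, ← pow_mul, h2, sub_self])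
  have hω0 : ω ≠ 0 := by
    rintro rfl
    rw [Polynomial.mem_nthRootsFinset he, zero_pow he.ne'] at hω
    exact zero_ne_one hω
  obtain ⟨b, -, hb⟩ := Nat.exists_mul_mod_eq_one_of_coprime hcop hm2
  set a := d' * b / m' with ha
  have hab : d' * b = a * m' + 1 := by
    have := Nat.div_add_mod (d' * b) m'
    rw [hb] at this
    rw [← this, ha, mul_comm]
  -- `(P ^ b) ^ m' = f ^ (d' * b) * (ω * V) ^ b`; the root `W` absorbs the unit.
  obtain ⟨W, hW, hW0, hWe⟩ := unit_root (U := fun z => (ω * V z) ^ b)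
    ((analyticAt_const.mul hV).pow b) (pow_ne_zero _ (mul_ne_zero hω0 hV0))
    (show m' ≠ 0 by omega)
  have hQ : AnalyticAt ℂ (fun z => P z ^ b / W z) 0 := (hP.pow b).div hW hW0
  have hQe : ∀ᶠ z in 𝓝 (0 : E), (P z ^ b / W z) ^ m' = f z ^ (a * m' + 1) := by
    filter_upwards [hPω, hWe, hW.continuousAt.eventually_ne hW0] with z h1 h2 h3
    rw [div_pow, div_eq_iff (pow_ne_zero _ h3), h2, ← pow_mul, mul_comm b, pow_mul,
      sub_eq_zero.1 h1, ← hab, pow_mul, ← mul_pow]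
    ring
  have hR : ∀ᶠ z in 𝓝 (0 : E), f z ≠ 0 → ((P z ^ b / W z) / f z ^ a) ^ m' = f z := by
    filter_upwards [hQe] with z h1 h2
    rw [div_pow, h1, ← pow_mul, pow_succ, mul_div_cancel_left₀ _ (pow_ne_zero _ h2)]
  have hsmall : ∀ᶠ z in 𝓝 (0 : E), ‖f z‖ < 1 := by
    have : Tendsto (fun z => ‖f z‖) (𝓝 0) (𝓝 0) := by
      simpa [hf0] using hf.continuousAt.tendsto.norm
    exact this.eventually_lt_const one_pos
  obtain ⟨R, hRa, hRe⟩ := riemann_extension (A := fun z => (P z ^ b / W z) / f z ^ a) (C := 1)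
    hf hfne
    (by
      filter_upwards [hQ.eventually_analyticAt, hf.eventually_analyticAt] with z h1 h2 h3
      exact h1.div (h2.pow a) (pow_ne_zero _ h3))
    (by
      filter_upwards [hR, hsmall] with z h1 h2 h3
      have h4 := congrArg norm (h1 h3)
      rw [norm_pow] at h4
      refine (pow_le_one_iff_of_nonneg (norm_nonneg _) (show m' ≠ 0 by omega)).1 ?_
      rw [h4]; exact h2.le)
  refine ⟨R, m', hRa, hm2, germ_eq_of_off hf (hRa.pow m') hf hfne ?_⟩
  filter_upwards [hR, hRe] with z h1 h2 h3
  rw [h2 h3, h1 h3]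

/-- If `f z + κ s` factors into nonunits, then `f` is a proper power. A change of the coordinate `s`
turns `κ s` into `s ^ m`, which reduces the claim to `factor_add_pow`. -/
theorem is_power_of_factor {E : Type*} [NormedAddCommGroup E] [NormedSpace ℂ E] {G H : E × ℂ → ℂ}
    {f : E → ℂ} {κ : ℂ → ℂ} (hG : AnalyticAt ℂ G 0) (hH : AnalyticAt ℂ H 0) (hf : AnalyticAt ℂ f 0)
    (hf0 : f 0 = 0) (hfne : ¬ ∀ᶠ z in 𝓝 (0 : E), f z = 0)
    (hκ : AnalyticAt ℂ κ 0) (hκ0 : κ 0 = 0) (hκne : ¬ ∀ᶠ s in 𝓝 (0 : ℂ), κ s = 0)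
    (hG0 : G 0 = 0) (hH0 : H 0 = 0)
    (h : ∀ᶠ y in 𝓝 (0 : E × ℂ), G y * H y = f y.1 + κ y.2) :
    ∃ (g : E → ℂ) (k : ℕ), AnalyticAt ℂ g 0 ∧ 2 ≤ k ∧ ∀ᶠ z in 𝓝 (0 : E), f z = g z ^ k := by
  obtain ⟨m, u, hu, hu0, hκu⟩ := hκ.exists_eventuallyEq_pow_smul_nonzero_iff.2 hκne
  have hm : m ≠ 0 := by
    rintro rfl
    have := hκu.self_of_nhds
    rw [hκ0] at this
    exact hu0 (by simpa using this.symm)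
  obtain ⟨V, hV, hV0, hVu⟩ := unit_root hu hu0 hm
  have hψ : AnalyticAt ℂ (fun s => s * V s) 0 := analyticAt_id.mul hV
  have hψ' : deriv (fun s => s * V s) 0 ≠ 0 := by
    have : HasDerivAt (fun s => s * V s) (1 * V 0 + 0 * deriv V 0) 0 :=
      (hasDerivAt_id (0 : ℂ)).mul hV.differentiableAt.hasDerivAt
    rw [this.deriv]
    simpa using hV0
  -- `r` is the local inverse of `s ↦ s * V s`, an `m`-th root of `κ`.
  obtain ⟨r, hr, hr0, hrr⟩ : ∃ r : ℂ → ℂ, AnalyticAt ℂ r 0 ∧ r 0 = 0 ∧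
      ∀ᶠ s in 𝓝 (0 : ℂ), r s * V (r s) = s := by
    have e0 : (fun s => s * V s) 0 = 0 := by simp
    refine ⟨hψ.hasStrictDerivAt.localInverse _ _ _ hψ', ?_, ?_, ?_⟩
    · have := hψ.analyticAt_localInverse hψ'
      simpa only [zero_mul] using this
    · have : hψ.hasStrictDerivAt.localInverse _ _ _ hψ' ((fun s => s * V s) 0) = 0 :=
        HasStrictFDerivAt.localInverse_apply_image ..
      simpa only [zero_mul] using this
    · have := HasStrictDerivAt.eventually_right_inverse hψ.hasStrictDerivAt hψ'
      simpa only [zero_mul] using this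
  have hφ : AnalyticAt ℂ (fun y : E × ℂ => (y.1, r y.2)) 0 :=
    analyticAt_fst.prod (AnalyticAt.comp (f := fun y : E × ℂ => y.2) (x := 0) hr analyticAt_snd)
  have hφ0 : ((0 : E × ℂ).1, r (0 : E × ℂ).2) = 0 := by simp [hr0]
  have hφt : Tendsto (fun y : E × ℂ => (y.1, r y.2)) (𝓝 0) (𝓝 0) := by
    have := hφ.continuousAt.tendsto
    rwa [hφ0] at this
  have hrt : Tendsto r (𝓝 0) (𝓝 0) := by
    have := hr.continuousAt.tendsto
    rwa [hr0] at this
  have hκr : ∀ᶠ s in 𝓝 (0 : ℂ), κ (r s) = s ^ m := by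
    filter_upwards [hrt.eventually hκu, hrt.eventually hVu, hrr] with s h1 h2 h3
    rw [h1, ← h2, sub_zero, smul_eq_mul, ← mul_pow, h3]
  obtain ⟨P, U, d, hP, hU, hU0, hd, hdm, hPU⟩ := factor_add_pow
    (G := fun y => G (y.1, r y.2)) (H := fun y => H (y.1, r y.2)) (m := m)
    (AnalyticAt.comp_of_eq (f := fun y : E × ℂ => (y.1, r y.2)) hG hφ hφ0)
    (AnalyticAt.comp_of_eq (f := fun y : E × ℂ => (y.1, r y.2)) hH hφ hφ0)
    hf hf0 (by rw [hφ0, hG0]) (by rw [hφ0, hH0]) hm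
    (by
      filter_upwards [hφt.eventually h,
        (continuous_snd.tendsto' (0 : E × ℂ) 0 rfl).eventually hκr] with y h1 h2
      rw [h1, h2])
  exact is_power_of_pow_eq hP hU hf hf0 hU0 hfne hd hdm hPU

/-! ### Polarization of real-analytic germs -/

/-- A real-analytic germ on `ℝ^ι` extends to a holomorphic germ on `ℂ^ι`, given by the same power
series in the coordinates. -/
theorem exists_complexification {ι : Type*} [Fintype ι] {g : (ι → ℝ) → ℝ}
    (hg : AnalyticAt ℝ g 0) :
    ∃ gt : (ι → ℂ) → ℂ, AnalyticAt ℂ gt 0 ∧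
      ∀ᶠ x in 𝓝 (0 : ι → ℝ), gt (fun i => (x i : ℂ)) = g x := by
  classical
  obtain ⟨p, hp⟩ := hg
  let c : (k : ℕ) → (Fin k → ι) → ℝ := fun k j => p k (fun i => Pi.single (j i) (1 : ℝ))
  let T : (k : ℕ) → (Fin k → ι) → ContinuousMultilinearMap ℂ (fun _ : Fin k => ι → ℂ) ℂ :=
    fun k j => (c k j : ℂ) •
      (ContinuousMultilinearMap.mkPiAlgebra ℂ (Fin k) ℂ).compContinuousLinearMap
        (fun i => ContinuousLinearMap.proj (R := ℂ) (φ := fun _ : ι => ℂ) (j i))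
  have hT : ∀ k j m, T k j m = (c k j : ℂ) * ∏ i, m i (j i) := fun k j m => rfl
  let P : FormalMultilinearSeries ℂ (ι → ℂ) ℂ := fun k => ∑ j : Fin k → ι, T k j
  -- Multilinear expansion: `P` restricts to `p` on real points.
  have hPx : ∀ (k : ℕ) (x : ι → ℝ),
      P k (fun _ i => (x i : ℂ)) = ((p k fun _ => x : ℝ) : ℂ) := by
    intro k x
    have hx : x = ∑ i, x i • (Pi.single i (1 : ℝ) : ι → ℝ) := by
      conv_lhs => rw [pi_eq_sum_univ' x]
    have h1 : (p k fun _ => x) = ∑ j : Fin k → ι,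
        (∏ i, x (j i)) * c k j := by
      conv_lhs => rw [hx]
      rw [ContinuousMultilinearMap.map_sum]
      refine Finset.sum_congr rfl fun j _ => ?_
      rw [ContinuousMultilinearMap.map_smul_univ, smul_eq_mul]
    rw [h1]
    have h2 : P k (fun _ i => (x i : ℂ)) = ∑ j, T k j (fun _ i => (x i : ℂ)) :=
      _root_.sum_apply ..
    rw [h2]
    push_cast
    refine Finset.sum_congr rfl fun j _ => ?_
    rw [hT, mul_comm]
  obtain ⟨C, a, hC, ha, hbound⟩ := p.le_mul_pow_of_radius_pos hp.radius_pos
  have hPn : ∀ k, ‖P k‖ ≤ C * (Fintype.card ι * a) ^ k := by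
    intro k
    have h1 : ∀ j : Fin k → ι, ‖T k j‖ ≤ C * a ^ k := by
      intro j
      have h2 : ‖c k j‖ ≤ C * a ^ k := by
        refine ((p k).le_opNorm _).trans ?_
        simpa [Pi.norm_single] using hbound k
      refine ContinuousMultilinearMap.opNorm_le_bound (by positivity) fun m => ?_
      rw [hT, norm_mul, Complex.norm_real, norm_prod]
      gcongr with i
      exact norm_le_pi_norm (m i) (j i)
    calc ‖P k‖ ≤ ∑ j : Fin k → ι, C * a ^ k := norm_sum_le_of_le _ fun j _ => h1 j
      _ = _ := by
        simp only [Finset.sum_const, Finset.card_univ, Fintype.card_fun, Fintype.card_fin,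
          nsmul_eq_mul]
        push_cast
        ring
  have hrad : 0 < P.radius := by
    set b : ℝ := Fintype.card ι * a + 1 with hb
    have hb0 : 0 ≤ Fintype.card ι * a := by positivity
    have hb1 : 0 < b := by positivity
    have := P.le_radius_of_bound (r := b⁻¹.toNNReal) C (by
      intro k
      rw [Real.coe_toNNReal _ (by positivity)]
      calc ‖P k‖ * b⁻¹ ^ k ≤ C * (Fintype.card ι * a) ^ k * b⁻¹ ^ k := by
            gcongr; exact hPn k
        _ = C * ((Fintype.card ι * a) / b) ^ k := by
            rw [div_eq_mul_inv, mul_pow]; ring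
        _ ≤ C * 1 := by
            gcongr
            exact pow_le_one₀ (by positivity) ((div_le_one hb1).2 (by linarith))
        _ = C := mul_one C)
    refine lt_of_lt_of_le ?_ this
    rw [ENNReal.coe_pos, Real.toNNReal_pos]
    exact inv_pos.2 hb1
  have hPs := (P.hasFPowerSeriesOnBall hrad).hasFPowerSeriesAt
  refine ⟨P.sum, hPs.analyticAt, ?_⟩
  have hcast : Tendsto (fun x : ι → ℝ => fun i => (x i : ℂ)) (𝓝 0) (𝓝 0) :=
    (by fun_prop : Continuous fun x : ι → ℝ => fun i => (x i : ℂ)).tendsto' _ _ (by ext; simp)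
  filter_upwards [hp.eventually_hasSum, hcast.eventually hPs.eventually_hasSum] with x h1 h2
  simp only [hPx, zero_add] at h1 h2
  exact h2.unique (Complex.hasSum_ofReal.2 h1)

/-- A real-analytic germ on `ℂⁿ` has the form `gt (z, conj z)` with `gt` holomorphic on `ℂⁿ × ℂⁿ`. -/
theorem exists_polarization {n : ℕ} {g : (Fin n → ℂ) → ℝ} (hg : AnalyticAt ℝ g 0) :
    ∃ gt : (Fin n → ℂ) × (Fin n → ℂ) → ℂ, AnalyticAt ℂ gt 0 ∧
      ∀ᶠ z in 𝓝 (0 : Fin n → ℂ), gt (z, star z) = g z := by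
  let φ : (Fin n ⊕ Fin n → ℝ) → (Fin n → ℂ) := fun x j => x (.inl j) + x (.inr j) * Complex.I
  have hφ : AnalyticAt ℝ φ 0 := by
    rw [analyticAt_pi_iff]
    intro j
    have h1 : ∀ k, AnalyticAt ℝ (fun x : Fin n ⊕ Fin n → ℝ => ((x k : ℝ) : ℂ)) 0 := fun k =>
      (Complex.ofRealCLM ∘L ContinuousLinearMap.proj (R := ℝ)
        (φ := fun _ : Fin n ⊕ Fin n => ℝ) k).analyticAt 0
    exact (h1 _).add ((h1 _).mul analyticAt_const)
  have hφ0 : φ 0 = 0 := by ext j; simp [φ]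
  obtain ⟨gt, hgt, hgte⟩ := exists_complexification (AnalyticAt.comp_of_eq hg hφ hφ0)
  let ψ : (Fin n → ℂ) × (Fin n → ℂ) → (Fin n ⊕ Fin n → ℂ) := fun y =>
    Sum.elim (fun j => (y.1 j + y.2 j) / 2) (fun j => (y.1 j - y.2 j) / (2 * Complex.I))
  have hψ : AnalyticAt ℂ ψ 0 := by
    rw [analyticAt_pi_iff]
    have h1 : ∀ k, AnalyticAt ℂ (fun y : (Fin n → ℂ) × (Fin n → ℂ) => y.1 k) 0 := fun k =>
      (ContinuousLinearMap.proj (R := ℂ) (φ := fun _ : Fin n => ℂ) k ∘L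
        ContinuousLinearMap.fst ℂ (Fin n → ℂ) (Fin n → ℂ)).analyticAt 0
    have h2 : ∀ k, AnalyticAt ℂ (fun y : (Fin n → ℂ) × (Fin n → ℂ) => y.2 k) 0 := fun k =>
      (ContinuousLinearMap.proj (R := ℂ) (φ := fun _ : Fin n => ℂ) k ∘L
        ContinuousLinearMap.snd ℂ (Fin n → ℂ) (Fin n → ℂ)).analyticAt 0
    rintro (j | j)
    · exact ((h1 j).add (h2 j)).div analyticAt_const (by simp)
    · exact ((h1 j).sub (h2 j)).div analyticAt_const (by simp)
  have hψ0 : ψ 0 = 0 := by ext (j | j) <;> simp [ψ]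
  refine ⟨gt ∘ ψ, AnalyticAt.comp_of_eq hgt hψ hψ0, ?_⟩
  let χ : (Fin n → ℂ) → (Fin n ⊕ Fin n → ℝ) := fun z =>
    Sum.elim (fun j => (z j).re) (fun j => (z j).im)
  have hχ : Tendsto χ (𝓝 0) (𝓝 0) := by
    refine Continuous.tendsto' (continuous_pi ?_) _ _ ?_
    · rintro (j | j)
      · exact Complex.continuous_re.comp (continuous_apply j)
      · exact Complex.continuous_im.comp (continuous_apply j)
    · ext (j | j) <;> simp [χ]
  filter_upwards [hχ.eventually hgte] with z hz
  have e1 : ψ (z, star z) = fun i => ((χ z i : ℝ) : ℂ) := by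
    ext (j | j)
    · simp [ψ, χ, Complex.re_eq_add_conj]
    · simp [ψ, χ, Complex.im_eq_sub_conj]
  have e2 : φ (χ z) = z := by
    ext j
    simp [φ, χ, Complex.re_add_im]
  rw [Function.comp_apply, e1, hz, Function.comp_apply, e2]

/-- The totally real subspace `w = conj z` is a uniqueness set. Every `(z, w)` is
`(x, conj x) + i (y, conj y)`, and `K` vanishes on `(x, conj x) + t (y, conj y)` for small real `t`, hence
also for `t = i`. Only holomorphy of `K` along complex lines is needed. -/
theorem eventually_zero_of_antidiagonal {n : ℕ} {K : (Fin n → ℂ) × (Fin n → ℂ) → ℂ}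
    (hK : ∀ᶠ p in 𝓝 (0 : (Fin n → ℂ) × (Fin n → ℂ)), ∀ q : (Fin n → ℂ) × (Fin n → ℂ),
      DifferentiableAt ℂ (fun t : ℂ => K (p + t • q)) 0)
    (h : ∀ᶠ z in 𝓝 (0 : Fin n → ℂ), K (z, star z) = 0) :
    ∀ᶠ p in 𝓝 (0 : (Fin n → ℂ) × (Fin n → ℂ)), K p = 0 := by
  obtain ⟨r, hr, hb⟩ := Metric.eventually_nhds_iff_ball.1 hK
  obtain ⟨r', hr', hb'⟩ := Metric.eventually_nhds_iff_ball.1 h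
  set ρ := min r r' / 3 with hρ
  have hρ0 : 0 < ρ := by positivity
  have hρr : 3 * ρ ≤ r := by rw [hρ]; linarith [min_le_left r r']
  have hρr' : 3 * ρ ≤ r' := by rw [hρ]; linarith [min_le_right r r']
  filter_upwards [Metric.ball_mem_nhds 0 hρ0] with p hp
  obtain ⟨z, w⟩ := p
  rw [mem_ball_zero_iff, Prod.norm_mk, max_lt_iff] at hp
  obtain ⟨hz, hw⟩ := hp
  have hn : ∀ c : ℂ, ‖c‖ = 1 / 2 → ∀ u : Fin n → ℂ, ‖u‖ ≤ ‖z‖ + ‖w‖ → ‖c • u‖ < ρ := by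
    intro c hc u hu
    rw [norm_smul, hc]; linarith
  set x : Fin n → ℂ := (2⁻¹ : ℂ) • (z + star w) with hx
  set y : Fin n → ℂ := (-Complex.I / 2 : ℂ) • (z - star w) with hy
  have hxn : ‖x‖ < ρ := hn _ (by simp) _ ((norm_add_le _ _).trans (by rw [norm_star]))
  have hyn : ‖y‖ < ρ := hn _ (by simp) _ ((norm_sub_le _ _).trans (by rw [norm_star]))
  have hxn' : ‖(x, star x)‖ < ρ := by simpa [Prod.norm_mk] using hxn
  have hyn' : ‖(y, star y)‖ < ρ := by simpa [Prod.norm_mk] using hyn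
  have hzero : Set.EqOn (fun t : ℂ => K ((x, star x) + t • (y, star y))) 0
      (Metric.ball (0 : ℂ) 2) := by
    have hdiff : DifferentiableOn ℂ (fun t : ℂ => K ((x, star x) + t • (y, star y)))
        (Metric.ball (0 : ℂ) 2) := by
      intro t₀ ht₀
      rw [mem_ball_zero_iff] at ht₀
      have h1 := hb ((x, star x) + t₀ • (y, star y)) (by
        rw [mem_ball_zero_iff]
        refine (norm_add_le _ _).trans_lt ?_
        rw [norm_smul]
        have : ‖t₀‖ * ‖(y, star y)‖ ≤ 2 * ‖(y, star y)‖ := by gcongr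
        linarith) (y, star y)
      have h2 : DifferentiableAt ℂ (fun t : ℂ => t - t₀) t₀ := by fun_prop
      rw [← sub_self t₀] at h1
      have h3 := DifferentiableAt.comp (f := fun t : ℂ => t - t₀) t₀ h1 h2
      refine DifferentiableAt.differentiableWithinAt (h3.congr_of_eventuallyEq (.of_eq ?_))
      funext t
      simp only [Function.comp_apply]
      congr 1
      module
    refine AnalyticOnNhd.eqOn_zero_of_preconnected_of_frequently_eq_zero
      (hdiff.analyticOnNhd Metric.isOpen_ball) (convex_ball (0 : ℂ) 2).isPreconnected
      (Metric.mem_ball_self (by norm_num)) ?_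
    have hof : Tendsto (fun s : ℝ => (s : ℂ)) (𝓝[≠] 0) (𝓝[≠] 0) := by
      refine tendsto_nhdsWithin_iff.2 ⟨?_, ?_⟩
      · exact (Complex.continuous_ofReal.tendsto' 0 0 (by simp)).mono_left nhdsWithin_le_nhds
      · filter_upwards [self_mem_nhdsWithin] with s hs
        simpa using hs
    refine hof.frequently (Eventually.frequently ?_)
    filter_upwards [mem_nhdsWithin_of_mem_nhds (Metric.ball_mem_nhds (0 : ℝ) one_pos)] with s hs
    have h1 : (x, star x) + (s : ℂ) • (y, star y) = (x + (s : ℂ) • y, star (x + (s : ℂ) • y)) := by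
      simp
    rw [h1]
    apply hb'
    rw [mem_ball_zero_iff] at hs ⊢
    refine (norm_add_le _ _).trans_lt ?_
    rw [norm_smul (s : ℂ) y, Complex.norm_real]
    have : ‖s‖ * ‖y‖ ≤ 1 * ‖y‖ := by gcongr
    linarith
  have h1 := hzero (x := Complex.I) (by simp)
  have h2 : (x, star x) + Complex.I • (y, star y) = (z, w) := by
    ext j
    · simp [hx, hy]
      linear_combination (-(z j - starRingEnd ℂ (w j)) / 2) * Complex.I_mul_I
    · simp [hx, hy]
      linear_combination ((starRingEnd ℂ (z j) - w j) / 2) * Complex.I_mul_I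
  rw [← h2]
  exact h1

/-! ### The irreducibility statement -/

theorem differentiableAt_line {n : ℕ} {F : (Fin n → ℂ) × (Fin n → ℂ) → ℂ}
    {p q : (Fin n → ℂ) × (Fin n → ℂ)} (hF : AnalyticAt ℂ F p) :
    DifferentiableAt ℂ (fun t : ℂ => F (p + t • q)) 0 := by
  have h1 : DifferentiableAt ℂ F (p + (0 : ℂ) • q) := by simpa using hF.differentiableAt
  exact DifferentiableAt.comp (f := fun t : ℂ => p + t • q) 0 h1 (by fun_prop)

theorem differentiableAt_conj_line {n : ℕ} {f : (Fin n → ℂ) → ℂ} {w b : Fin n → ℂ}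
    (hf : AnalyticAt ℂ f (star w)) :
    DifferentiableAt ℂ (fun t : ℂ => starRingEnd ℂ (f (star (w + t • b)))) 0 := by
  have h1 : DifferentiableAt ℂ f (star w + (starRingEnd ℂ 0 : ℂ) • star b) := by
    simpa using hf.differentiableAt
  have h2 : DifferentiableAt ℂ (fun t : ℂ => f (star w + t • star b)) (starRingEnd ℂ 0) :=
    DifferentiableAt.comp (f := fun t : ℂ => star w + t • star b) _ h1 (by fun_prop)
  have h3 := h2.conj_conj
  rw [Complex.conj_conj] at h3
  refine h3.congr_of_eventuallyEq (.of_eq ?_)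
  funext t
  simp

/-- Irreducibility of the real part. If `Re f = g h` with `g 0 = h 0 = 0`, polarization gives
`f z + conj (f (conj w)) = 2 g̃ (z, w) h̃ (z, w)`. Restricting `w` to a line `s • conj v` on which the
second summand is not identically zero contradicts `is_power_of_factor`. -/
theorem re_irreducible {n : ℕ} {f : (Fin n → ℂ) → ℂ}
    (hf : AnalyticAt ℂ f 0) (hf0 : f 0 = 0)
    (hfne : ¬ ∀ᶠ z in 𝓝 (0 : Fin n → ℂ), f z = 0)
    (hpow : ¬ ∃ (g : (Fin n → ℂ) → ℂ) (k : ℕ), AnalyticAt ℂ g 0 ∧ 2 ≤ k ∧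
      ∀ᶠ z in 𝓝 (0 : Fin n → ℂ), f z = g z ^ k)
    {g h : (Fin n → ℂ) → ℝ} (hg : AnalyticAt ℝ g 0) (hh : AnalyticAt ℝ h 0)
    (hgh : ∀ᶠ z in 𝓝 (0 : Fin n → ℂ), (f z).re = g z * h z) : g 0 ≠ 0 ∨ h 0 ≠ 0 := by
  by_contra hcon
  obtain ⟨hg0, hh0⟩ : g 0 = 0 ∧ h 0 = 0 := by simpa [not_or] using hcon
  obtain ⟨gt, hgt, hgte⟩ := exists_polarization hg
  obtain ⟨ht, hht, hhte⟩ := exists_polarization hh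
  have hstar : Tendsto (fun z : Fin n → ℂ => star z) (𝓝 0) (𝓝 0) :=
    continuous_star.tendsto' _ _ (star_zero _)
  have hpolar : ∀ᶠ p in 𝓝 (0 : (Fin n → ℂ) × (Fin n → ℂ)),
      f p.1 + starRingEnd ℂ (f (star p.2)) - 2 * gt p * ht p = 0 := by
    refine eventually_zero_of_antidiagonal
      (K := fun p => f p.1 + starRingEnd ℂ (f (star p.2)) - 2 * gt p * ht p) ?_ ?_
    · filter_upwards [(continuous_fst.tendsto' (0 : (Fin n → ℂ) × (Fin n → ℂ)) 0 rfl).eventually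
          hf.eventually_analyticAt,
        (hstar.comp (continuous_snd.tendsto' (0 : (Fin n → ℂ) × (Fin n → ℂ)) 0 rfl)).eventually
          hf.eventually_analyticAt, hgt.eventually_analyticAt, hht.eventually_analyticAt]
        with p h1 h2 h3 h4 q
      have d1 : DifferentiableAt ℂ (fun t : ℂ => f (p + t • q).1) 0 :=
        differentiableAt_line (F := fun p => f p.1)
          (AnalyticAt.comp (f := fun p : (Fin n → ℂ) × (Fin n → ℂ) => p.1) h1 analyticAt_fst)
      have d2 : DifferentiableAt ℂ (fun t : ℂ => starRingEnd ℂ (f (star (p + t • q).2))) 0 :=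
        differentiableAt_conj_line h2
      exact (d1.add d2).sub
        (((differentiableAt_const _).mul (differentiableAt_line h3)).mul (differentiableAt_line h4))
    · filter_upwards [hgte, hhte, hgh] with z h1 h2 h3
      simp only [star_star]
      rw [h1, h2, Complex.add_conj, h3]
      push_cast
      ring
  obtain ⟨v, hv⟩ := exists_line hf hfne
  have hconj : Tendsto (starRingEnd ℂ) (𝓝 0) (𝓝 0) :=
    Complex.continuous_conj.tendsto' _ _ (map_zero _)
  let φ : (Fin n → ℂ) × ℂ → (Fin n → ℂ) × (Fin n → ℂ) := fun y => (y.1, y.2 • star v)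
  have hφ : AnalyticAt ℂ φ 0 := analyticAt_fst.prod (analyticAt_snd.smul analyticAt_const)
  have hφ0 : φ 0 = 0 := by simp [φ]
  have hφt : Tendsto φ (𝓝 0) (𝓝 0) := by
    have := hφ.continuousAt.tendsto
    rwa [hφ0] at this
  have hgt0 : gt 0 = 0 := by
    have := hgte.self_of_nhds
    rwa [star_zero, hg0, Complex.ofReal_zero] at this
  have hht0 : ht 0 = 0 := by
    have := hhte.self_of_nhds
    rwa [star_zero, hh0, Complex.ofReal_zero] at this
  refine hpow (is_power_of_factor (G := fun y => 2 * gt (φ y)) (H := fun y => ht (φ y))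
    (κ := fun s => starRingEnd ℂ (f (star (s • star v))))
    (analyticAt_const.mul (AnalyticAt.comp_of_eq hgt hφ hφ0)) (AnalyticAt.comp_of_eq hht hφ hφ0)
    hf hf0 hfne ?_ ?_ ?_ ?_ ?_ ?_)
  · rw [Complex.analyticAt_iff_eventually_differentiableAt]
    have hl : Tendsto (fun s : ℂ => star (s • star v)) (𝓝 0) (𝓝 0) :=
      Continuous.tendsto' (by fun_prop) _ _ (by simp)
    filter_upwards [hl.eventually hf.eventually_analyticAt] with s hs
    have h1 := differentiableAt_conj_line (b := star v) hs
    have h2 : DifferentiableAt ℂ (fun t : ℂ => t - s) s := by fun_prop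
    rw [← sub_self s] at h1
    have h3 := DifferentiableAt.comp (f := fun t : ℂ => t - s) s h1 h2
    refine h3.congr_of_eventuallyEq (.of_eq ?_)
    funext t
    simp only [Function.comp_apply]
    congr 3
    module
  · simp [hf0]
  · intro hcon
    apply hv
    filter_upwards [hconj.eventually hcon] with t ht
    simpa using ht
  · simp [hφ0, hgt0]
  · simp [hφ0, hht0]
  · filter_upwards [hφt.eventually hpolar] with y hy
    exact (sub_eq_zero.1 hy).symm

/-- **Lemma (Cerveau–Lins Neto).** If `f ∈ O_n` is a nonzero holomorphic germ with
`f(0) = 0` which is not a power in `O_n`, then `Re(f)` and `Im(f)` are irreducible in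
the ring of germs at `0` of real-valued real-analytic functions. -/
theorem stmt_8 (n : ℕ) (hn : 0 < n) (f : (Fin n → ℂ) → ℂ)
    (hf : AnalyticAt ℂ f 0) (hf0 : f 0 = 0)
    -- `f ≠ 0` as a germ
    (hfne : ¬ ∀ᶠ z in 𝓝 (0 : Fin n → ℂ), f z = 0)
    -- `f` is not a power in `O_n`
    (hpow : ¬ ∃ (g : (Fin n → ℂ) → ℂ) (k : ℕ), AnalyticAt ℂ g 0 ∧ 2 ≤ k ∧
      ∀ᶠ z in 𝓝 (0 : Fin n → ℂ), f z = g z ^ k) :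
    -- `Re(f)` is irreducible in `A_{nℝ}`
    (∀ g h : (Fin n → ℂ) → ℝ, AnalyticAt ℝ g 0 → AnalyticAt ℝ h 0 →
      (∀ᶠ z in 𝓝 (0 : Fin n → ℂ), (f z).re = g z * h z) → g 0 ≠ 0 ∨ h 0 ≠ 0) ∧
    -- `Im(f)` is irreducible in `A_{nℝ}`
    (∀ g h : (Fin n → ℂ) → ℝ, AnalyticAt ℝ g 0 → AnalyticAt ℝ h 0 →
      (∀ᶠ z in 𝓝 (0 : Fin n → ℂ), (f z).im = g z * h z) → g 0 ≠ 0 ∨ h 0 ≠ 0) := by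
  refine ⟨fun g h hg hh hgh => re_irreducible hf hf0 hfne hpow hg hh hgh,
    fun g h hg hh hgh => ?_⟩
  -- `Im f = Re (-i f)`, and `-i f` inherits all hypotheses because `i` has roots of every order.
  refine re_irreducible (f := fun z => -Complex.I * f z) (analyticAt_const.mul hf)
    (by simp [hf0]) ?_ ?_ hg hh ?_
  · simpa using hfne
  · rintro ⟨F, k, hF, hk, hFe⟩
    obtain ⟨c, hc⟩ := IsAlgClosed.exists_pow_nat_eq Complex.I (show 0 < k by omega)
    refine hpow ⟨fun z => c * F z, k, analyticAt_const.mul hF, hk, ?_⟩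
    filter_upwards [hFe] with z hz
    rw [mul_pow, hc, ← hz]
    linear_combination (f z) * Complex.I_mul_I
  · filter_upwards [hgh] with z hz
    simpa using hz
end

section
/- Let f ∈ ℂ[z₁, z₂] be a nonzero quasihomogeneous polynomial with f(0) = 0 (quasihomogeneous of some type (w₁,w₂) with positive integer weights). Then f factors, uniquely up to reordering of the factors, as f(z₁, z₂) = μ · z₁^m · z₂^n · Π_{ℓ=1}^{k} (z₂^p − λ_ℓ z₁^q), where m, n, k are nonnegative integers, p, q are positive integers with gcd(p, q) = 1, μ ∈ ℂ*, and λ_ℓ ∈ ℂ* for each ℓ = 1, …, k. -/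
/-!
Existence.  After dividing the weights by their gcd one gets coprime `p, q` with `p i + q j`
constant on the exponents `(i, j)` of `f`.  Consecutive lattice points on this line differ by
`(-q, p)`, so, with `n` the least exponent of `z₂` and `m` the least exponent of `z₁`, the
polynomial `f` is `z₁^m z₂^n ∑_{t ≤ K} c_t (z₁^q)^(K-t) (z₂^p)^t` with `c_0, c_K ≠ 0`.  The sum is
the homogenization of the univariate `∑ c_t T^t`, which splits over `ℂ` with nonzero roots
(`sum_eq_prod_roots`).

Uniqueness.  Restricting to the lines `z₁ = 1` and `z₂ = 1` gives univariate polynomials whose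
orders of vanishing at `0` are `n` and `m`, whose degrees are `n + p k` and `m + q k`
(`k` the number of factors), and the first of which has leading coefficient `μ`.  Coprimality
recovers `p` and `q` from `p k` and `q k` when `k ≠ 0`, and the `λ_ℓ` are then the roots of
`∏ (T - λ_ℓ)`, whose image under `T ↦ T^p` is the remaining factor.
-/

open Filter Topology MvPolynomial

/-! ### Existence of the factorization -/

/-- The homogenization of a univariate polynomial `P` is a product of linear forms `y - l x`, with
`l` running over the roots of `P`. -/
lemma sum_eq_prod_roots (P : Polynomial ℂ) (x y : ℂ) :
    ∑ t ∈ Finset.range (P.natDegree + 1), P.coeff t * x ^ (P.natDegree - t) * y ^ t =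
      P.leadingCoeff * (P.roots.map fun l => y - l * x).prod := by
  have hs := IsAlgClosed.splits P
  have hcard : P.roots.card = P.natDegree := hs.natDegree_eq_card_roots.symm
  by_cases hx : x = 0
  · subst hx
    rw [Finset.sum_range_succ, Finset.sum_eq_zero]
    · simp [hcard]
    · intro t ht
      have : P.natDegree - t ≠ 0 := by
        have := Finset.mem_range.1 ht
        omega
      simp [this]
  · -- for `x ≠ 0` both sides are `x ^ P.natDegree * P (y / x)`
    have h1 : P.eval (y / x) = P.leadingCoeff * (P.roots.map fun l => y / x - l).prod := by
      conv_lhs => rw [hs.eq_prod_roots]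
      simp [Polynomial.eval_multiset_prod, Multiset.map_map]
    have h2 : (P.roots.map fun l => y - l * x).prod =
        x ^ P.natDegree * (P.roots.map fun l => y / x - l).prod := by
      rw [← hcard, ← Multiset.prod_replicate, ← Multiset.map_const', ← Multiset.prod_map_mul]
      congr 1
      apply Multiset.map_congr rfl
      intro l _
      field_simp
    rw [h2, mul_left_comm, ← h1, Polynomial.eval_eq_sum_range, Finset.mul_sum]
    refine Finset.sum_congr rfl fun t ht => ?_
    have ht' : t ≤ P.natDegree := by
      have := Finset.mem_range.1 ht
      omega
    rw [← pow_sub_mul_pow x ht', div_pow]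
    field_simp

lemma exists_factorization (w₁ w₂ d : ℕ) (hw₁ : 0 < w₁) (hw₂ : 0 < w₂)
    (f : MvPolynomial (Fin 2) ℂ) (hf : f ≠ 0)
    (hqh : ∀ m ∈ f.support, w₁ * m 0 + w₂ * m 1 = d) :
    ∃ (m n p q : ℕ) (μ : ℂ) (lam : Multiset ℂ),
      0 < p ∧ 0 < q ∧ Nat.gcd p q = 1 ∧ μ ≠ 0 ∧ (∀ l ∈ lam, l ≠ 0) ∧
      (∀ z : Fin 2 → ℂ,
        eval z f = μ * z 0 ^ m * z 1 ^ n *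
          ((lam.map fun l => z 1 ^ p - l * z 0 ^ q)).prod) := by
  obtain ⟨p, q, hpq, hp, hq⟩ := Nat.exists_coprime w₁ w₂
  have hg : 0 < Nat.gcd w₁ w₂ := Nat.gcd_pos_of_pos_left _ hw₁
  have hp0 : 0 < p := by
    rcases Nat.eq_zero_or_pos p with h | h
    · simp [h] at hp; omega
    · exact h
  have hq0 : 0 < q := by
    rcases Nat.eq_zero_or_pos q with h | h
    · simp [h] at hq; omega
    · exact h
  have hne : f.support.Nonempty := MvPolynomial.support_nonempty.2 hf
  obtain ⟨a, ha, hamin⟩ := Finset.exists_min_image f.support (fun s => s 1) hne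
  obtain ⟨b, hb, hbmax⟩ := Finset.exists_max_image f.support (fun s => s 1) hne
  have hline : ∀ s ∈ f.support, ∀ u ∈ f.support, p * s 0 + q * s 1 = p * u 0 + q * u 1 := by
    intro s hs u hu
    have h := (hqh s hs).trans (hqh u hu).symm
    apply Nat.eq_of_mul_eq_mul_left hg
    generalize Nat.gcd w₁ w₂ = g at hp hq
    rw [hp, hq] at h
    linarith
  -- each exponent is reached from `a` by a number of steps `(-q, p)`
  have hstep : ∀ s ∈ f.support, ∃ t, s 1 = a 1 + p * t ∧ a 0 = s 0 + q * t := by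
    intro s hs
    have h := hline s hs a ha
    obtain ⟨c, hc⟩ := Nat.exists_eq_add_of_le (hamin s hs)
    have hdvd : p ∣ q * c := by
      have h3 : p * a 0 = p * s 0 + q * c := by
        rw [hc] at h
        linarith
      exact (Nat.dvd_add_right (Dvd.intro _ rfl)).1 (h3 ▸ Dvd.intro _ rfl)
    obtain ⟨t, rfl⟩ := hpq.dvd_of_dvd_mul_left hdvd
    refine ⟨t, hc, ?_⟩
    rw [hc] at h
    apply Nat.eq_of_mul_eq_mul_left hp0
    linarith
  obtain ⟨K, hK1, hK0⟩ := hstep b hb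
  let e : ℕ → (Fin 2 →₀ ℕ) := fun t =>
    Finsupp.single 0 (b 0 + q * (K - t)) + Finsupp.single 1 (a 1 + p * t)
  have he0 : ∀ t, e t 0 = b 0 + q * (K - t) := fun t => by simp [e]
  have he1 : ∀ t, e t 1 = a 1 + p * t := fun t => by simp [e]
  have heq : ∀ s ∈ f.support, ∃ t ≤ K, e t = s := by
    intro s hs
    obtain ⟨t, h1, h0⟩ := hstep s hs
    have htK : t ≤ K := by
      have := hbmax s hs
      rw [h1, hK1] at this
      exact Nat.le_of_mul_le_mul_left (by omega) hp0
    refine ⟨t, htK, ?_⟩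
    obtain ⟨r, rfl⟩ := Nat.exists_eq_add_of_le htK
    ext i
    fin_cases i
    · change e t 0 = s 0
      rw [he0, Nat.add_sub_cancel_left]
      rw [mul_add] at hK0
      omega
    · change e t 1 = s 1
      rw [he1, h1]
  have hea : e 0 = a := by
    ext i
    fin_cases i
    · change e 0 0 = a 0
      rw [he0, hK0, Nat.sub_zero]
    · change e 0 1 = a 1
      simp [he1]
  have heb : e K = b := by
    ext i
    fin_cases i
    · change e K 0 = b 0
      simp [he0]
    · change e K 1 = b 1
      rw [he1, hK1]
  have hinj : Function.Injective e := by
    intro s t h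
    have h1 := congrArg (fun u => u 1) h
    simp only [he1] at h1
    exact Nat.eq_of_mul_eq_mul_left hp0 (by omega)
  let P : Polynomial ℂ :=
    ∑ t ∈ Finset.range (K + 1), Polynomial.monomial t (MvPolynomial.coeff (e t) f)
  have hPc : ∀ t, P.coeff t = if t ≤ K then MvPolynomial.coeff (e t) f else 0 := by
    intro t
    simp [P, Polynomial.finsetSum_coeff, Polynomial.coeff_monomial]
  have hPK : P.coeff K ≠ 0 := by
    rw [hPc, if_pos le_rfl, heb]
    exact MvPolynomial.mem_support_iff.1 hb
  have hP0 : P.coeff 0 ≠ 0 := by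
    rw [hPc, if_pos (Nat.zero_le _), hea]
    exact MvPolynomial.mem_support_iff.1 ha
  have hPdeg : P.natDegree = K := by
    apply le_antisymm
    · rw [Polynomial.natDegree_le_iff_coeff_eq_zero]
      intro N hN
      rw [hPc, if_neg (by omega)]
    · exact Polynomial.le_natDegree_of_ne_zero hPK
  have hPne : P ≠ 0 := fun h => hPK (by simp [h])
  refine ⟨b 0, a 1, p, q, P.leadingCoeff, P.roots, hp0, hq0, hpq,
    Polynomial.leadingCoeff_ne_zero.2 hPne, ?_, ?_⟩
  · rintro l hl rfl
    have := (Polynomial.mem_roots hPne).1 hl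
    rw [Polynomial.IsRoot, ← Polynomial.coeff_zero_eq_eval_zero] at this
    exact hP0 this
  · intro z
    have hsub : f.support ⊆ (Finset.range (K + 1)).image e := by
      intro s hs
      obtain ⟨t, ht, rfl⟩ := heq s hs
      exact Finset.mem_image_of_mem _ (Finset.mem_range.2 (by omega))
    have key := sum_eq_prod_roots P (z 0 ^ q) (z 1 ^ p)
    rw [MvPolynomial.eval_eq', Finset.sum_subset hsub, Finset.sum_image hinj.injOn]
    · rw [mul_assoc, mul_assoc, mul_left_comm, mul_left_comm P.leadingCoeff, ← key, hPdeg,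
        Finset.mul_sum, Finset.mul_sum]
      refine Finset.sum_congr rfl fun t ht => ?_
      rw [hPc, if_pos (by have := Finset.mem_range.1 ht; omega), Fin.prod_univ_two, he0, he1]
      ring
    · intro s _ hs
      rw [MvPolynomial.notMem_support_iff.1 hs, zero_mul]

/-! ### Uniqueness of the factorization -/

/-- The order of vanishing at `0` and the degree of `c X^n Q(X^r)` when `Q(0) ≠ 0`. -/
lemma trailing_and_degree {c : ℂ} (hc : c ≠ 0) (n : ℕ) {r : ℕ} (hr : 0 < r) {Q : Polynomial ℂ}
    (hQ : Q.coeff 0 ≠ 0) :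
    (Polynomial.C c * Polynomial.X ^ n * Polynomial.expand ℂ r Q).natTrailingDegree = n ∧
    (Polynomial.C c * Polynomial.X ^ n * Polynomial.expand ℂ r Q).natDegree =
      n + Q.natDegree * r := by
  have hQ0 : Q ≠ 0 := fun h => hQ (by simp [h])
  have hE : Polynomial.expand ℂ r Q ≠ 0 := (Polynomial.expand_ne_zero hr).2 hQ0
  have hcX : Polynomial.C c * Polynomial.X ^ n ≠ 0 := by simp [hc]
  have hEc : (Polynomial.expand ℂ r Q).coeff 0 ≠ 0 := by
    rw [Polynomial.coeff_expand hr]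
    simpa using hQ
  constructor
  · rw [Polynomial.natTrailingDegree_mul hcX hE, Polynomial.natTrailingDegree_eq_zero.2 (.inr hEc),
      Polynomial.C_mul_X_pow_eq_monomial, Polynomial.natTrailingDegree_monomial hc, add_zero]
  · rw [Polynomial.natDegree_mul hcX hE, Polynomial.natDegree_C_mul_X_pow _ _ hc,
      Polynomial.natDegree_expand]

lemma prod_X_sub_coeff_zero {lam : Multiset ℂ} (h : ∀ l ∈ lam, l ≠ 0) :
    (lam.map fun l => Polynomial.X - Polynomial.C l).prod.coeff 0 ≠ 0 := by
  rw [Polynomial.coeff_zero_eq_eval_zero, Polynomial.eval_multiset_prod, Ne,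
    Multiset.prod_eq_zero_iff]
  simpa using fun h0 => h 0 h0 rfl

lemma prod_one_sub_coeff_zero (lam : Multiset ℂ) :
    (lam.map fun l => 1 - Polynomial.C l * Polynomial.X).prod.coeff 0 ≠ 0 := by
  rw [Polynomial.coeff_zero_eq_eval_zero, Polynomial.eval_multiset_prod, Ne,
    Multiset.prod_eq_zero_iff]
  simp [Multiset.mem_replicate]

lemma prod_one_sub_natDegree {lam : Multiset ℂ} (h : ∀ l ∈ lam, l ≠ 0) :
    (lam.map fun l => 1 - Polynomial.C l * Polynomial.X).prod.natDegree = lam.card := by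
  have hd : ∀ l ∈ lam, (1 - Polynomial.C l * Polynomial.X).natDegree = 1 := by
    intro l hl
    have : (1 - Polynomial.C l * Polynomial.X : Polynomial ℂ) =
        Polynomial.C (-l) * Polynomial.X + Polynomial.C 1 := by
      simp; ring
    rw [this]
    exact Polynomial.natDegree_linear (neg_ne_zero.2 (h l hl))
  rw [Polynomial.natDegree_multiset_prod, Multiset.map_map, Function.comp_def,
    Multiset.map_congr rfl hd]
  · simp
  · intro h0
    obtain ⟨l, hl, h1⟩ := Multiset.mem_map.1 h0
    have := hd l hl
    simp [h1] at this

lemma factorization_unique {m n p q : ℕ} {μ : ℂ} {lam : Multiset ℂ}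
    {m' n' p' q' : ℕ} {μ' : ℂ} {lam' : Multiset ℂ}
    (hp : 0 < p) (hq : 0 < q) (hpq : Nat.gcd p q = 1) (hμ : μ ≠ 0) (hl : ∀ l ∈ lam, l ≠ 0)
    (hp' : 0 < p') (hq' : 0 < q') (hpq' : Nat.gcd p' q' = 1) (hμ' : μ' ≠ 0)
    (hl' : ∀ l ∈ lam', l ≠ 0)
    (h : ∀ x y : ℂ, μ' * x ^ m' * y ^ n' * (lam'.map fun l => y ^ p' - l * x ^ q').prod =
      μ * x ^ m * y ^ n * (lam.map fun l => y ^ p - l * x ^ q).prod) :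
    m' = m ∧ n' = n ∧ μ' = μ ∧ lam' = lam ∧ (lam ≠ 0 → p' = p ∧ q' = q) := by
  -- restriction to the line `z₁ = 1`
  have hA : Polynomial.C μ' * Polynomial.X ^ n' * Polynomial.expand ℂ p'
        (lam'.map fun l => Polynomial.X - Polynomial.C l).prod =
      Polynomial.C μ * Polynomial.X ^ n * Polynomial.expand ℂ p
        (lam.map fun l => Polynomial.X - Polynomial.C l).prod := by
    apply Polynomial.funext
    intro y
    simpa [Polynomial.expand_eval, Polynomial.eval_multiset_prod, Multiset.map_map,
      Function.comp_def] using h 1 y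
  -- restriction to the line `z₂ = 1`
  have hB : Polynomial.C μ' * Polynomial.X ^ m' * Polynomial.expand ℂ q'
        (lam'.map fun l => 1 - Polynomial.C l * Polynomial.X).prod =
      Polynomial.C μ * Polynomial.X ^ m * Polynomial.expand ℂ q
        (lam.map fun l => 1 - Polynomial.C l * Polynomial.X).prod := by
    apply Polynomial.funext
    intro x
    simpa [Polynomial.expand_eval, Polynomial.eval_multiset_prod, Multiset.map_map,
      Function.comp_def] using h x 1
  obtain ⟨a1, a2⟩ := trailing_and_degree hμ n hp (prod_X_sub_coeff_zero hl)
  obtain ⟨a1', a2'⟩ := trailing_and_degree hμ' n' hp' (prod_X_sub_coeff_zero hl')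
  obtain ⟨b1, b2⟩ := trailing_and_degree hμ m hq (prod_one_sub_coeff_zero lam)
  obtain ⟨b1', b2'⟩ := trailing_and_degree hμ' m' hq' (prod_one_sub_coeff_zero lam')
  rw [hA] at a1' a2'
  rw [hB] at b1' b2'
  have hn : n' = n := a1'.symm.trans a1
  have hm : m' = m := b1'.symm.trans b1
  subst hn hm
  have hk1 : lam'.card * p' = lam.card * p := by
    have := a2'.symm.trans a2
    rw [Polynomial.natDegree_multiset_prod_X_sub_C_eq_card,
      Polynomial.natDegree_multiset_prod_X_sub_C_eq_card] at this
    omega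
  have hk2 : lam'.card * q' = lam.card * q := by
    have := b2'.symm.trans b2
    rw [prod_one_sub_natDegree hl, prod_one_sub_natDegree hl'] at this
    omega
  -- the number of factors is `gcd (k p) (k q)`
  have hk : lam'.card = lam.card := by
    have h1 := Nat.gcd_mul_left lam'.card p' q'
    rw [hk1, hk2, Nat.gcd_mul_left, hpq, hpq'] at h1
    omega
  have hlead : ∀ (r : ℕ) (_ : 0 < r) (c : ℂ) (s : Multiset ℂ),
      (Polynomial.C c * Polynomial.X ^ n' * Polynomial.expand ℂ r
        (s.map fun l => Polynomial.X - Polynomial.C l).prod).leadingCoeff = c := by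
    intro r hr c s
    have hmon : (Polynomial.expand ℂ r
        (s.map fun l => Polynomial.X - Polynomial.C l).prod).Monic :=
      (Polynomial.monic_multiset_prod_of_monic _ _
        fun l _ => Polynomial.monic_X_sub_C l).expand hr
    rw [Polynomial.leadingCoeff_mul, hmon.leadingCoeff]
    simp
  have hμμ : μ' = μ := by
    rw [← hlead p' hp' μ' lam', hA, hlead p hp]
  subst hμμ
  by_cases h0 : lam = 0
  · subst h0
    simp only [Multiset.card_zero, Multiset.card_eq_zero] at hk
    exact ⟨rfl, rfl, rfl, hk, fun h => absurd rfl h⟩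
  · have hpos : 0 < lam.card := Multiset.card_pos.2 h0
    rw [hk] at hk1 hk2
    have hpp := Nat.eq_of_mul_eq_mul_left hpos hk1
    have hqq := Nat.eq_of_mul_eq_mul_left hpos hk2
    subst hpp hqq
    refine ⟨rfl, rfl, rfl, ?_, fun _ => ⟨rfl, rfl⟩⟩
    have hcX : Polynomial.C μ' * Polynomial.X ^ n' ≠ 0 := by simp [hμ]
    have := congrArg Polynomial.roots
      (Polynomial.expand_injective hp (mul_left_cancel₀ hcX hA))
    rwa [Polynomial.roots_multiset_prod_X_sub_C, Polynomial.roots_multiset_prod_X_sub_C] at this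

/-- **Lemma (Saito).** A nonzero quasihomogeneous polynomial `f ∈ ℂ[z₁,z₂]` with
`f(0) = 0` factors, uniquely up to reordering of the factors, as
`f = μ z₁^m z₂^n Π_{ℓ=1}^k (z₂^p − λ_ℓ z₁^q)` with `gcd(p,q) = 1` and `μ, λ_ℓ ∈ ℂ*`.
The multiset `lam` records the `λ_ℓ`'s, so multiset equality is equality up to
reordering. -/
theorem stmt_9 (w₁ w₂ d : ℕ) (hw₁ : 0 < w₁) (hw₂ : 0 < w₂)
    (f : MvPolynomial (Fin 2) ℂ) (hf : f ≠ 0) (hf0 : constantCoeff f = 0)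
    -- `f` is quasihomogeneous of type `(w₁,w₂)` and quasihomogeneous degree `d`
    (hqh : ∀ m ∈ f.support, w₁ * m 0 + w₂ * m 1 = d) :
    ∃ (m n p q : ℕ) (μ : ℂ) (lam : Multiset ℂ),
      0 < p ∧ 0 < q ∧ Nat.gcd p q = 1 ∧ μ ≠ 0 ∧ (∀ l ∈ lam, l ≠ 0) ∧
      (∀ z : Fin 2 → ℂ,
        eval z f = μ * z 0 ^ m * z 1 ^ n * ((lam.map fun l => z 1 ^ p - l * z 0 ^ q)).prod) ∧
      -- uniqueness, up to reordering of the factors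
      (∀ (m' n' p' q' : ℕ) (μ' : ℂ) (lam' : Multiset ℂ),
        0 < p' → 0 < q' → Nat.gcd p' q' = 1 → μ' ≠ 0 → (∀ l ∈ lam', l ≠ 0) →
        (∀ z : Fin 2 → ℂ,
          eval z f = μ' * z 0 ^ m' * z 1 ^ n' *
            ((lam'.map fun l => z 1 ^ p' - l * z 0 ^ q')).prod) →
        m' = m ∧ n' = n ∧ μ' = μ ∧ lam' = lam ∧ (lam ≠ 0 → p' = p ∧ q' = q)) := by
  obtain ⟨m, n, p, q, μ, lam, hp, hq, hpq, hμ, hl, h⟩ :=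
    exists_factorization w₁ w₂ d hw₁ hw₂ f hf hqh
  refine ⟨m, n, p, q, μ, lam, hp, hq, hpq, hμ, hl, h, ?_⟩
  intro m' n' p' q' μ' lam' hp' hq' hpq' hμ' hl' h'
  refine factorization_unique hp hq hpq hμ hl hp' hq' hpq' hμ' hl' fun x y => ?_
  simpa using (h' ![x, y]).symm.trans (h ![x, y])
end

section
/- Let Q ∈ ℂ[z₁, z₂] be a quasihomogeneous polynomial of type (a,b) with gcd(a,b) = 1 and quasihomogeneous degree d, having an isolated singularity at 0 ∈ ℂ². Then Q factors as Q(z₁, z₂) = μ · z₁^m · z₂^n · Π_{ℓ=1}^{k} (z₂^a − λ_ℓ z₁^b), where m ≤ 1 and n ≤ 1 are nonnegative integers, μ ∈ ℂ*, and λ₁, …, λ_k ∈ ℂ* are pairwise distinct; in particular, in the Saito factorization of Q the exponents p, q satisfy p = a and q = b. -/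
open Filter Topology MvPolynomial

/-!
All exponents `(i, j)` of `Q` lie on the line `a i + b j = d`. As `gcd(a, b) = 1`, stepping along
this line changes `(i, j)` by multiples of `(b, -a)`, so once the largest monomial
`z₁^m z₂^n` dividing `Q` is removed, what remains is a homogeneous form in `u = z₂^a`, `v = z₁^b`
with both extreme coefficients nonzero. Over `ℂ` such a form is a product of linear factors
`u - λ v` with `λ ≠ 0` (`exists_factorization`).

If the square of a polynomial `F` divides `Q`, then both partial derivatives of `Q` vanish on
`F = 0`. For each possible factor `F = z₁, z₂, z₂^a - λ z₁^b` this zero set contains a curve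
`t ↦ (α t^a, β t^b)` through the origin, so an isolated singularity excludes repeated
factors (`not_sq_dvd`).
-/

/-- A polynomial whose square divides `Q` cannot vanish along a nonconstant quasihomogeneous curve
through the origin when the critical point of `Q` at the origin is isolated. -/
lemma not_sq_dvd {a b : ℕ} (ha : 0 < a) (hb : 0 < b) {Q F : MvPolynomial (Fin 2) ℂ}
    (hQsing : ∀ᶠ z in 𝓝 (0 : Fin 2 → ℂ), (∀ i, eval z (pderiv i Q) = 0) → z = 0)
    (α β : ℂ) (hαβ : α ≠ 0 ∨ β ≠ 0)
    (hF : ∀ t : ℂ, eval ![α * t ^ a, β * t ^ b] F = 0) : ¬ F ^ 2 ∣ Q := by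
  rintro ⟨R, rfl⟩
  have hcont : Tendsto (fun t : ℂ => ![α * t ^ a, β * t ^ b]) (𝓝[≠] 0) (𝓝 0) := by
    have h : Continuous (fun t : ℂ => ![α * t ^ a, β * t ^ b]) := by
      refine continuous_pi fun i => ?_
      fin_cases i <;> simp <;> fun_prop
    have h0 := h.tendsto 0
    have e : ![α * (0 : ℂ) ^ a, β * (0 : ℂ) ^ b] = 0 := by
      ext i; fin_cases i <;> simp [ha.ne', hb.ne']
    rw [e] at h0
    exact h0.mono_left nhdsWithin_le_nhds
  obtain ⟨t, ht, ht0⟩ := ((hcont.eventually hQsing).and self_mem_nhdsWithin).exists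
  have ht0 : t ≠ 0 := ht0
  have hz := ht fun i => by
    simp [Derivation.leibniz, Derivation.leibniz_pow, hF t]
  have h0 := congrFun hz 0
  have h1 := congrFun hz 1
  simp [ht0] at h0 h1
  tauto

/-- A binary form of degree `k`, given by monomials `c i u^(s i) v^(k - s i)` with distinct
exponents `s i`, whose coefficients of `u^k` and `v^k` are nonzero, is a product of factors
`u - x v` with `x ≠ 0`: these `x` are the roots of its dehomogenization at `v = 1`. -/
lemma form_factor {ι : Type*} (S : Finset ι) (c : ι → ℂ) (s : ι → ℕ) (k : ℕ)
    (hs : ∀ i ∈ S, s i ≤ k) (e f : ι) (he : e ∈ S) (hf : f ∈ S) (hce : c e ≠ 0) (hcf : c f ≠ 0)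
    (hek : s e = k) (hf0 : s f = 0) (hinj : Set.InjOn s S) :
    ∃ r : Multiset ℂ, (0 : ℂ) ∉ r ∧ ∀ u v : ℂ,
      ∑ i ∈ S, c i * (u ^ s i * v ^ (k - s i)) = c e * (r.map fun x => u - x * v).prod := by
  classical
  set P : Polynomial ℂ := ∑ i ∈ S, Polynomial.monomial (s i) (c i) with hP
  have hcoeff : ∀ i ∈ S, P.coeff (s i) = c i := by
    intro i hi
    rw [hP, Polynomial.finsetSum_coeff, Finset.sum_eq_single i]
    · simp
    · intro j hj hji
      rw [Polynomial.coeff_monomial, if_neg]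
      exact fun h => hji (hinj hj hi h)
    · exact fun h => absurd hi h
  have hdeg : P.natDegree = k := by
    apply le_antisymm
    · refine Polynomial.natDegree_sum_le_of_forall_le _ _ fun i hi => ?_
      exact (Polynomial.natDegree_monomial_le _).trans (hs i hi)
    · apply Polynomial.le_natDegree_of_ne_zero
      rw [← hek, hcoeff e he]; exact hce
  have hlead : P.leadingCoeff = c e := by
    rw [Polynomial.leadingCoeff, hdeg, ← hek, hcoeff e he]
  have hspl : P.Splits := IsAlgClosed.splits P
  have hcard : P.roots.card = k := by rw [← hspl.natDegree_eq_card_roots, hdeg]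
  refine ⟨P.roots, ?_, fun u v => ?_⟩
  · intro h0
    have h := Polynomial.isRoot_of_mem_roots h0
    rw [Polynomial.IsRoot, ← Polynomial.coeff_zero_eq_eval_zero, ← hf0, hcoeff f hf] at h
    exact hcf h
  · by_cases hv : v = 0
    · subst hv
      rw [Finset.sum_eq_single e]
      · simp [hek, hcard]
      · intro j hj hje
        have : s j ≠ k := fun h => hje (hinj hj he (h.trans hek.symm))
        have h2 := hs j hj
        rw [zero_pow (by omega)]; simp
      · exact fun h => absurd he h
    · have h1 : P.eval (u / v) = c e * (P.roots.map fun x => u / v - x).prod := by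
        conv_lhs => rw [hspl.eq_prod_roots]
        rw [hlead, Polynomial.eval_mul, Polynomial.eval_C, Polynomial.eval_multiset_prod,
          Multiset.map_map]
        simp
      have h2 : (P.roots.map fun x => u - x * v).prod
          = v ^ k * (P.roots.map fun x => u / v - x).prod := by
        rw [← hcard, ← Multiset.prod_replicate, ← Multiset.map_const', ← Multiset.prod_map_mul]
        congr 1
        refine Multiset.map_congr rfl fun x _ => ?_
        field_simp
      rw [h2, mul_left_comm, ← h1, hP, Polynomial.eval_finsetSum, Finset.mul_sum]
      refine Finset.sum_congr rfl fun i hi => ?_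
      rw [Polynomial.eval_monomial, div_pow]
      have : v ^ k = v ^ s i * v ^ (k - s i) := by
        rw [← pow_add, Nat.add_sub_cancel' (hs i hi)]
      rw [this]
      field_simp

/-- Saito's factorization of a quasihomogeneous polynomial of coprime type `(a, b)`. -/
lemma exists_factorization_s10 {a b d : ℕ} (ha : 0 < a) (hb : 0 < b) (hab : Nat.gcd a b = 1)
    {Q : MvPolynomial (Fin 2) ℂ} (hQ : Q ≠ 0)
    (hqh : ∀ m ∈ Q.support, a * m 0 + b * m 1 = d) :
    ∃ (m n : ℕ) (μ : ℂ) (r : Multiset ℂ), μ ≠ 0 ∧ (0 : ℂ) ∉ r ∧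
      Q = C μ * X 0 ^ m * X 1 ^ n * (r.map fun x => X 1 ^ a - C x * X 0 ^ b).prod := by
  have hne : Q.support.Nonempty := by simpa using hQ
  obtain ⟨e, he, hemin⟩ := Finset.exists_min_image Q.support (fun m => m 0) hne
  obtain ⟨f, hf, hfmin⟩ := Finset.exists_min_image Q.support (fun m => m 1) hne
  -- On the line `a i + b j = d`, coprimality makes `i` constant mod `b` and `j` constant mod `a`.
  have step : ∀ m ∈ Q.support, ∃ t s : ℕ, m 0 = e 0 + b * t ∧ m 1 = f 1 + a * s := by
    intro m hm
    have h0 := hemin m hm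
    have h1 := hfmin m hm
    have he' := hqh e he
    have hf' := hqh f hf
    have hm' := hqh m hm
    obtain ⟨x, hx⟩ := Nat.exists_eq_add_of_le h0
    obtain ⟨y, hy⟩ := Nat.exists_eq_add_of_le h1
    have hbx : b ∣ x := by
      apply (Nat.Coprime.symm hab).dvd_of_dvd_mul_left
      rw [hx] at hm'
      zify at hm' he' ⊢
      exact ⟨e 1 - m 1, by linear_combination hm' - he'⟩
    have hay : a ∣ y := by
      apply Nat.Coprime.dvd_of_dvd_mul_left hab
      rw [hy] at hm'
      zify at hm' hf' ⊢
      exact ⟨f 0 - m 0, by linear_combination hm' - hf'⟩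
    obtain ⟨t, rfl⟩ := hbx
    obtain ⟨s, rfl⟩ := hay
    exact ⟨t, s, hx, hy⟩
  choose! t s ht hs using step
  have hte : t e = 0 := by
    have := ht e he
    have : b * t e = 0 := by omega
    simpa [hb.ne'] using this
  have hsf : s f = 0 := by
    have := hs f hf
    have : a * s f = 0 := by omega
    simpa [ha.ne'] using this
  have hts : ∀ m ∈ Q.support, t m + s m = s e := by
    intro m hm
    have h1 := hqh m hm
    have h2 := hqh e he
    rw [ht m hm, hs m hm] at h1
    rw [hs e he] at h2
    have h3 : a * b * (t m + s m) = a * b * s e := by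
      zify at h1 h2 ⊢
      linear_combination h1 - h2
    exact Nat.eq_of_mul_eq_mul_left (Nat.mul_pos ha hb) h3
  have hinj : Set.InjOn s Q.support := by
    intro m hm m' hm' h
    have hm : m ∈ Q.support := hm
    have hm' : m' ∈ Q.support := hm'
    have h1 := hts m hm
    have h2 := hts m' hm'
    have h3 : t m = t m' := by omega
    ext i
    fin_cases i
    · simp [ht m hm, ht m' hm', h3]
    · simp [hs m hm, hs m' hm', h]
  obtain ⟨r, hr0, hr⟩ := form_factor Q.support (fun m => Q.coeff m) s (s e)
    (fun m hm => by have := hts m hm; omega) e f he hf (mem_support_iff.1 he)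
    (mem_support_iff.1 hf) rfl hsf hinj
  refine ⟨e 0, f 1, Q.coeff e, r, mem_support_iff.1 he, hr0, ?_⟩
  apply MvPolynomial.funext
  intro z
  have h := hr (z 1 ^ a) (z 0 ^ b)
  have hprod : eval z (r.map fun x => X 1 ^ a - C x * X 0 ^ b).prod
      = (r.map fun x => z 1 ^ a - x * z 0 ^ b).prod := by
    rw [map_multiset_prod, Multiset.map_map]
    simp
  rw [map_mul, hprod]
  simp only [map_mul, map_pow, eval_C, eval_X]
  rw [show ∀ A B D E : ℂ, A * B * D * E = B * D * (A * E) by intros; ring, ← h, eval_eq',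
    Finset.mul_sum]
  refine Finset.sum_congr rfl fun m hm => ?_
  have h1 := hts m hm
  rw [Fin.prod_univ_two, ht m hm, hs m hm, show s e - s m = t m by omega]
  ring

/-- A quasihomogeneous polynomial `Q` of type `(a,b)`, `gcd(a,b) = 1`, with an isolated
singularity at `0 ∈ ℂ²` factors as `Q = μ z₁^m z₂^n Π_{ℓ=1}^k (z₂^a − λ_ℓ z₁^b)` with
`m ≤ 1`, `n ≤ 1`, `μ ∈ ℂ*` and the `λ_ℓ ∈ ℂ*` pairwise distinct; in particular, in the
Saito factorization of `Q` the exponents are `p = a` and `q = b`. -/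
theorem stmt_10 (a b d : ℕ) (ha : 0 < a) (hb : 0 < b) (hab : Nat.gcd a b = 1)
    (Q : MvPolynomial (Fin 2) ℂ) (hQ : Q ≠ 0)
    -- `Q` is quasihomogeneous of type `(a,b)` and quasihomogeneous degree `d`
    (hqh : ∀ m ∈ Q.support, a * m 0 + b * m 1 = d)
    -- `Q` has an isolated singularity at `0 ∈ ℂ²`
    (hQcrit : ∀ i, eval (0 : Fin 2 → ℂ) (pderiv i Q) = 0)
    (hQsing : ∀ᶠ z in 𝓝 (0 : Fin 2 → ℂ), (∀ i, eval z (pderiv i Q) = 0) → z = 0) :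
    ∃ (m n k : ℕ) (μ : ℂ) (lam : Fin k → ℂ),
      m ≤ 1 ∧ n ≤ 1 ∧ μ ≠ 0 ∧ (∀ ℓ, lam ℓ ≠ 0) ∧ Function.Injective lam ∧
      ∀ z : Fin 2 → ℂ,
        eval z Q = μ * z 0 ^ m * z 1 ^ n * ∏ ℓ, (z 1 ^ a - lam ℓ * z 0 ^ b) := by
  obtain ⟨m, n, μ, r, hμ, hr0, hfac⟩ := exists_factorization_s10 ha hb hab hQ hqh
  have hm : m ≤ 1 := by
    by_contra! h
    refine not_sq_dvd ha hb (F := X 0) hQsing 0 1 (by simp) (by simp) ?_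
    rw [hfac]
    exact (((pow_dvd_pow _ h).mul_left _).mul_right _).mul_right _
  have hn : n ≤ 1 := by
    by_contra! h
    refine not_sq_dvd ha hb (F := X 1) hQsing 1 0 (by simp) (by simp) ?_
    rw [hfac]
    exact ((pow_dvd_pow _ h).mul_left _).mul_right _
  have hnodup : r.Nodup := by
    rw [Multiset.nodup_iff_le]
    intro x hx
    -- The curve `(t^a, c t^b)` with `c^a = x` parametrizes a branch of `z₂^a = x z₁^b`.
    obtain ⟨c, hc⟩ := IsAlgClosed.exists_pow_nat_eq x ha
    refine not_sq_dvd ha hb (F := X 1 ^ a - C x * X 0 ^ b) hQsing 1 c (by simp) ?_ ?_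
    · intro t
      simp only [map_sub, map_mul, map_pow, eval_X, eval_C, Matrix.cons_val_zero,
        Matrix.cons_val_one, ← hc]
      ring
    · rw [hfac]
      refine Dvd.dvd.mul_left ?_ _
      have := Multiset.prod_dvd_prod_of_le
        (Multiset.map_le_map (f := fun x => (X 1 ^ a - C x * X 0 ^ b : MvPolynomial (Fin 2) ℂ)) hx)
      simpa [pow_two] using this
  refine ⟨m, n, r.toList.length, μ, r.toList.get, hm, hn, hμ, ?_, ?_, fun z => ?_⟩
  · intro l h
    apply hr0
    rw [← h, ← Multiset.mem_toList]
    exact List.get_mem _ _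
  · rw [← List.nodup_iff_injective_get, ← Multiset.coe_nodup, Multiset.coe_toList]
    exact hnodup
  · have h2 : ∏ l, (z 1 ^ a - r.toList.get l * z 0 ^ b)
        = (r.map fun x => z 1 ^ a - x * z 0 ^ b).prod := by
      conv_rhs => rw [← Multiset.coe_toList r]
      rw [Multiset.map_coe, Multiset.prod_coe, ← List.prod_ofFn]
      congr 1
      apply List.ext_get <;> simp
    rw [h2]
    conv_lhs => rw [hfac]
    rw [map_mul, map_multiset_prod, Multiset.map_map]
    simp
end

section
/- Let Q ∈ ℂ[z₁, …, zₙ] be a quasihomogeneous polynomial of type (w₁, …, wₙ) and quasihomogeneous degree d with an isolated singularity at 0 ∈ ℂⁿ, and let f = Q + F′ be a semiquasihomogeneous germ of holomorphic function at 0, i.e., every monomial in the Taylor series of F′ has weighted degree strictly greater than d. Then there exist a germ of biholomorphism φ : (ℂⁿ,0) → (ℂⁿ,0), finitely many monomials e₁, …, e_s ∈ ℂ[z₁, …, zₙ] of weighted degree strictly greater than d whose residue classes in the local algebra A_Q are ℂ-linearly independent (they are elements of a monomial basis of A_Q), and constants c₁, …, c_s ∈ ℂ, such that f ∘ φ⁻¹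 = Q + Σ_{j=1}^s c_j e_j. -/
/-!
A germ `f = Q + (terms of weight > d)` is brought to normal form in two stages.

*Formal stage.* In the ring of holomorphic germs let `wIdeal w coord k` be the ideal of germs of
weighted order at least `k`. If `f - (Q + P)` has weighted order at least `k > d`, its leading form
`h` of weight `k` is, modulo the Jacobian ideal of `Q`, a combination of the monomials of a fixed
family that is independent in the local algebra (`exists_monomial_family`); by homogeneity
`h = P' + ∑ bᵢ ∂ᵢQ` with `bᵢ` of weight `wᵢ + (k - d)` (`homogeneous_relation`). The substitution
`z ↦ z - b z` is biholomorphic, because its linear part is triangular with respect to the weights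
(`exists_triangular_biholo`), and it replaces `h` by `P'` up to weighted order `k + 1`
(`normalization_step`). Hence `f` can be brought to the form `Q + P + R` with `R` of arbitrarily
high weighted order (`exists_normalization`).

*Finite determinacy.* The Nullstellensatz shows that monomials of high weight lie in the Jacobian
ideal of `Q` (`exists_monomial_mem_jacobian`), and Nakayama's lemma transfers this to `g = Q + P`:
for a bound `N` that does not depend on `P`, `𝔪 ^ N` is contained in the Jacobian ideal `J(g)`
(`span_coord_pow_le_jacobian`). So a remainder `R` of sufficiently high order lies in `𝔪 J(g)²`,
and `tougeron`, an application of the inverse function theorem, provides a biholomorphism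
transforming `g` into `g + R`.

The condition on the Taylor series of `f - Q` is given through the behaviour of `f - Q` along the
weighted dilations; `mem_wIdeal_of_tendsto` turns it into membership in `wIdeal w coord (d + 1)`.
-/

open Filter Topology

/-- Wirtinger derivative ∂/∂z_j of a (complex-valued) function at `p`:
`(1/2)(∂F/∂x_j − i ∂F/∂y_j)`. -/
noncomputable def wirtZ {n : ℕ} (F : (Fin n → ℂ) → ℂ) (j : Fin n) (p : Fin n → ℂ) : ℂ :=
  (fderiv ℝ F p (Pi.single j 1) - Complex.I * fderiv ℝ F p (Pi.single j Complex.I)) / 2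

/-- Wirtinger derivative ∂/∂z̄_j of a (complex-valued) function at `p`:
`(1/2)(∂F/∂x_j + i ∂F/∂y_j)`. -/
noncomputable def wirtZbar {n : ℕ} (F : (Fin n → ℂ) → ℂ) (j : Fin n) (p : Fin n → ℂ) : ℂ :=
  (fderiv ℝ F p (Pi.single j 1) + Complex.I * fderiv ℝ F p (Pi.single j Complex.I)) / 2

/-- The germ `M = {F = 0}` at `0` is Levi-flat: for every point `p` of `M* = M \ Sing(M)`
near `0` and every `v` with `Σ_j F_{z_j}(p) v_j = 0` one has
`Σ_{i,j} F_{z_i z̄_j}(p) v_i conj(v_j) = 0`. -/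
def LeviFlatGerm {n : ℕ} (F : (Fin n → ℂ) → ℝ) : Prop :=
  ∀ᶠ p in 𝓝 (0 : Fin n → ℂ), F p = 0 → fderiv ℝ F p ≠ 0 →
    ∀ v : Fin n → ℂ,
      (∑ j, wirtZ (fun z => ((F z : ℝ) : ℂ)) j p * v j) = 0 →
      (∑ i, ∑ j, wirtZbar (wirtZ (fun z => ((F z : ℝ) : ℂ)) i) j p * v i * (starRingEnd ℂ) (v j)) = 0

/-- `F` is irreducible in the ring of germs at `0` of real-valued real-analytic functions:
in any factorization `F = g·h` one of the factors is a unit (i.e. does not vanish at `0`). -/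
def IrreducibleRGerm {n : ℕ} (F : (Fin n → ℂ) → ℝ) : Prop :=
  ∀ g h : (Fin n → ℂ) → ℝ, AnalyticAt ℝ g 0 → AnalyticAt ℝ h 0 →
    (∀ᶠ z in 𝓝 (0 : Fin n → ℂ), F z = g z * h z) → g 0 ≠ 0 ∨ h 0 ≠ 0

/-- `φ` is a germ of biholomorphism `(ℂⁿ,0) → (ℂⁿ,0)` with local inverse `ι`. -/
def IsGermBiholo {n : ℕ} (φ ι : (Fin n → ℂ) → (Fin n → ℂ)) : Prop :=
  AnalyticAt ℂ φ 0 ∧ AnalyticAt ℂ ι 0 ∧ φ 0 = 0 ∧ ι 0 = 0 ∧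
  (∀ᶠ z in 𝓝 (0 : Fin n → ℂ), ι (φ z) = z) ∧ (∀ᶠ z in 𝓝 (0 : Fin n → ℂ), φ (ι z) = z)

/-- `φ` is volume-preserving (isochore): the determinant of its complex Jacobian is
identically `1` near `0`. -/
def IsVolumePreserving {n : ℕ} (φ : (Fin n → ℂ) → (Fin n → ℂ)) : Prop :=
  ∀ᶠ z in 𝓝 (0 : Fin n → ℂ), LinearMap.det ((fderiv ℂ φ z).toLinearMap) = 1

/-- `ψ` is a germ of automorphism of `(ℂ,0)`. -/
def IsGermAuto (ψ : ℂ → ℂ) : Prop :=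
  AnalyticAt ℂ ψ 0 ∧ ψ 0 = 0 ∧ deriv ψ 0 ≠ 0


/-! ### The weighted filtration of an algebra -/

section Filtration

open MvPolynomial

variable {n : ℕ} {A : Type*} [CommRing A] [Algebra ℂ A]

/-- The ideal of elements of weighted order at least `k`: it is generated by the monomials in
the elements `x i` whose weighted degree is at least `k`, where `x i` has weight `w i`. -/
noncomputable def wIdeal (w : Fin n → ℕ) (x : Fin n → A) (k : ℕ) : Ideal A :=
  Ideal.span {a | ∃ m : Fin n →₀ ℕ, k ≤ Finsupp.weight w m ∧ a = aeval x (monomial m (1 : ℂ))}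

lemma wIdeal_anti (w : Fin n → ℕ) (x : Fin n → A) {j k : ℕ} (h : j ≤ k) :
    wIdeal w x k ≤ wIdeal w x j := by
  apply Ideal.span_mono
  rintro a ⟨m, hm, rfl⟩
  exact ⟨m, h.trans hm, rfl⟩

lemma monomial_mem_wIdeal (w : Fin n → ℕ) (x : Fin n → A) (k : ℕ) (m : Fin n →₀ ℕ)
    (h : k ≤ Finsupp.weight w m) : aeval x (monomial m (1 : ℂ)) ∈ wIdeal w x k :=
  Ideal.subset_span ⟨m, h, rfl⟩

lemma wIdeal_mul_le (w : Fin n → ℕ) (x : Fin n → A) (j k : ℕ) :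
    wIdeal w x j * wIdeal w x k ≤ wIdeal w x (j + k) := by
  rw [wIdeal, wIdeal, Ideal.span_mul_span', Ideal.span_le]
  rintro _ ⟨a, ⟨m, hm, rfl⟩, b, ⟨m', hm', rfl⟩, rfl⟩
  simp only [SetLike.mem_coe]
  rw [← map_mul, monomial_mul, mul_one]
  apply monomial_mem_wIdeal
  rw [map_add]
  exact add_le_add hm hm'

lemma mul_mem_wIdeal {w : Fin n → ℕ} {x : Fin n → A} {j k l : ℕ} {a b : A}
    (ha : a ∈ wIdeal w x j) (hb : b ∈ wIdeal w x k) (h : l ≤ j + k) : a * b ∈ wIdeal w x l :=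
  wIdeal_anti w x h (wIdeal_mul_le w x j k (Ideal.mul_mem_mul ha hb))

lemma aeval_eq_sum (x : Fin n → A) (p : MvPolynomial (Fin n) ℂ) :
    aeval x p = ∑ m ∈ p.support, algebraMap ℂ A (p.coeff m) * aeval x (monomial m (1 : ℂ)) := by
  conv_lhs => rw [p.as_sum]
  rw [map_sum]
  refine Finset.sum_congr rfl fun m _ => ?_
  simp [aeval_monomial]

lemma aeval_mem_wIdeal {w : Fin n → ℕ} (x : Fin n → A) {k : ℕ} {p : MvPolynomial (Fin n) ℂ}
    (h : ∀ m ∈ p.support, k ≤ Finsupp.weight w m) : aeval x p ∈ wIdeal w x k := by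
  rw [aeval_eq_sum]
  exact Ideal.sum_mem _ fun m hm => Ideal.mul_mem_left _ _ (monomial_mem_wIdeal w x k m (h m hm))

lemma X_mem_wIdeal (w : Fin n → ℕ) (x : Fin n → A) (i : Fin n) : x i ∈ wIdeal w x (w i) := by
  have := monomial_mem_wIdeal w x (w i) (Finsupp.single i 1) (by simp [Finsupp.weight_single])
  simpa [aeval_monomial] using this

lemma finsupp_add_single_induction {P : (Fin n →₀ ℕ) → Prop} (m : Fin n →₀ ℕ) (h0 : P 0)
    (h1 : ∀ m i, P m → P (m + Finsupp.single i 1)) : P m := by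
  induction m using Finsupp.induction with
  | zero => exact h0
  | single_add i e m _ _ ih =>
    clear * - ih h1
    induction e with
    | zero => simpa using ih
    | succ e ih2 =>
      have := h1 _ i ih2
      rwa [add_assoc, add_comm m, ← add_assoc, ← Finsupp.single_add] at this

/-- A substitution which does not decrease the weights of the variables does not decrease the
weighted order of a monomial. -/
lemma aeval_monomial_mem_wIdeal {w : Fin n → ℕ} {x y : Fin n → A}
    (hy : ∀ i, y i ∈ wIdeal w x (w i)) (m : Fin n →₀ ℕ) :
    aeval y (monomial m (1 : ℂ)) ∈ wIdeal w x (Finsupp.weight w m) := by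
  induction m using finsupp_add_single_induction with
  | h0 => simpa using aeval_mem_wIdeal (w := w) x (k := 0) (p := 1) (by simp)
  | h1 m i ih =>
    rw [monomial_add_single, pow_one, map_mul, aeval_X]
    exact mul_mem_wIdeal ih (hy i) (by simp [Finsupp.weight_single])

lemma algHom_aeval (σ : A →ₐ[ℂ] A) (x : Fin n → A) (p : MvPolynomial (Fin n) ℂ) :
    σ (aeval x p) = aeval (fun i => σ (x i)) p := by
  rw [comp_aeval_apply]

lemma algHom_mem_wIdeal {w : Fin n → ℕ} {x : Fin n → A} (σ : A →ₐ[ℂ] A)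
    (hσ : ∀ i, σ (x i) ∈ wIdeal w x (w i)) {k : ℕ} {a : A} (ha : a ∈ wIdeal w x k) :
    σ a ∈ wIdeal w x k := by
  have : wIdeal w x k ≤ (wIdeal w x k).comap σ := by
    conv_lhs => rw [wIdeal]
    rw [Ideal.span_le]
    rintro _ ⟨m, hm, rfl⟩
    simp only [SetLike.mem_coe, Ideal.mem_comap]
    rw [algHom_aeval]
    exact wIdeal_anti w x hm (aeval_monomial_mem_wIdeal hσ m)
  exact this ha

/-- First and second order Taylor estimates for a monomial under a substitution `x ↦ x + u`
raising the weights by at least `a`. -/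
lemma taylor_monomial {w : Fin n → ℕ} {x u : Fin n → A} {a : ℕ}
    (hu : ∀ i, u i ∈ wIdeal w x (w i + a)) (m : Fin n →₀ ℕ) :
    aeval (x + u) (monomial m (1 : ℂ)) - aeval x (monomial m (1 : ℂ))
        ∈ wIdeal w x (Finsupp.weight w m + a) ∧
    aeval (x + u) (monomial m (1 : ℂ)) - aeval x (monomial m (1 : ℂ))
        - ∑ i, u i * aeval x (pderiv i (monomial m (1 : ℂ)))
        ∈ wIdeal w x (Finsupp.weight w m + 2 * a) := by
  induction m using finsupp_add_single_induction with
  | h0 =>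
    have h1 : monomial (0 : Fin n →₀ ℕ) (1 : ℂ) = 1 := rfl
    simp [h1]
  | h1 m k ih =>
    obtain ⟨ih1, ih2⟩ := ih
    have hm := monomial_mem_wIdeal w x _ m le_rfl
    have hx := X_mem_wIdeal w x k
    have hw : Finsupp.weight w (m + Finsupp.single k 1) = Finsupp.weight w m + w k := by
      simp [Finsupp.weight_single]
    rw [hw, monomial_add_single, pow_one]
    simp only [map_mul, aeval_X, Pi.add_apply, pderiv_mul, pderiv_X, map_add]
    set p := monomial m (1 : ℂ)
    have hs : ∑ i, u i * (aeval x (pderiv i p) * x k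
        + aeval x p * aeval x (Pi.single (M := fun _ => MvPolynomial (Fin n) ℂ) i 1 k))
        = (∑ i, u i * aeval x (pderiv i p)) * x k + aeval x p * u k := by
      simp only [mul_add, Finset.sum_add_distrib, Finset.sum_mul]
      congr 1
      · exact Finset.sum_congr rfl fun i _ => by ring
      · rw [Finset.sum_eq_single k]
        · simp [mul_comm]
        · intro i _ hi
          simp [Pi.single_eq_of_ne (Ne.symm hi)]
        · simp
    constructor
    · have : aeval (x + u) p * (x k + u k) - aeval x p * x k
          = (aeval (x + u) p - aeval x p) * x k + (aeval (x + u) p - aeval x p) * u k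
            + aeval x p * u k := by ring
      rw [this]
      refine Ideal.add_mem _ (Ideal.add_mem _ ?_ ?_) ?_
      · exact mul_mem_wIdeal ih1 hx (by omega)
      · exact mul_mem_wIdeal ih1 (hu k) (by omega)
      · exact mul_mem_wIdeal hm (hu k) (by omega)
    · rw [hs]
      have : aeval (x + u) p * (x k + u k) - aeval x p * x k
          - ((∑ i, u i * aeval x (pderiv i p)) * x k + aeval x p * u k)
          = (aeval (x + u) p - aeval x p - ∑ i, u i * aeval x (pderiv i p)) * x k
            + (aeval (x + u) p - aeval x p) * u k := by ring
      rw [this]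
      refine Ideal.add_mem _ ?_ ?_
      · exact mul_mem_wIdeal ih2 hx (by omega)
      · exact mul_mem_wIdeal ih1 (hu k) (by omega)

lemma taylor_first {w : Fin n → ℕ} {x u : Fin n → A} {a D : ℕ}
    (hu : ∀ i, u i ∈ wIdeal w x (w i + a)) {p : MvPolynomial (Fin n) ℂ}
    (hp : ∀ m ∈ p.support, D ≤ Finsupp.weight w m) :
    aeval (x + u) p - aeval x p ∈ wIdeal w x (D + a) := by
  rw [aeval_eq_sum, aeval_eq_sum x, ← Finset.sum_sub_distrib]
  refine Ideal.sum_mem _ fun m hm => ?_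
  rw [← mul_sub]
  exact Ideal.mul_mem_left _ _
    (wIdeal_anti w x (Nat.add_le_add_right (hp m hm) _) (taylor_monomial hu m).1)

lemma taylor_second {w : Fin n → ℕ} {x u : Fin n → A} {a D : ℕ}
    (hu : ∀ i, u i ∈ wIdeal w x (w i + a)) {p : MvPolynomial (Fin n) ℂ}
    (hp : ∀ m ∈ p.support, D ≤ Finsupp.weight w m) :
    aeval (x + u) p - aeval x p - ∑ i, u i * aeval x (pderiv i p) ∈ wIdeal w x (D + 2 * a) := by
  have hd : ∀ i, aeval x (pderiv i p) = ∑ m ∈ p.support,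
      algebraMap ℂ A (p.coeff m) * aeval x (pderiv i (monomial m (1 : ℂ))) := by
    intro i
    conv_lhs => rw [p.as_sum]
    rw [map_sum, map_sum]
    refine Finset.sum_congr rfl fun m _ => ?_
    rw [← mul_one (p.coeff m), ← C_mul_monomial, pderiv_C_mul]
    simp
  have hs : ∑ i, u i * aeval x (pderiv i p) = ∑ m ∈ p.support, algebraMap ℂ A (p.coeff m) *
      ∑ i, u i * aeval x (pderiv i (monomial m (1 : ℂ))) := by
    simp only [hd, Finset.mul_sum]
    rw [Finset.sum_comm]
    exact Finset.sum_congr rfl fun m _ => Finset.sum_congr rfl fun i _ => by ring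
  rw [hs, aeval_eq_sum, aeval_eq_sum x, ← Finset.sum_sub_distrib, ← Finset.sum_sub_distrib]
  refine Ideal.sum_mem _ fun m hm => ?_
  rw [← mul_sub, ← mul_sub]
  exact Ideal.mul_mem_left _ _
    (wIdeal_anti w x (Nat.add_le_add_right (hp m hm) _) (taylor_monomial hu m).2)

lemma span_pow_le_wIdeal {w : Fin n → ℕ} (hw : ∀ i, 0 < w i) (x : Fin n → A) (k : ℕ) :
    Ideal.span (Set.range x) ^ k ≤ wIdeal w x k := by
  induction k with
  | zero =>
    rw [(Ideal.eq_top_iff_one (wIdeal w x 0)).2]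
    · exact le_top
    · simpa using aeval_mem_wIdeal (w := w) x (k := 0) (p := 1) (by simp)
  | succ k ih =>
    rw [pow_succ]
    refine (Ideal.mul_mono ih ?_).trans (wIdeal_mul_le w x k 1)
    rw [Ideal.span_le]
    rintro _ ⟨i, rfl⟩
    exact wIdeal_anti w x (hw i) (X_mem_wIdeal w x i)

lemma monomial_mem_span_pow (x : Fin n → A) (m : Fin n →₀ ℕ) :
    aeval x (monomial m (1 : ℂ)) ∈ Ideal.span (Set.range x) ^ (∑ i, m i) := by
  induction m using finsupp_add_single_induction with
  | h0 => simp
  | h1 m i ih =>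
    rw [monomial_add_single, pow_one, map_mul, aeval_X]
    have : ∑ j, (m + Finsupp.single i 1 : Fin n →₀ ℕ) j = (∑ j, m j) + 1 := by
      simp [Finset.sum_add_distrib, Finsupp.single_apply]
    rw [this, pow_succ]
    exact Ideal.mul_mem_mul ih (Ideal.subset_span ⟨i, rfl⟩)

lemma weight_le_mul_degree {w : Fin n → ℕ} {W : ℕ} (hW : ∀ i, w i ≤ W) (m : Fin n →₀ ℕ) :
    Finsupp.weight w m ≤ W * ∑ i, m i := by
  rw [Finsupp.weight_apply, Finsupp.sum_fintype _ _ (by simp), Finset.mul_sum]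
  refine Finset.sum_le_sum fun i _ => ?_
  rw [smul_eq_mul, mul_comm]
  exact Nat.mul_le_mul_right _ (hW i)

lemma wIdeal_le_span_pow {w : Fin n → ℕ} {W : ℕ} (hW : ∀ i, w i ≤ W) (hW0 : 0 < W)
    (x : Fin n → A) (k : ℕ) :
    wIdeal w x (W * k) ≤ Ideal.span (Set.range x) ^ k := by
  rw [wIdeal, Ideal.span_le]
  rintro _ ⟨m, hm, rfl⟩
  have := Nat.le_of_mul_le_mul_left (hm.trans (weight_le_mul_degree hW m)) hW0
  exact Ideal.pow_le_pow_right this (monomial_mem_span_pow x m)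

end Filtration

/-! ### The Jacobian ideal of the principal part -/

section Jacobian

open MvPolynomial

variable {n : ℕ}

lemma weight_eq_sum (w : Fin n → ℕ) (m : Fin n →₀ ℕ) :
    Finsupp.weight w m = ∑ i, w i * m i := by
  rw [Finsupp.weight_apply, Finsupp.sum_fintype _ _ (by simp)]
  exact Finset.sum_congr rfl fun i _ => by rw [smul_eq_mul, mul_comm]

lemma eval_weighted_scale {w : Fin n → ℕ} {p : MvPolynomial (Fin n) ℂ} {k : ℕ}
    (hp : IsWeightedHomogeneous w p k) (t : ℂ) (z : Fin n → ℂ) :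
    eval (fun i => t ^ w i * z i) p = t ^ k * eval z p := by
  rw [eval_eq', eval_eq', Finset.mul_sum]
  refine Finset.sum_congr rfl fun m hm => ?_
  have hk : Finsupp.weight w m = k := hp (mem_support_iff.1 hm)
  rw [weight_eq_sum] at hk
  simp only [mul_pow, Finset.prod_mul_distrib, ← pow_mul]
  rw [Finset.prod_pow_eq_pow_sum, hk]
  ring

/-- The orbit of any point under the weighted dilations by `t ≠ 0` meets every neighbourhood of the
origin. -/
lemma exists_scale_mem {w : Fin n → ℕ} (hw : ∀ i, 0 < w i) {s : Set (Fin n → ℂ)}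
    (hs : s ∈ 𝓝 (0 : Fin n → ℂ)) (z : Fin n → ℂ) :
    ∃ t : ℂ, t ≠ 0 ∧ (fun i => t ^ w i * z i) ∈ s := by
  have hc : Tendsto (fun t : ℂ => fun i => t ^ w i * z i) (𝓝 0) (𝓝 (0 : Fin n → ℂ)) := by
    have : Continuous (fun t : ℂ => fun i => t ^ w i * z i) := by fun_prop
    have h0 := this.tendsto 0
    convert h0 using 2
    ext i
    simp [(hw i).ne']
  have h1 := (hc.mono_left nhdsWithin_le_nhds : Tendsto _ (𝓝[≠] (0 : ℂ)) _) hs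
  have h2 : ∀ᶠ t : ℂ in 𝓝[≠] 0, t ≠ 0 := eventually_mem_nhdsWithin
  obtain ⟨t, ht⟩ := (h2.and h1).exists
  exact ⟨t, ht.1, ht.2⟩

lemma isWeightedHomogeneous_pderiv {w : Fin n → ℕ} {p : MvPolynomial (Fin n) ℂ} {d : ℕ}
    (hp : IsWeightedHomogeneous w p d) (i : Fin n) :
    IsWeightedHomogeneous w (pderiv i p) (d - w i) := by
  intro m hm
  rw [coeff_pderiv] at hm
  have := hp (left_ne_zero_of_mul hm)
  simp only [map_add, Finsupp.weight_single, one_smul] at this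
  omega

/-- A variable of weight larger than `d` cannot occur in `Q`, so its axis would consist of
critical points. -/
lemma weight_le_degree {w : Fin n → ℕ} (hw : ∀ i, 0 < w i) {d : ℕ}
    {Q : MvPolynomial (Fin n) ℂ} (hQ : IsWeightedHomogeneous w Q d)
    (hQcrit : ∀ i, eval (0 : Fin n → ℂ) (pderiv i Q) = 0)
    (hQsing : ∀ᶠ z in 𝓝 (0 : Fin n → ℂ), (∀ i, eval z (pderiv i Q) = 0) → z = 0)
    (i : Fin n) : w i ≤ d := by
  by_contra! hlt
  obtain ⟨t, ht, hmem⟩ := exists_scale_mem hw hQsing (Pi.single i 1)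
  have hz := congrFun (hmem fun j => ?_) i
  · simp [ht] at hz
  rw [eval_weighted_scale (isWeightedHomogeneous_pderiv hQ j)]
  suffices eval (Pi.single i 1) (pderiv j Q) = eval 0 (pderiv j Q) by rw [this, hQcrit, mul_zero]
  rw [eval_eq', eval_eq']
  refine Finset.sum_congr rfl fun m hm => ?_
  congr 1
  have h1 : Finsupp.weight w m = d - w j := isWeightedHomogeneous_pderiv hQ j (mem_support_iff.1 hm)
  have h2 : m i = 0 := by
    by_contra h0
    have h3 : w i * m i ≤ ∑ k, w k * m k :=
      Finset.single_le_sum (f := fun k => w k * m k) (by simp) (Finset.mem_univ i)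
    rw [← weight_eq_sum] at h3
    have := Nat.le_mul_of_pos_right (w i) (Nat.pos_of_ne_zero h0)
    omega
  refine Finset.prod_congr rfl fun k _ => ?_
  by_cases hk : k = i
  · subst hk; simp [h2]
  · simp [Pi.single_eq_of_ne hk]

/-- By the Nullstellensatz the local algebra of `Q` is finite: the weighted dilations spread
the isolatedness of the critical point over the whole of `ℂⁿ`. -/
lemma exists_monomial_mem_jacobian {w : Fin n → ℕ} (hw : ∀ i, 0 < w i) {d : ℕ}
    {Q : MvPolynomial (Fin n) ℂ} (hQ : IsWeightedHomogeneous w Q d)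
    (hQsing : ∀ᶠ z in 𝓝 (0 : Fin n → ℂ), (∀ i, eval z (pderiv i Q) = 0) → z = 0) :
    ∃ N : ℕ, ∀ m : Fin n →₀ ℕ, N ≤ Finsupp.weight w m →
      monomial m (1 : ℂ) ∈ Ideal.span (Set.range fun i => pderiv i Q) := by
  set J := Ideal.span (Set.range fun i => pderiv i Q) with hJ
  have hloc : ∀ z ∈ zeroLocus ℂ J, z = 0 := by
    intro z hz
    obtain ⟨t, ht, hmem⟩ := exists_scale_mem hw hQsing z
    have h0 := hmem fun i => by
      rw [eval_weighted_scale (isWeightedHomogeneous_pderiv hQ i)]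
      have : eval z (pderiv i Q) = 0 := hz (pderiv i Q) (Ideal.subset_span ⟨i, rfl⟩)
      simp [this]
    ext i
    have := congrFun h0 i
    simpa [ht] using this
  have hrad : Ideal.span (Set.range (X : Fin n → MvPolynomial (Fin n) ℂ)) ≤ J.radical := by
    rw [← vanishingIdeal_zeroLocus_eq_radical (K := ℂ), Ideal.span_le]
    rintro _ ⟨i, rfl⟩
    simp only [SetLike.mem_coe, mem_vanishingIdeal_iff]
    intro z hz
    simp [hloc z hz]
  obtain ⟨r, hr⟩ := Ideal.exists_pow_le_of_le_radical_of_fg hrad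
    (Submodule.fg_span (Set.finite_range _))
  set W := ∑ i, w i + 1
  have hW : ∀ i, w i ≤ W := fun i =>
    (Finset.single_le_sum (f := w) (by simp) (Finset.mem_univ i)).trans (Nat.le_succ _)
  refine ⟨W * r, fun m hm => hr ?_⟩
  have h1 := monomial_mem_wIdeal w (X : Fin n → MvPolynomial (Fin n) ℂ) (W * r) m hm
  have h2 := wIdeal_le_span_pow hW (Nat.succ_pos _) _ _ h1
  rwa [aeval_X_left_apply] at h2

lemma weightedHomogeneousComponent_mul_right {w : Fin n → ℕ} {q : MvPolynomial (Fin n) ℂ} {e : ℕ}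
    (hq : IsWeightedHomogeneous w q e) (k : ℕ) (b : MvPolynomial (Fin n) ℂ) :
    weightedHomogeneousComponent w (k + e) (b * q) = weightedHomogeneousComponent w k b * q := by
  induction b using MvPolynomial.induction_on' with
  | add p q hp hq => rw [add_mul, map_add, hp, hq, map_add, add_mul]
  | monomial u a =>
    have h1 : IsWeightedHomogeneous w (monomial u a) (Finsupp.weight w u) :=
      isWeightedHomogeneous_monomial w u a rfl
    by_cases hk : Finsupp.weight w u = k
    · subst hk
      rw [(h1.mul hq).weightedHomogeneousComponent_same, h1.weightedHomogeneousComponent_same]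
    · rw [(h1.mul hq).weightedHomogeneousComponent_ne, h1.weightedHomogeneousComponent_ne, zero_mul]
      · exact Ne.symm hk
      · omega

/-- The weighted homogeneous part of a relation modulo the Jacobian ideal. -/
lemma homogeneous_relation {w : Fin n → ℕ} {d k : ℕ} {Q : MvPolynomial (Fin n) ℂ}
    (hQ : IsWeightedHomogeneous w Q d) (hwd : ∀ i, w i ≤ d) (hk : d ≤ k)
    {p P : MvPolynomial (Fin n) ℂ} (hp : IsWeightedHomogeneous w p k)
    (h : p - P ∈ Ideal.span (Set.range fun i => pderiv i Q)) :
    ∃ b : Fin n → MvPolynomial (Fin n) ℂ, (∀ i, IsWeightedHomogeneous w (b i) (w i + (k - d))) ∧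
      p = weightedHomogeneousComponent w k P + ∑ i, b i * pderiv i Q := by
  rw [Ideal.mem_span_range_iff_exists_fun] at h
  obtain ⟨c, hc⟩ := h
  refine ⟨fun i => weightedHomogeneousComponent w (w i + (k - d)) (c i),
    fun i => weightedHomogeneousComponent_isWeightedHomogeneous _ _, ?_⟩
  have h2 := congrArg (weightedHomogeneousComponent w k) hc
  rw [map_sub, hp.weightedHomogeneousComponent_same, map_sum] at h2
  rw [← sub_eq_iff_eq_add', ← h2]
  refine Finset.sum_congr rfl fun i _ => ?_
  rw [← weightedHomogeneousComponent_mul_right (isWeightedHomogeneous_pderiv hQ i)]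
  congr 2
  have := hwd i
  omega

/-- Components of combinations of monomials `monomial (a j) 1` are again such combinations. -/
lemma component_mem_span {w : Fin n → ℕ} {κ : Type*} (a : κ → (Fin n →₀ ℕ)) (k : ℕ)
    {P : MvPolynomial (Fin n) ℂ}
    (hP : P ∈ Submodule.span ℂ (Set.range fun j => monomial (a j) (1 : ℂ))) :
    weightedHomogeneousComponent w k P
      ∈ Submodule.span ℂ (Set.range fun j => monomial (a j) (1 : ℂ)) := by
  have : Submodule.span ℂ (Set.range fun j => monomial (a j) (1 : ℂ)) ≤
      (Submodule.span ℂ (Set.range fun j => monomial (a j) (1 : ℂ))).comap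
        (weightedHomogeneousComponent w k) := by
    rw [Submodule.span_le]
    rintro _ ⟨j, rfl⟩
    have h1 : IsWeightedHomogeneous w (monomial (a j) (1 : ℂ)) (Finsupp.weight w (a j)) :=
      isWeightedHomogeneous_monomial w _ _ rfl
    simp only [SetLike.mem_coe, Submodule.mem_comap]
    by_cases hk : Finsupp.weight w (a j) = k
    · subst hk
      rw [h1.weightedHomogeneousComponent_same]
      exact Submodule.subset_span ⟨j, rfl⟩
    · rw [h1.weightedHomogeneousComponent_ne _ (Ne.symm hk)]
      exact zero_mem _
  exact this hP

/-- A family of monomials of weighted degree greater than `d`, linearly independent modulo `J`,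
to which every polynomial with terms of weighted degree greater than `d` can be reduced. -/
lemma exists_monomial_family (w : Fin n → ℕ) (d : ℕ) (J : Ideal (MvPolynomial (Fin n) ℂ)) :
    ∃ (κ : Type) (a : κ → (Fin n →₀ ℕ)), (∀ j, d < Finsupp.weight w (a j)) ∧
      LinearIndependent ℂ (fun j => Ideal.Quotient.mk J (monomial (a j) (1 : ℂ))) ∧
      ∀ p : MvPolynomial (Fin n) ℂ, (∀ m ∈ p.support, d < Finsupp.weight w m) →
        ∃ P ∈ Submodule.span ℂ (Set.range fun j => monomial (a j) (1 : ℂ)), p - P ∈ J := by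
  let v : {m : Fin n →₀ ℕ // d < Finsupp.weight w m} → MvPolynomial (Fin n) ℂ ⧸ J :=
    fun m => Ideal.Quotient.mkₐ ℂ J (monomial m.1 (1 : ℂ))
  obtain ⟨κ, a, -, hspan, hli⟩ := exists_linearIndependent' ℂ v
  refine ⟨κ, fun j => (a j).1, fun j => (a j).2, hli, fun p hp => ?_⟩
  have h1 : Ideal.Quotient.mkₐ ℂ J p ∈ Submodule.span ℂ (Set.range (v ∘ a)) := by
    rw [hspan, p.as_sum, map_sum]
    refine Submodule.sum_mem _ fun m hm => ?_
    have : monomial m (p.coeff m) = p.coeff m • monomial m (1 : ℂ) := by simp [smul_monomial]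
    rw [this, map_smul]
    exact Submodule.smul_mem _ _ (Submodule.subset_span ⟨⟨m, hp m hm⟩, rfl⟩)
  have h2 : Set.range (v ∘ a) = (Ideal.Quotient.mkₐ ℂ J).toLinearMap ''
      (Set.range fun j => monomial (a j).1 (1 : ℂ)) := by
    rw [← Set.range_comp]; rfl
  rw [h2, Submodule.span_image] at h1
  obtain ⟨P, hP, hPp⟩ := h1
  refine ⟨P, hP, ?_⟩
  rw [← Ideal.Quotient.eq]
  exact hPp.symm

end Jacobian

/-! ### Germs of holomorphic functions -/

section Germs

open MvPolynomial

/-- Hadamard's lemma: an analytic function is its value at `0` plus an analytic family of linear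
forms applied to the variable. -/
lemma hadamard {E : Type*} [NormedAddCommGroup E] [NormedSpace ℂ E] {f : E → ℂ}
    (hf : AnalyticAt ℂ f 0) :
    ∃ G : E → (E →L[ℂ] ℂ), AnalyticAt ℂ G 0 ∧ ∀ᶠ z in 𝓝 (0 : E), f z = f 0 + G z z := by
  obtain ⟨p, r, hp⟩ := hf
  have hrad : 0 < p.shift.radius := by
    rw [FormalMultilinearSeries.radius_shift]; exact hp.r_pos.trans_le hp.r_le
  have hG := p.shift.hasFPowerSeriesOnBall hrad
  have hU := hG.unshift (z := f 0)
  have hpp : p.shift.unshift (f 0) = p := by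
    ext k v
    cases k with
    | zero =>
      simp only [FormalMultilinearSeries.unshift]
      rw [← hp.coeff_zero v]
      rfl
    | succ k =>
      simp [FormalMultilinearSeries.unshift, FormalMultilinearSeries.shift]
  rw [hpp] at hU
  refine ⟨p.shift.sum, hG.analyticAt, ?_⟩
  have h1 := hp.mono (r' := min r p.shift.radius) (lt_min hp.r_pos hrad) (min_le_left _ _)
  have h2 := hU.mono (r' := min r p.shift.radius) (lt_min hp.r_pos hrad) (min_le_right _ _)
  have := h1.unique h2
  filter_upwards [Metric.eball_mem_nhds (0 : E) (lt_min hp.r_pos hrad)] with z hz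
  simpa using this hz

/-- The algebra of functions `ℂⁿ → ℂ` analytic at `0`. -/
def holFun (n : ℕ) : Subalgebra ℂ ((Fin n → ℂ) → ℂ) where
  carrier := {f | AnalyticAt ℂ f 0}
  mul_mem' ha hb := AnalyticAt.mul ha hb
  add_mem' ha hb := AnalyticAt.add ha hb
  algebraMap_mem' _ := analyticAt_const

/-- The ideal of functions vanishing identically near `0`. -/
def nullIdeal (n : ℕ) : Ideal (holFun n) where
  carrier := {f | ∀ᶠ z in 𝓝 (0 : Fin n → ℂ), f.1 z = 0}
  add_mem' {a b} ha hb := by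
    filter_upwards [ha, hb] with z h1 h2
    simp [h1, h2]
  zero_mem' := by simp
  smul_mem' c x hx := by
    filter_upwards [hx] with z h1
    simp [h1]

/-- The ring of germs at `0` of holomorphic functions on `ℂⁿ`. -/
def HolGerm (n : ℕ) : Type := holFun n ⧸ nullIdeal n

noncomputable instance (n : ℕ) : CommRing (HolGerm n) :=
  inferInstanceAs (CommRing (holFun n ⧸ nullIdeal n))

noncomputable instance (n : ℕ) : Algebra ℂ (HolGerm n) :=
  inferInstanceAs (Algebra ℂ (holFun n ⧸ nullIdeal n))

variable {n : ℕ}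

/-- The germ at `0` of a function analytic at `0`. -/
def germ (f : (Fin n → ℂ) → ℂ) (hf : AnalyticAt ℂ f 0) : HolGerm n :=
  Ideal.Quotient.mk (nullIdeal n) ⟨f, hf⟩

lemma germ_surj (a : HolGerm n) : ∃ f hf, a = germ f hf := by
  obtain ⟨⟨f, hf⟩, rfl⟩ := Ideal.Quotient.mk_surjective a
  exact ⟨f, hf, rfl⟩

lemma germ_eq_iff {f g : (Fin n → ℂ) → ℂ} {hf : AnalyticAt ℂ f 0} {hg : AnalyticAt ℂ g 0} :
    germ f hf = germ g hg ↔ ∀ᶠ z in 𝓝 0, f z = g z := by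
  refine (Ideal.Quotient.eq (I := nullIdeal n)).trans ?_
  change (∀ᶠ z in 𝓝 0, f z - g z = 0) ↔ _
  simp only [sub_eq_zero]

lemma germ_add {f g : (Fin n → ℂ) → ℂ} (hf : AnalyticAt ℂ f 0) (hg : AnalyticAt ℂ g 0) :
    germ f hf + germ g hg = germ (fun z => f z + g z) (hf.add hg) := rfl

lemma germ_sub {f g : (Fin n → ℂ) → ℂ} (hf : AnalyticAt ℂ f 0) (hg : AnalyticAt ℂ g 0) :
    germ f hf - germ g hg = germ (fun z => f z - g z) (hf.sub hg) := rfl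

lemma germ_mul {f g : (Fin n → ℂ) → ℂ} (hf : AnalyticAt ℂ f 0) (hg : AnalyticAt ℂ g 0) :
    germ f hf * germ g hg = germ (fun z => f z * g z) (hf.mul hg) := rfl

lemma algebraMap_germ (c : ℂ) : algebraMap ℂ (HolGerm n) c = germ (fun _ => c) analyticAt_const :=
  rfl

lemma germ_sum {ι : Type*} (s : Finset ι) (f : ι → (Fin n → ℂ) → ℂ)
    (hf : ∀ i, AnalyticAt ℂ (f i) 0) :
    ∑ i ∈ s, germ (f i) (hf i) = germ (fun z => ∑ i ∈ s, f i z)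
      (Finset.analyticAt_fun_sum s fun i _ => hf i) := by
  classical
  induction s using Finset.induction_on with
  | empty => simp only [Finset.sum_empty]; rfl
  | insert i s hi ih =>
    simp only [Finset.sum_insert hi]
    rw [ih, germ_add]

lemma analyticAt_coord (i : Fin n) (z : Fin n → ℂ) : AnalyticAt ℂ (fun z : Fin n → ℂ => z i) z :=
  (ContinuousLinearMap.proj (R := ℂ) (φ := fun _ : Fin n => ℂ) i).analyticAt z

/-- The coordinate germs. -/
def coord (i : Fin n) : HolGerm n :=
  germ (fun z => z i) (analyticAt_coord i 0)

lemma analyticAt_eval_comp {E : Type*} [NormedAddCommGroup E] [NormedSpace ℂ E]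
    {ψ : E → Fin n → ℂ} {z : E} (hψ : ∀ i, AnalyticAt ℂ (fun z => ψ z i) z)
    (p : MvPolynomial (Fin n) ℂ) : AnalyticAt ℂ (fun z => eval (ψ z) p) z :=
  AnalyticAt.aeval_mvPolynomial hψ p

lemma aeval_germ {ψ : (Fin n → ℂ) → Fin n → ℂ} (hψ : ∀ i, AnalyticAt ℂ (fun z => ψ z i) 0)
    (p : MvPolynomial (Fin n) ℂ) :
    aeval (fun i => germ (fun z => ψ z i) (hψ i)) p
      = germ (fun z => eval (ψ z) p) (analyticAt_eval_comp hψ p) := by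
  induction p using MvPolynomial.induction_on with
  | C a => simp only [aeval_C, eval_C]; rfl
  | add p q hp hq => simp only [map_add, hp, hq, germ_add]
  | mul_X p i hp => simp only [map_mul, hp, aeval_X, eval_X, germ_mul]

lemma aeval_coord (p : MvPolynomial (Fin n) ℂ) :
    aeval coord p = germ (fun z => eval z p)
      (analyticAt_eval_comp (fun i => analyticAt_coord i 0) p) :=
  aeval_germ (fun i => analyticAt_coord i 0) p

/-- A germ vanishing at `0` lies in the ideal generated by the coordinates. -/
lemma germ_mem_span_coord {f : (Fin n → ℂ) → ℂ} (hf : AnalyticAt ℂ f 0) (h0 : f 0 = 0) :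
    germ f hf ∈ Ideal.span (Set.range (coord : Fin n → HolGerm n)) := by
  obtain ⟨G, hG, hfG⟩ := hadamard hf
  have hGi : ∀ i : Fin n, AnalyticAt ℂ (fun z => G z (Pi.single i 1)) 0 := fun i =>
    (ContinuousLinearMap.apply ℂ ℂ (Pi.single i 1 : Fin n → ℂ)).analyticAt _ |>.comp hG
  have : germ f hf = ∑ i, germ _ (hGi i) * coord i := by
    simp only [coord, germ_mul]
    rw [germ_sum Finset.univ (fun i z => G z (Pi.single i 1) * z i), germ_eq_iff]
    filter_upwards [hfG] with z hz
    rw [hz, h0, zero_add]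
    have hz' : z = ∑ i, z i • (Pi.single i 1 : Fin n → ℂ) := pi_eq_sum_univ' z
    generalize G z = L
    conv_lhs => rw [hz']
    rw [map_sum]
    exact Finset.sum_congr rfl fun i _ => by rw [map_smul, smul_eq_mul, mul_comm]
  rw [this]
  exact Ideal.sum_mem _ fun i _ => Ideal.mul_mem_left _ _ (Ideal.subset_span ⟨i, rfl⟩)

/-- Evaluation of germs at the origin. -/
def evalZero (n : ℕ) : HolGerm n →+* ℂ :=
  Ideal.Quotient.lift (nullIdeal n)
    ((Pi.evalRingHom (fun _ => ℂ) (0 : Fin n → ℂ)).comp (holFun n).val.toRingHom)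
    (fun f ha => Eventually.self_of_nhds (p := fun z => f.1 z = 0) ha)

lemma evalZero_germ (f : (Fin n → ℂ) → ℂ) (hf : AnalyticAt ℂ f 0) :
    evalZero n (germ f hf) = f 0 := rfl

lemma evalZero_of_mem {a : HolGerm n} (ha : a ∈ Ideal.span (Set.range (coord : Fin n → HolGerm n))) :
    evalZero n a = 0 := by
  have : Ideal.span (Set.range (coord : Fin n → HolGerm n)) ≤ RingHom.ker (evalZero n) := by
    rw [Ideal.span_le]
    rintro _ ⟨i, rfl⟩
    rfl
  exact this ha

lemma span_coord_le_jacobson :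
    Ideal.span (Set.range (coord : Fin n → HolGerm n)) ≤ Ideal.jacobson ⊥ := by
  intro a ha
  rw [Ideal.mem_jacobson_bot]
  intro b
  have h0 : evalZero n (a * b + 1) = 1 := by
    rw [map_add, map_mul, evalZero_of_mem ha]; simp
  obtain ⟨f, hf, hfa⟩ := germ_surj (a * b + 1)
  rw [hfa, evalZero_germ] at h0
  have hf0 : f 0 ≠ 0 := by rw [h0]; exact one_ne_zero
  rw [hfa]
  refine IsUnit.of_mul_eq_one (germ _ (hf.inv hf0)) ?_
  rw [germ_mul]
  change _ = germ (fun _ => 1) analyticAt_const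
  rw [germ_eq_iff]
  filter_upwards [hf.continuousAt.eventually_ne hf0] with z hz
  simp [hz]

/-- The leading weighted homogeneous part of a germ of weighted order at least `k`. -/
lemma exists_leading_part {w : Fin n → ℕ} (hw : ∀ i, 0 < w i) {k : ℕ} {a : HolGerm n}
    (ha : a ∈ wIdeal w coord k) :
    ∃ p : MvPolynomial (Fin n) ℂ, IsWeightedHomogeneous w p k ∧
      a - aeval coord p ∈ wIdeal w coord (k + 1) := by
  induction ha using Submodule.span_induction with
  | mem a h =>
    obtain ⟨m, hm, rfl⟩ := h
    by_cases hk : Finsupp.weight w m = k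
    · exact ⟨monomial m 1, isWeightedHomogeneous_monomial w m 1 hk, by simp⟩
    · refine ⟨0, isWeightedHomogeneous_zero ℂ w k, ?_⟩
      simpa using monomial_mem_wIdeal w coord (k + 1) m (by omega)
  | zero => exact ⟨0, isWeightedHomogeneous_zero ℂ w k, by simp⟩
  | add a b _ _ ha hb =>
    obtain ⟨p, hp, hpa⟩ := ha
    obtain ⟨q, hq, hqb⟩ := hb
    refine ⟨p + q, hp.add hq, ?_⟩
    rw [map_add, add_sub_add_comm]
    exact Ideal.add_mem _ hpa hqb
  | smul b a _ ha =>
    obtain ⟨p, hp, hpa⟩ := ha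
    obtain ⟨f, hf, rfl⟩ := germ_surj b
    have h1 : germ f hf - algebraMap ℂ _ (f 0) ∈ wIdeal w coord 1 := by
      rw [algebraMap_germ, germ_sub]
      refine span_pow_le_wIdeal hw coord 1 ?_
      rw [pow_one]
      exact germ_mem_span_coord _ (sub_self _)
    refine ⟨C (f 0) * p, hp.C_mul _, ?_⟩
    have h2 : germ f hf • a - aeval coord (C (f 0) * p)
        = germ f hf * (a - aeval coord p)
          + aeval coord p * (germ f hf - algebraMap ℂ _ (f 0)) := by
      simp only [map_mul, aeval_C, smul_eq_mul]; ring
    rw [h2]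
    refine Ideal.add_mem _ (Ideal.mul_mem_left _ _ hpa) (mul_mem_wIdeal ?_ h1 le_rfl)
    exact aeval_mem_wIdeal coord fun m hm => (hp (mem_support_iff.1 hm)).ge

/-- Composition of germs with a map germ fixing the origin. -/
noncomputable def pullback (ψ : (Fin n → ℂ) → (Fin n → ℂ)) (hψ : AnalyticAt ℂ ψ 0) (h0 : ψ 0 = 0) :
    HolGerm n →ₐ[ℂ] HolGerm n :=
  Ideal.Quotient.liftₐ (nullIdeal n)
    { toFun := fun f => germ (f.1 ∘ ψ) (by
        have : AnalyticAt ℂ f.1 (ψ 0) := by rw [h0]; exact f.2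
        exact AnalyticAt.comp this hψ)
      map_one' := rfl
      map_mul' := fun _ _ => rfl
      map_zero' := rfl
      map_add' := fun _ _ => rfl
      commutes' := fun _ => rfl }
    (by
      intro f hf
      change germ _ _ = germ (fun _ => 0) analyticAt_const
      rw [germ_eq_iff]
      have : Tendsto ψ (𝓝 0) (𝓝 0) := by
        have := hψ.continuousAt.tendsto; rwa [h0] at this
      exact this.eventually hf)

lemma pullback_germ (ψ : (Fin n → ℂ) → (Fin n → ℂ)) (hψ : AnalyticAt ℂ ψ 0) (h0 : ψ 0 = 0)
    (f : (Fin n → ℂ) → ℂ) (hf : AnalyticAt ℂ f 0) (hfψ : AnalyticAt ℂ (fun z => f (ψ z)) 0) :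
    pullback ψ hψ h0 (germ f hf) = germ (fun z => f (ψ z)) hfψ := rfl

end Germs

/-! ### Local inversion and Tougeron's theorem -/

section Inversion

open MvPolynomial

lemma exists_local_inverse {E : Type*} [NormedAddCommGroup E] [NormedSpace ℂ E] [CompleteSpace E]
    {φ : E → E} (hφ : AnalyticAt ℂ φ 0) (h0 : φ 0 = 0) (L : E ≃L[ℂ] E)
    (hL : HasFDerivAt φ (L : E →L[ℂ] E) 0) :
    ∃ ι : E → E, AnalyticAt ℂ ι 0 ∧ ι 0 = 0 ∧ (∀ᶠ z in 𝓝 (0 : E), ι (φ z) = z) ∧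
      ∀ᶠ z in 𝓝 (0 : E), φ (ι z) = z := by
  have hc : ContDiffAt ℂ ⊤ φ 0 := hφ.contDiffAt
  have hs : HasStrictFDerivAt φ (L : E →L[ℂ] E) 0 := hc.hasStrictFDerivAt' hL (by simp)
  have h1 := hc.to_localInverse hL (by simp)
  refine ⟨hc.localInverse hL (by simp), ?_, ?_, ?_, ?_⟩
  · have := h1.analyticAt
    rwa [h0] at this
  · have := hs.localInverse_apply_image
    rw [h0] at this
    exact this
  · exact hs.eventually_left_inverse
  · have := hs.eventually_right_inverse
    rw [h0] at this
    exact this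

variable {n : ℕ}

lemma exists_germBiholo {φ : (Fin n → ℂ) → (Fin n → ℂ)} (hφ : AnalyticAt ℂ φ 0) (h0 : φ 0 = 0)
    (L : (Fin n → ℂ) ≃L[ℂ] (Fin n → ℂ))
    (hL : HasFDerivAt φ (L : (Fin n → ℂ) →L[ℂ] (Fin n → ℂ)) 0) : ∃ ι, IsGermBiholo φ ι := by
  obtain ⟨ι, h1, h2, h3, h4⟩ := exists_local_inverse hφ h0 L hL
  exact ⟨ι, hφ, h1, h0, h2, h3, h4⟩

lemma IsGermBiholo.symm {φ ι : (Fin n → ℂ) → (Fin n → ℂ)} (h : IsGermBiholo φ ι) :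
    IsGermBiholo ι φ :=
  ⟨h.2.1, h.1, h.2.2.2.1, h.2.2.1, h.2.2.2.2.2, h.2.2.2.2.1⟩

lemma IsGermBiholo.tendsto {φ ι : (Fin n → ℂ) → (Fin n → ℂ)} (h : IsGermBiholo φ ι) :
    Tendsto φ (𝓝 0) (𝓝 0) := by
  have := h.1.continuousAt.tendsto
  rwa [h.2.2.1] at this

lemma IsGermBiholo.comp {φ ι φ₂ ι₂ : (Fin n → ℂ) → (Fin n → ℂ)} (h₂ : IsGermBiholo φ₂ ι₂)
    (h : IsGermBiholo φ ι) : IsGermBiholo (φ₂ ∘ φ) (ι ∘ ι₂) := by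
  have hφ := h.tendsto
  have hι₂ := h₂.symm.tendsto
  obtain ⟨a1, a2, a3, a4, a5, a6⟩ := h
  obtain ⟨b1, b2, b3, b4, b5, b6⟩ := h₂
  refine ⟨AnalyticAt.comp (by rwa [a3]) a1, AnalyticAt.comp (by rwa [b4]) b2,
    by simp [a3, b3], by simp [a4, b4], ?_, ?_⟩
  · filter_upwards [a5, hφ.eventually b5] with z h1 h2
    simp [h1, h2]
  · filter_upwards [b6, hι₂.eventually a6] with z h1 h2
    simp [h1, h2]

/-- Taylor's formula of order two for a polynomial, with remainder analytic in both arguments. -/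
lemma exists_taylor_remainder (g : MvPolynomial (Fin n) ℂ) :
    ∃ H : Fin n → Fin n → (Fin n → ℂ) × (Fin n → ℂ) → ℂ, (∀ i j x, AnalyticAt ℂ (H i j) x) ∧
      ∀ z u : Fin n → ℂ, eval (z + u) g = eval z g + ∑ i, u i * eval z (pderiv i g)
        + ∑ i, ∑ j, u i * u j * H i j (z, u) := by
  induction g using MvPolynomial.induction_on with
  | C a => exact ⟨fun _ _ _ => 0, fun _ _ _ => analyticAt_const, by simp⟩
  | add p q hp hq =>
    obtain ⟨H, hH, h1⟩ := hp
    obtain ⟨K, hK, h2⟩ := hq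
    refine ⟨fun i j x => H i j x + K i j x, fun i j x => (hH i j x).add (hK i j x), fun z u => ?_⟩
    simp only [map_add, h1, h2, mul_add, Finset.sum_add_distrib]
    ring
  | mul_X p k hp =>
    obtain ⟨H, hH, h1⟩ := hp
    have hz : ∀ (i : Fin n) (x : (Fin n → ℂ) × (Fin n → ℂ)), AnalyticAt ℂ
        (fun x : (Fin n → ℂ) × (Fin n → ℂ) => x.1 i) x := fun i x =>
      (analyticAt_coord i x.1).comp analyticAt_fst
    have hu : ∀ (i : Fin n) (x : (Fin n → ℂ) × (Fin n → ℂ)), AnalyticAt ℂ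
        (fun x : (Fin n → ℂ) × (Fin n → ℂ) => x.2 i) x := fun i x =>
      (analyticAt_coord i x.2).comp analyticAt_snd
    refine ⟨fun i j x => H i j x * (x.1 k + x.2 k)
      + (if j = k then 1 else 0) * eval x.1 (pderiv i p), fun i j x => ?_, fun z u => ?_⟩
    · exact ((hH i j x).mul ((hz k x).add (hu k x))).add
        (analyticAt_const.mul (analyticAt_eval_comp (fun i => hz i x) _))
    · have e1 : ∑ i, u i * eval z (pderiv i (p * X k))
          = (∑ i, u i * eval z (pderiv i p)) * z k + u k * eval z p := by
        simp only [pderiv_mul, pderiv_X, map_add, map_mul, eval_X, mul_add,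
          Finset.sum_add_distrib, Finset.sum_mul]
        congr 1
        · exact Finset.sum_congr rfl fun i _ => by ring
        · rw [Finset.sum_eq_single k]
          · simp
          · intro i _ hi
            simp [Pi.single_eq_of_ne (Ne.symm hi)]
          · simp
      have e2 : ∑ i, ∑ j, u i * u j * (H i j (z, u) * (z k + u k)
            + (if j = k then 1 else 0) * eval z (pderiv i p))
          = (∑ i, ∑ j, u i * u j * H i j (z, u)) * (z k + u k)
            + (∑ i, u i * eval z (pderiv i p)) * u k := by
        simp only [mul_add, Finset.sum_add_distrib, Finset.sum_mul]
        simp only [← Finset.sum_add_distrib]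
        refine Finset.sum_congr rfl fun i _ => ?_
        simp only [ite_mul, one_mul, zero_mul, mul_ite, mul_zero, Finset.sum_ite_eq', Finset.mem_univ,
          if_true, Finset.sum_add_distrib]
        have : ∀ c : ℂ, ∑ j, u i * u j * (H i j (z, u) * c) = ∑ j, u i * u j * H i j (z, u) * c :=
          fun c => Finset.sum_congr rfl fun j _ => by ring
        rw [this, this]
        ring
      rw [e1, e2]
      simp only [map_mul, eval_X, h1, Pi.add_apply]
      ring

lemma hasFDerivAt_mul_zero {E : Type*} [NormedAddCommGroup E] [NormedSpace ℂ E] {p q : E → ℂ}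
    {x : E} (hp : AnalyticAt ℂ p x) (hq : AnalyticAt ℂ q x) (hp0 : p x = 0) (hq0 : q x = 0) :
    HasFDerivAt (fun z => p z * q z) (0 : E →L[ℂ] ℂ) x := by
  have := hp.differentiableAt.hasFDerivAt.mul hq.differentiableAt.hasFDerivAt
  refine this.congr_fderiv ?_
  ext v
  simp [hp0, hq0]

/-- Tougeron's theorem: adding to `g` an element of `𝔪 J(g)²` does not change its right
equivalence class. The diffeomorphism is sought as `z ↦ z + u` with `uᵢ = ∑ⱼ yᵢⱼ ∂ⱼg`; after
division by the products `∂ₖg ∂ₗg` the equation for the matrix `y` has invertible linear part. -/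
lemma tougeron (g : MvPolynomial (Fin n) ℂ)
    (hcrit : ∀ i, eval (0 : Fin n → ℂ) (pderiv i g) = 0)
    (a : Fin n → Fin n → (Fin n → ℂ) → ℂ) (ha : ∀ i j, AnalyticAt ℂ (a i j) 0)
    (ha0 : ∀ i j, a i j 0 = 0) :
    ∃ φ ι : (Fin n → ℂ) → (Fin n → ℂ), IsGermBiholo φ ι ∧ ∀ᶠ z in 𝓝 (0 : Fin n → ℂ),
      eval (φ z) g = eval z g
        + ∑ i, ∑ j, a i j z * (eval z (pderiv i g) * eval z (pderiv j g)) := by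
  obtain ⟨H, hH, hT⟩ := exists_taylor_remainder g
  have hdg : ∀ i (z : (Fin n → ℂ)), AnalyticAt ℂ (fun z : (Fin n → ℂ) => eval z (pderiv i g)) z := fun i z =>
    analyticAt_eval_comp (fun i => analyticAt_coord i z) _
  have hy : ∀ i j (x : (Fin n → ℂ) × (Fin n → Fin n → ℂ)), AnalyticAt ℂ (fun x : (Fin n → ℂ) × (Fin n → Fin n → ℂ) => x.2 i j) x := fun i j x =>
    ((ContinuousLinearMap.proj (R := ℂ) (φ := fun _ : Fin n => ℂ) j).comp
      ((ContinuousLinearMap.proj (R := ℂ) (φ := fun _ : Fin n => Fin n → ℂ) i).comp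
        (ContinuousLinearMap.snd ℂ (Fin n → ℂ) (Fin n → Fin n → ℂ)))).analyticAt x
  let u : (Fin n → ℂ) × (Fin n → Fin n → ℂ) → (Fin n → ℂ) := fun x i => ∑ j, x.2 i j * eval x.1 (pderiv j g)
  have hu : ∀ x, AnalyticAt ℂ u x := fun x => by
    rw [analyticAt_pi_iff]
    intro i
    exact Finset.analyticAt_fun_sum _ fun j _ =>
      (hy i j x).mul ((hdg j x.1).comp_of_eq analyticAt_fst rfl)
  -- `B` is the coefficient of `∂ₖg ∂ₗg` in the second order Taylor remainder; it is quadratic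
  -- in `y`, so the equation `y + B (z, y) = a z` is solvable near the origin
  let B : (Fin n → ℂ) × (Fin n → Fin n → ℂ) → (Fin n → Fin n → ℂ) := fun x k l => ∑ i, ∑ j, x.2 i k * (x.2 j l * H i j (x.1, u x))
  have hterm : ∀ j l i (x : (Fin n → ℂ) × (Fin n → Fin n → ℂ)), AnalyticAt ℂ (fun x : (Fin n → ℂ) × (Fin n → Fin n → ℂ) => x.2 j l * H i j (x.1, u x)) x :=
    fun j l i x => (hy j l x).mul ((hH i j _).comp_of_eq (analyticAt_fst.prod (hu x)) rfl)
  have hB : ∀ x, AnalyticAt ℂ B x := fun x => by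
    rw [analyticAt_pi_iff]; intro k
    rw [analyticAt_pi_iff]; intro l
    exact Finset.analyticAt_fun_sum _ fun i _ => Finset.analyticAt_fun_sum _ fun j _ =>
      (hy i k x).mul (hterm j l i x)
  have hB' : HasFDerivAt B (0 : (Fin n → ℂ) × (Fin n → Fin n → ℂ) →L[ℂ] (Fin n → Fin n → ℂ)) 0 := by
    rw [hasFDerivAt_pi']; intro k
    rw [hasFDerivAt_pi']; intro l
    have : HasFDerivAt (fun x => B x k l) (∑ _i : Fin n, ∑ _j : Fin n, (0 : (Fin n → ℂ) × (Fin n → Fin n → ℂ) →L[ℂ] ℂ)) 0 := by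
      refine HasFDerivAt.fun_sum fun i _ => HasFDerivAt.fun_sum fun j _ => ?_
      exact hasFDerivAt_mul_zero (hy i k 0) (hterm j l i 0) rfl (zero_mul _)
    simpa using this
  let Ψ : (Fin n → ℂ) × (Fin n → Fin n → ℂ) → (Fin n → ℂ) × (Fin n → Fin n → ℂ) := fun x => (x.1, x.2 + B x)
  have hΨ : AnalyticAt ℂ Ψ 0 := analyticAt_fst.prod (analyticAt_snd.add (hB 0))
  have hB0 : B 0 = 0 := by ext k l; simp [B]
  have hΨ0 : Ψ 0 = 0 := by simp [Ψ, hB0]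
  have hΨ' : HasFDerivAt Ψ (ContinuousLinearEquiv.refl ℂ ((Fin n → ℂ) × (Fin n → Fin n → ℂ)) :
      (Fin n → ℂ) × (Fin n → Fin n → ℂ) →L[ℂ] (Fin n → ℂ) × (Fin n → Fin n → ℂ)) 0 := by
    have := (hasFDerivAt_fst (𝕜 := ℂ) (E := Fin n → ℂ) (F := Fin n → Fin n → ℂ) (p := 0)).prodMk
      ((hasFDerivAt_snd (𝕜 := ℂ) (E := Fin n → ℂ) (F := Fin n → Fin n → ℂ) (p := 0)).add hB')
    refine this.congr_fderiv ?_
    ext <;> simp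
  obtain ⟨Θ, hΘ, hΘ0, -, hΘr⟩ := exists_local_inverse hΨ hΨ0 _ hΨ'
  let A : (Fin n → ℂ) → (Fin n → ℂ) × (Fin n → Fin n → ℂ) := fun z => (z, fun i j => a i j z)
  have hA : AnalyticAt ℂ A 0 := by
    refine analyticAt_id.prod ?_
    rw [analyticAt_pi_iff]; intro k
    rw [analyticAt_pi_iff]; intro l
    exact ha k l
  have hA0 : A 0 = 0 := by ext <;> simp [A, ha0]
  let y : (Fin n → ℂ) → (Fin n → Fin n → ℂ) := fun z => (Θ (A z)).2
  have hyan : AnalyticAt ℂ y 0 := by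
    have : AnalyticAt ℂ (fun z => Θ (A z)) 0 := hΘ.comp_of_eq hA hA0
    exact analyticAt_snd.comp this
  have hy0 : y 0 = 0 := by simp [y, hA0, hΘ0]
  have hyij : ∀ i j, AnalyticAt ℂ (fun z => y z i j) 0 := fun i j => by
    have := (analyticAt_pi_iff.1 hyan) i
    exact (analyticAt_pi_iff.1 this) j
  let φ : (Fin n → ℂ) → (Fin n → ℂ) := fun z => z + u (z, y z)
  have hφ : AnalyticAt ℂ φ 0 :=
    analyticAt_id.add ((hu _).comp (analyticAt_id.prod hyan))
  have hφ0 : φ 0 = 0 := by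
    ext i
    have : ∑ j, y 0 i j * eval (0 : Fin n → ℂ) (pderiv j g) = 0 :=
      Finset.sum_eq_zero fun j _ => by rw [hcrit, mul_zero]
    exact (zero_add _).trans this
  have hφ' : HasFDerivAt φ ((ContinuousLinearEquiv.refl ℂ (Fin n → ℂ) : (Fin n → ℂ) →L[ℂ] (Fin n → ℂ))) 0 := by
    have hu' : HasFDerivAt (fun z => u (z, y z)) (0 : (Fin n → ℂ) →L[ℂ] (Fin n → ℂ)) 0 := by
      rw [hasFDerivAt_pi']; intro i
      have : HasFDerivAt (fun z => u (z, y z) i) (∑ _j : Fin n, (0 : (Fin n → ℂ) →L[ℂ] ℂ)) 0 := by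
        refine HasFDerivAt.fun_sum fun j _ => ?_
        exact hasFDerivAt_mul_zero (hyij i j) (hdg j 0) (by simp [hy0]) (hcrit j)
      simpa using this
    have := (hasFDerivAt_id (𝕜 := ℂ) (0 : (Fin n → ℂ))).add hu'
    refine this.congr_fderiv ?_
    ext; simp
  obtain ⟨ι, hι⟩ := exists_germBiholo hφ hφ0 _ hφ'
  refine ⟨φ, ι, hι, ?_⟩
  have hAt : Tendsto A (𝓝 0) (𝓝 0) := by
    have := hA.continuousAt.tendsto; rwa [hA0] at this
  filter_upwards [hAt.eventually hΘr] with z hz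
  have h1 : (Θ (A z)).1 = z := congrArg Prod.fst hz
  have hpair : Θ (A z) = (z, y z) := Prod.ext h1 rfl
  have h2 : ∀ k l, y z k l + B (z, y z) k l = a k l z := fun k l => by
    have := congrFun (congrFun (congrArg Prod.snd hz) k) l
    rw [hpair] at this
    exact this
  change eval (z + u (z, y z)) g = _
  rw [hT, add_assoc]
  congr 1
  simp only [← h2, add_mul, Finset.sum_add_distrib]
  congr 1
  · refine Finset.sum_congr rfl fun i _ => ?_
    simp only [u, Finset.sum_mul]
    exact Finset.sum_congr rfl fun j _ => by ring
  · simp only [B, Finset.sum_mul]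
    -- the sum over `i`, `j`, `k`, `l` is reordered
    have : ∀ i j, u (z, y z) i * u (z, y z) j * H i j (z, u (z, y z))
        = ∑ k, ∑ l, y z i k * (y z j l * H i j (z, u (z, y z)))
            * (eval z (pderiv k g) * eval z (pderiv l g)) := by
      intro i j
      conv_lhs => rw [show u (z, y z) i = ∑ k, y z i k * eval z (pderiv k g) from rfl,
        show u (z, y z) j = ∑ l, y z j l * eval z (pderiv l g) from rfl]
      rw [Finset.sum_mul_sum, Finset.sum_mul]
      refine Finset.sum_congr rfl fun k _ => ?_
      rw [Finset.sum_mul]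
      exact Finset.sum_congr rfl fun l _ => by ring
    simp only [this]
    calc _ = ∑ i, ∑ k, ∑ j, ∑ l, y z i k * (y z j l * H i j (z, u (z, y z)))
            * (eval z (pderiv k g) * eval z (pderiv l g)) :=
          Finset.sum_congr rfl fun i _ => Finset.sum_comm
      _ = ∑ k, ∑ i, ∑ l, ∑ j, y z i k * (y z j l * H i j (z, u (z, y z)))
            * (eval z (pderiv k g) * eval z (pderiv l g)) := by
          rw [Finset.sum_comm]
          exact Finset.sum_congr rfl fun i _ => Finset.sum_congr rfl fun k _ => Finset.sum_comm
      _ = _ := Finset.sum_congr rfl fun k _ => Finset.sum_comm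

end Inversion

/-! ### Weighted order along the weighted dilations -/

section Order

open MvPolynomial

variable {n : ℕ} {w : Fin n → ℕ}

lemma tendsto_dilation (hw : ∀ i, 0 < w i) (z : Fin n → ℂ) :
    Tendsto (fun t : ℝ => fun i => (t : ℂ) ^ w i * z i) (𝓝[>] 0) (𝓝 (0 : Fin n → ℂ)) := by
  refine tendsto_nhdsWithin_of_tendsto_nhds ?_
  have hc : Continuous (fun t : ℝ => fun i => (t : ℂ) ^ w i * z i) := by fun_prop
  have := hc.tendsto 0
  have e : (fun i => (((0 : ℝ) : ℂ)) ^ w i * z i) = (0 : Fin n → ℂ) := by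
    ext i
    simp [(hw i).ne']
  rwa [e] at this

lemma tendsto_pow_pos {j : ℕ} (hj : 0 < j) :
    Tendsto (fun t : ℝ => (t : ℂ) ^ j) (𝓝[>] 0) (𝓝 0) := by
  refine tendsto_nhdsWithin_of_tendsto_nhds ?_
  have hc : Continuous (fun t : ℝ => (t : ℂ) ^ j) := by fun_prop
  have := hc.tendsto 0
  simpa [hj.ne'] using this

/-- A germ of weighted order at least `k + 1` is `o(t ^ k)` along every weighted dilation orbit. -/
lemma tendsto_of_mem_wIdeal (hw : ∀ i, 0 < w i) {k : ℕ} {a : HolGerm n}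
    (ha : a ∈ wIdeal w coord (k + 1)) (z : Fin n → ℂ) :
    ∀ (h : (Fin n → ℂ) → ℂ) (hh : AnalyticAt ℂ h 0), a = germ h hh →
      Tendsto (fun t : ℝ => h (fun i => (t : ℂ) ^ w i * z i) / (t : ℂ) ^ k) (𝓝[>] 0) (𝓝 0) := by
  have key : ∀ (h g : (Fin n → ℂ) → ℂ) (hh : AnalyticAt ℂ h 0) (hg : AnalyticAt ℂ g 0),
      germ h hh = germ g hg →
      Tendsto (fun t : ℝ => g (fun i => (t : ℂ) ^ w i * z i) / (t : ℂ) ^ k) (𝓝[>] 0) (𝓝 0) →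
      Tendsto (fun t : ℝ => h (fun i => (t : ℂ) ^ w i * z i) / (t : ℂ) ^ k) (𝓝[>] 0) (𝓝 0) := by
    intro h g hh hg e ht
    refine ht.congr' ?_
    filter_upwards [(tendsto_dilation hw z).eventually (germ_eq_iff.1 e)] with t e'
    rw [e']
  refine Submodule.span_induction (p := fun a _ => ∀ (h : (Fin n → ℂ) → ℂ)
    (hh : AnalyticAt ℂ h 0), a = germ h hh →
      Tendsto (fun t : ℝ => h (fun i => (t : ℂ) ^ w i * z i) / (t : ℂ) ^ k) (𝓝[>] 0) (𝓝 0))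
    ?_ ?_ ?_ ?_ ha
  · rintro _ ⟨m, hm, rfl⟩ h hh e
    rw [aeval_coord] at e
    refine key _ _ _ _ e.symm ?_
    have hlim : Tendsto (fun t : ℝ => (t : ℂ) ^ (Finsupp.weight w m - k)
        * eval z (monomial m (1 : ℂ))) (𝓝[>] 0) (𝓝 0) := by
      simpa using (tendsto_pow_pos (j := Finsupp.weight w m - k) (by omega)).mul_const
        (eval z (monomial m (1 : ℂ)))
    refine hlim.congr' ?_
    filter_upwards [self_mem_nhdsWithin] with t ht
    have ht0 : (t : ℂ) ≠ 0 := by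
      have : (0 : ℝ) < t := ht
      exact_mod_cast this.ne'
    rw [eval_weighted_scale (isWeightedHomogeneous_monomial w m (1 : ℂ) rfl), eq_div_iff (pow_ne_zero _ ht0),
      mul_right_comm, ← pow_add]
    congr 2
    omega
  · intro h hh e
    refine key h (fun _ => 0) hh analyticAt_const (e.symm.trans ?_) (by simp)
    exact (map_zero (Ideal.Quotient.mk (nullIdeal n))).symm
  · intro a b _ _ iha ihb h hh e
    obtain ⟨f, hf, rfl⟩ := germ_surj a
    obtain ⟨g, hg, rfl⟩ := germ_surj b
    rw [germ_add] at e
    refine key _ _ _ _ e.symm ?_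
    simpa [add_div] using (iha f hf rfl).add (ihb g hg rfl)
  · intro c a _ iha h hh e
    obtain ⟨f, hf, rfl⟩ := germ_surj a
    obtain ⟨g, hg, rfl⟩ := germ_surj c
    rw [smul_eq_mul, germ_mul] at e
    refine key _ _ _ _ e.symm ?_
    simpa [mul_div_assoc] using
      (hg.continuousAt.tendsto.comp (tendsto_dilation hw z)).mul (iha f hf rfl)

/-- A germ that is `o(t ^ d)` along the weighted dilation orbits has weighted order at least
`d + 1`. -/
lemma mem_wIdeal_of_tendsto (hw : ∀ i, 0 < w i) {d : ℕ} {g : (Fin n → ℂ) → ℂ}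
    (hg : AnalyticAt ℂ g 0) {r : ℝ} (hr : 0 < r)
    (h : ∀ z : Fin n → ℂ, ‖z‖ < r → Tendsto
      (fun t : ℝ => g (fun i => (t : ℂ) ^ w i * z i) / (t : ℂ) ^ d) (𝓝[>] 0) (𝓝 0)) :
    germ g hg ∈ wIdeal w coord (d + 1) := by
  have hpos : ∀ᶠ t : ℝ in 𝓝[>] 0, (t : ℂ) ≠ 0 := by
    filter_upwards [self_mem_nhdsWithin] with t ht
    have : (0 : ℝ) < t := ht
    exact_mod_cast this.ne'
  suffices H : ∀ k ≤ d + 1, germ g hg ∈ wIdeal w coord k from H _ le_rfl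
  intro k
  induction k with
  | zero =>
    intro _
    have : (1 : HolGerm n) ∈ wIdeal w coord 0 := by
      simpa using monomial_mem_wIdeal w (coord (n := n)) 0 0 (Nat.zero_le _)
    rw [(Ideal.eq_top_iff_one _).2 this]
    trivial
  | succ k ih =>
    intro hk
    obtain ⟨p, hp, hgp⟩ := exists_leading_part hw (ih (by omega))
    -- the leading form vanishes on a ball, hence everywhere by homogeneity
    have hz : ∀ z : Fin n → ℂ, ‖z‖ < r → eval z p = 0 := by
      intro z hz
      have h1 : Tendsto (fun t : ℝ => g (fun i => (t : ℂ) ^ w i * z i) / (t : ℂ) ^ k)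
          (𝓝[>] 0) (𝓝 0) := by
        have hc : Continuous (fun t : ℝ => (t : ℂ) ^ (d - k)) := by fun_prop
        have hc' := tendsto_nhdsWithin_of_tendsto_nhds (s := Set.Ioi 0) (hc.tendsto 0)
        have := (h z hz).mul hc'
        rw [zero_mul] at this
        refine this.congr' ?_
        filter_upwards [hpos] with t ht
        rw [div_mul_eq_mul_div, div_eq_div_iff (pow_ne_zero _ ht) (pow_ne_zero _ ht), mul_assoc,
          ← pow_add]
        congr 2
        omega
      rw [aeval_coord, germ_sub] at hgp
      have h2 := tendsto_of_mem_wIdeal hw hgp z _ _ rfl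
      have h3 := h1.sub h2
      rw [sub_zero] at h3
      refine tendsto_nhds_unique (tendsto_const_nhds.congr' ?_) h3
      filter_upwards [hpos] with t ht
      rw [eval_weighted_scale hp, ← sub_div, sub_sub_cancel, mul_div_cancel_left₀ _
        (pow_ne_zero _ ht)]
    have hp0 : p = 0 := by
      refine MvPolynomial.funext fun z => ?_
      obtain ⟨t, ht, ht'⟩ := exists_scale_mem hw (Metric.ball_mem_nhds 0 hr) z
      have := hz _ (mem_ball_zero_iff.1 ht')
      rw [eval_weighted_scale hp] at this
      simpa using (mul_eq_zero.1 this).resolve_left (pow_ne_zero _ ht)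
    rwa [hp0, map_zero, sub_zero] at hgp

end Order

/-! ### Quasihomogeneous coordinate changes -/

section Triangular

open MvPolynomial

variable {n : ℕ} {w : Fin n → ℕ}

lemma hasFDerivAt_eval (p : MvPolynomial (Fin n) ℂ) (z : Fin n → ℂ) :
    HasFDerivAt (fun z => eval z p) (∑ j, eval z (pderiv j p) •
      ContinuousLinearMap.proj (R := ℂ) (φ := fun _ : Fin n => ℂ) j) z := by
  induction p using MvPolynomial.induction_on with
  | C a =>
    simp only [eval_C]
    exact (hasFDerivAt_const a z).congr_fderiv (by ext; simp)
  | add p q hp hq =>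
    simp only [map_add]
    refine (hp.add hq).congr_fderiv ?_
    ext v
    simp [add_mul, Finset.sum_add_distrib]
  | mul_X p k hp =>
    simp only [map_mul, eval_X]
    refine (hp.mul (ContinuousLinearMap.proj (R := ℂ) (φ := fun _ : Fin n => ℂ) k).hasFDerivAt).congr_fderiv ?_
    have e : ∀ j, eval z (pderiv j (p * X k))
        = eval z (pderiv j p) * z k + (if j = k then eval z p else 0) := by
      intro j
      simp only [pderiv_mul, pderiv_X, map_add, map_mul, eval_X]
      split_ifs with h
      · simp [h]
      · simp [Pi.single_eq_of_ne (Ne.symm h)]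
    ext v
    simp only [e]
    simp [add_mul, Finset.sum_add_distrib, Finset.mul_sum, mul_assoc, mul_left_comm, add_comm]

lemma eval_zero_of_isWeightedHomogeneous {p : MvPolynomial (Fin n) ℂ} {k : ℕ}
    (hp : IsWeightedHomogeneous w p k) (hk : 0 < k) : eval (0 : Fin n → ℂ) p = 0 := by
  rw [MvPolynomial.eval_zero, constantCoeff_eq]
  by_contra h
  have := hp h
  simp at this
  omega

/-- The map `z ↦ z - b z`, where `b` raises weights by `a ≥ 1`, is a local biholomorphism: its
linear part at the origin is unipotent, being triangular when the coordinates are ordered by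
weight. -/
lemma exists_triangular_biholo {a : ℕ} (hw : ∀ i, 0 < w i) (ha : 0 < a)
    (b : Fin n → MvPolynomial (Fin n) ℂ) (hb : ∀ i, IsWeightedHomogeneous w (b i) (w i + a)) :
    ∃ ι, IsGermBiholo (fun z i => z i - eval z (b i)) ι := by
  let D : (Fin n → ℂ) →L[ℂ] (Fin n → ℂ) := ContinuousLinearMap.pi fun i =>
    ContinuousLinearMap.proj (R := ℂ) (φ := fun _ : Fin n => ℂ) i -
      ∑ j, eval (0 : Fin n → ℂ) (pderiv j (b i)) •
        ContinuousLinearMap.proj (R := ℂ) (φ := fun _ : Fin n => ℂ) j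
  have hD : HasFDerivAt (fun (z : Fin n → ℂ) i => z i - eval z (b i)) D 0 := by
    rw [hasFDerivAt_pi']
    intro i
    exact ((ContinuousLinearMap.proj (R := ℂ) (φ := fun _ : Fin n => ℂ) i).hasFDerivAt.sub
      (hasFDerivAt_eval (b i) 0))
  have hcoef : ∀ i j, w j ≤ w i → eval (0 : Fin n → ℂ) (pderiv j (b i)) = 0 := by
    intro i j hij
    exact eval_zero_of_isWeightedHomogeneous (isWeightedHomogeneous_pderiv (hb i) j) (by omega)
  have hinj : Function.Injective D.toLinearMap := by
    rw [← LinearMap.ker_eq_bot, LinearMap.ker_eq_bot']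
    intro v hv
    have hv' : ∀ i, v i = ∑ j, eval (0 : Fin n → ℂ) (pderiv j (b i)) * v j := by
      intro i
      have := congrFun hv i
      simp only [D, ContinuousLinearMap.coe_coe, ContinuousLinearMap.coe_pi'] at this
      simpa [sub_eq_zero, -MvPolynomial.eval_zero, -MvPolynomial.eval_zero'] using this
    obtain ⟨W, hW⟩ : ∃ W, ∀ i, w i ≤ W := ⟨∑ i, w i, fun i =>
      Finset.single_le_sum (fun _ _ => Nat.zero_le _) (Finset.mem_univ i)⟩
    have H : ∀ N i, W - w i = N → v i = 0 := by
      intro N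
      induction N using Nat.strong_induction_on with
      | _ N ih =>
        intro i hi
        rw [hv' i]
        refine Finset.sum_eq_zero fun j _ => ?_
        rcases le_or_gt (w j) (w i) with h | h
        · rw [hcoef i j h, zero_mul]
        · rw [ih (W - w j) (by have := hW j; omega) j rfl, mul_zero]
    ext i
    exact H _ i rfl
  refine exists_germBiholo ?_ ?_
    (LinearEquiv.ofInjectiveEndo D.toLinearMap hinj).toContinuousLinearEquiv
    (hD.congr_fderiv (by ext; rfl))
  · rw [analyticAt_pi_iff]
    intro i
    exact (analyticAt_coord i 0).sub (analyticAt_eval_comp (fun i => analyticAt_coord i 0) _)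
  · ext i
    simp only [Pi.zero_apply]
    rw [eval_zero_of_isWeightedHomogeneous (hb i) (by have := hw i; omega), sub_zero]

end Triangular

/-! ### Successive elimination of weighted homogeneous terms -/

section Normalization

open MvPolynomial

variable {n : ℕ} {w : Fin n → ℕ} {d : ℕ} {Q : MvPolynomial (Fin n) ℂ} {κ : Type*}
  {a : κ → Fin n →₀ ℕ}

lemma le_weight_of_mem_span (ha : ∀ j, d < Finsupp.weight w (a j)) {P : MvPolynomial (Fin n) ℂ}
    (hP : P ∈ Submodule.span ℂ (Set.range fun j => monomial (a j) (1 : ℂ))) :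
    ∀ m ∈ P.support, d + 1 ≤ Finsupp.weight w m := by
  classical
  induction hP using Submodule.span_induction with
  | mem x hx =>
    obtain ⟨j, rfl⟩ := hx
    intro m hm
    rw [Finset.mem_singleton.1 (support_monomial_subset hm)]
    exact ha j
  | zero => simp
  | add p q _ _ hp hq =>
    intro m hm
    exact (Finset.mem_union.1 (support_add hm)).elim (hp m) (hq m)
  | smul c p _ hp => exact fun m hm => hp m (support_smul hm)

/-- One step of the normalization: if `f` agrees with `Q + P` up to weighted order `k`, the term
of weight `k` of the difference can be reduced to a combination of the chosen monomials by a change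
of coordinates `z ↦ z - b z`, at the expense of terms of weight at least `k + 1`. -/
lemma normalization_step (hw : ∀ i, 0 < w i) (hQ : IsWeightedHomogeneous w Q d)
    (hwd : ∀ i, w i ≤ d) (ha : ∀ j, d < Finsupp.weight w (a j))
    (hspan : ∀ p : MvPolynomial (Fin n) ℂ, (∀ m ∈ p.support, d < Finsupp.weight w m) →
      ∃ P ∈ Submodule.span ℂ (Set.range fun j => monomial (a j) (1 : ℂ)),
        p - P ∈ Ideal.span (Set.range fun i => pderiv i Q))
    {k : ℕ} (hk : d + 1 ≤ k) {f : (Fin n → ℂ) → ℂ} (hf : AnalyticAt ℂ f 0)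
    {P : MvPolynomial (Fin n) ℂ}
    (hP : P ∈ Submodule.span ℂ (Set.range fun j => monomial (a j) (1 : ℂ)))
    (hfP : germ f hf - aeval coord (Q + P) ∈ wIdeal w coord k) :
    ∃ ψ ι : (Fin n → ℂ) → (Fin n → ℂ), IsGermBiholo ψ ι ∧
      ∃ P' ∈ Submodule.span ℂ (Set.range fun j => monomial (a j) (1 : ℂ)),
        ∀ hfψ : AnalyticAt ℂ (fun z => f (ψ z)) 0,
          germ (fun z => f (ψ z)) hfψ - aeval coord (Q + P') ∈ wIdeal w coord (k + 1) := by
  obtain ⟨h, hh, hR⟩ := exists_leading_part hw hfP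
  have hhw : ∀ m ∈ h.support, k ≤ Finsupp.weight w m := fun m hm =>
    (hh (mem_support_iff.1 hm)).ge
  obtain ⟨P₁, hP₁, hJ⟩ := hspan h fun m hm => lt_of_lt_of_le (by omega) (hhw m hm)
  obtain ⟨b, hb, hbr⟩ := homogeneous_relation hQ hwd (by omega) hh hJ
  obtain ⟨ι, hψ⟩ := exists_triangular_biholo hw (a := k - d) (by omega) b hb
  refine ⟨_, ι, hψ, P + weightedHomogeneousComponent w k P₁,
    Submodule.add_mem _ hP (component_mem_span a k hP₁), fun hfψ => ?_⟩
  set ψ : (Fin n → ℂ) → (Fin n → ℂ) := fun z i => z i - eval z (b i) with hψdef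
  let σ := pullback ψ hψ.1 hψ.2.2.1
  let u : Fin n → HolGerm n := fun i => -aeval coord (b i)
  have hu : ∀ i, u i ∈ wIdeal w coord (w i + (k - d)) := fun i =>
    neg_mem (aeval_mem_wIdeal coord fun m hm => (hb i (mem_support_iff.1 hm)).ge)
  have hσx : ∀ i, σ (coord i) = coord i + u i := fun i => by
    have e : coord i + u i = germ (fun z => ψ z i) (analyticAt_pi_iff.1 hψ.1 i) := by
      change coord i + -aeval coord (b i) = _
      rw [aeval_coord, ← sub_eq_add_neg, coord, germ_sub]
    rw [e]
    exact pullback_germ ψ hψ.1 hψ.2.2.1 _ _ _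
  have hσ : ∀ p, σ (aeval coord p) = aeval (coord + u) p := fun p => by
    rw [algHom_aeval]
    congr 2
    ext i
    exact hσx i
  have hσw : ∀ i, σ (coord i) ∈ wIdeal w coord (w i) := fun i => by
    rw [hσx]
    exact add_mem (X_mem_wIdeal _ _ i) (wIdeal_anti _ _ (by omega) (hu i))
  have e1 : σ (germ f hf - aeval coord (Q + P) - aeval coord h) ∈ wIdeal w coord (k + 1) :=
    algHom_mem_wIdeal σ hσw hR
  have e2 := wIdeal_anti w (coord (n := n)) (show k + 1 ≤ k + (k - d) by omega)
    (taylor_first hu hhw)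
  have e3 := wIdeal_anti w (coord (n := n)) (show k + 1 ≤ d + 2 * (k - d) by omega)
    (taylor_second hu fun m hm => (hQ (mem_support_iff.1 hm)).ge)
  have e4 := wIdeal_anti w (coord (n := n)) (show k + 1 ≤ d + 1 + (k - d) by omega)
    (taylor_first hu (le_weight_of_mem_span ha hP))
  have hf' : germ (fun z => f (ψ z)) hfψ = σ (germ f hf) :=
    (pullback_germ ψ hψ.1 hψ.2.2.1 f hf hfψ).symm
  have hlin : aeval (coord (n := n)) h + ∑ i, u i * aeval coord (pderiv i Q)
      = aeval coord (weightedHomogeneousComponent w k P₁) := by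
    conv_lhs => rw [hbr]
    simp [u]
  rw [hf']
  have := add_mem (add_mem (add_mem e1 e2) e3) e4
  simp only [map_sub, hσ, map_add] at this ⊢
  rw [← hlin]
  convert this using 1
  ring

lemma exists_normalization (hw : ∀ i, 0 < w i) (hQ : IsWeightedHomogeneous w Q d)
    (hwd : ∀ i, w i ≤ d) (ha : ∀ j, d < Finsupp.weight w (a j))
    (hspan : ∀ p : MvPolynomial (Fin n) ℂ, (∀ m ∈ p.support, d < Finsupp.weight w m) →
      ∃ P ∈ Submodule.span ℂ (Set.range fun j => monomial (a j) (1 : ℂ)),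
        p - P ∈ Ideal.span (Set.range fun i => pderiv i Q))
    {f : (Fin n → ℂ) → ℂ} (hf : AnalyticAt ℂ f 0)
    (hfQ : germ f hf - aeval coord Q ∈ wIdeal w coord (d + 1)) (k : ℕ) :
    ∃ φ ι : (Fin n → ℂ) → (Fin n → ℂ), IsGermBiholo φ ι ∧
      ∃ P ∈ Submodule.span ℂ (Set.range fun j => monomial (a j) (1 : ℂ)),
        ∃ hfι : AnalyticAt ℂ (fun z => f (ι z)) 0,
          germ (fun z => f (ι z)) hfι - aeval coord (Q + P) ∈ wIdeal w coord (d + 1 + k) := by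
  induction k with
  | zero =>
    exact ⟨id, id, ⟨analyticAt_id, analyticAt_id, rfl, rfl, by simp, by simp⟩, 0, zero_mem _, hf,
      by simpa using hfQ⟩
  | succ k ih =>
    obtain ⟨φ, ι, hφ, P, hP, hfι, hr⟩ := ih
    obtain ⟨ψ, θ, hψ, P', hP', hr'⟩ :=
      normalization_step hw hQ hwd ha hspan (by omega) hfι hP hr
    have han : AnalyticAt ℂ (fun z => f (ι (ψ z))) 0 :=
      AnalyticAt.fun_comp (g := fun z => f (ι z)) (by rw [hψ.2.2.1]; exact hfι) hψ.1
    exact ⟨θ ∘ φ, ι ∘ ψ, hψ.symm.comp hφ, P', hP', han, hr' han⟩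

end Normalization

/-! ### Finite determinacy -/

section Determinacy

open MvPolynomial

variable {n : ℕ} {w : Fin n → ℕ} {d : ℕ} {Q P : MvPolynomial (Fin n) ℂ}

lemma aeval_pderiv_mem_wIdeal {D : ℕ} (hP : ∀ m ∈ P.support, D ≤ Finsupp.weight w m)
    (i : Fin n) : aeval (coord (n := n)) (pderiv i P) ∈ wIdeal w coord (D - w i) := by
  rw [P.as_sum, map_sum, map_sum]
  refine Ideal.sum_mem _ fun m hm => aeval_mem_wIdeal coord fun l hl => ?_
  have := isWeightedHomogeneous_pderiv
    (isWeightedHomogeneous_monomial w m (coeff m P) rfl) i (mem_support_iff.1 hl)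
  rw [this]
  exact Nat.sub_le_sub_right (hP m hm) _

/-- The Jacobian ideal of the semiquasihomogeneous polynomial `Q + P` contains a power of the
maximal ideal. Modulo terms of higher weight this holds because the high-weight monomials lie in
the Jacobian ideal of `Q`, and Nakayama's lemma removes the higher terms. -/
lemma span_coord_pow_le_jacobian (hw : ∀ i, 0 < w i) (hQ : IsWeightedHomogeneous w Q d)
    (hwd : ∀ i, w i ≤ d) {N : ℕ} (hdN : d ≤ N)
    (hN : ∀ m, N ≤ Finsupp.weight w m →
      monomial m (1 : ℂ) ∈ Ideal.span (Set.range fun i => pderiv i Q))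
    (hP : ∀ m ∈ P.support, d + 1 ≤ Finsupp.weight w m) :
    Ideal.span (Set.range (coord (n := n))) ^ N
      ≤ Ideal.span (Set.range fun i => aeval (coord (n := n)) (pderiv i (Q + P))) := by
  set J := Ideal.span (Set.range fun i => aeval (coord (n := n)) (pderiv i (Q + P))) with hJ
  have step : ∀ K, N ≤ K → wIdeal w (coord (n := n)) K ≤ J ⊔ wIdeal w coord (K + 1) := by
    intro K hK
    refine Ideal.span_le.2 ?_
    rintro _ ⟨m, hm, rfl⟩
    rcases hm.eq_or_lt with hm | hm
    · obtain ⟨b, hb, hbr⟩ := homogeneous_relation (P := 0) hQ hwd (hdN.trans hK)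
        (isWeightedHomogeneous_monomial w m (1 : ℂ) hm.symm)
        (by simpa using hN m (hK.trans hm.le))
      have e : aeval (coord (n := n)) (monomial m (1 : ℂ))
          = ∑ i, aeval coord (b i) * aeval coord (pderiv i (Q + P))
            - ∑ i, aeval coord (b i) * aeval coord (pderiv i P) := by
        rw [hbr]
        simp [mul_add, Finset.sum_add_distrib]
      rw [e]
      refine Submodule.sub_mem _ (Ideal.mem_sup_left ?_) (Ideal.mem_sup_right ?_)
      · exact Ideal.sum_mem _ fun i _ => Ideal.mul_mem_left _ _ (Ideal.subset_span ⟨i, rfl⟩)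
      · refine Ideal.sum_mem _ fun i _ => mul_mem_wIdeal
          (aeval_mem_wIdeal coord fun l hl => (hb i (mem_support_iff.1 hl)).ge)
          (aeval_pderiv_mem_wIdeal hP i) ?_
        have := hwd i
        omega
    · exact Ideal.mem_sup_right (monomial_mem_wIdeal _ _ _ _ hm)
  have iter : ∀ t, wIdeal w (coord (n := n)) N ≤ J ⊔ wIdeal w coord (N + t) := by
    intro t
    induction t with
    | zero => exact le_sup_right
    | succ t ih =>
      exact ih.trans (sup_le le_sup_left (step _ (by omega)))
  obtain ⟨W, hW0, hW⟩ : ∃ W, 0 < W ∧ ∀ i, w i ≤ W := ⟨∑ i, w i + 1, by omega, fun i =>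
    (Finset.single_le_sum (fun _ _ => Nat.zero_le _) (Finset.mem_univ i)).trans (by omega)⟩
  refine Submodule.le_of_le_smul_of_le_jacobson_bot (I := Ideal.span (Set.range (coord (n := n))))
    ?_ span_coord_le_jacobson ?_
  · exact Ideal.FG.pow (Submodule.fg_span (Set.finite_range coord))
  · rw [smul_eq_mul, ← pow_succ']
    refine (span_pow_le_wIdeal hw coord N).trans ((iter (W * (N + 1))).trans
      (sup_le_sup_left ?_ _))
    exact (wIdeal_anti _ _ (by omega)).trans (wIdeal_le_span_pow hW hW0 coord (N + 1))

lemma exists_sum_of_mem_mul_span {A : Type*} [CommRing A] {I : Ideal A} {v : Fin n → A} {r : A}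
    (hr : r ∈ I * Ideal.span (Set.range v)) : ∃ c : Fin n → A, (∀ i, c i ∈ I) ∧
      r = ∑ i, c i * v i := by
  rw [← smul_eq_mul, Ideal.span, Submodule.mem_ideal_smul_span_iff_exists_sum] at hr
  obtain ⟨c, hc, rfl⟩ := hr
  refine ⟨c, hc, ?_⟩
  rw [Finsupp.sum_fintype _ _ (by simp)]
  rfl

end Determinacy

open MvPolynomial in
/-- **Theorem (Arnold).** A semiquasihomogeneous function `f = Q + F′` with
quasihomogeneous principal part `Q` (isolated singularity, quasihomogeneous degree `d`)
is right-equivalent to `Q + Σ c_j e_j`, where the `e_j` are monomials of weighted degree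
strictly greater than `d` taken from a monomial basis of the local algebra `A_Q`. -/
theorem stmt_11 (n : ℕ) (hn : 0 < n) (w : Fin n → ℕ) (hw : ∀ i, 0 < w i) (d : ℕ) (hd : 0 < d)
    (Q : MvPolynomial (Fin n) ℂ)
    -- `Q` is quasihomogeneous of type `w` and quasihomogeneous degree `d`
    (hQqh : ∀ m ∈ Q.support, ∑ i, w i * m i = d)
    -- `Q` has an isolated singularity at `0 ∈ ℂⁿ`
    (hQcrit : ∀ i, eval (0 : Fin n → ℂ) (pderiv i Q) = 0)
    (hQsing : ∀ᶠ z in 𝓝 (0 : Fin n → ℂ), (∀ i, eval z (pderiv i Q) = 0) → z = 0)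
    (f : (Fin n → ℂ) → ℂ) (hf : AnalyticAt ℂ f 0)
    -- `f = Q + F′` where every monomial of the Taylor series of `F′ = f − Q` has
    -- weighted degree strictly greater than `d`
    (hford : ∃ r > (0:ℝ), ∀ z : Fin n → ℂ, ‖z‖ < r →
      Tendsto (fun lam : ℝ =>
          (f (fun i => (lam : ℂ) ^ (w i) * z i) - eval (fun i => (lam : ℂ) ^ (w i) * z i) Q) /
            (lam : ℂ) ^ d)
        (𝓝[>] 0) (𝓝 0)) :
    ∃ φ ι : (Fin n → ℂ) → (Fin n → ℂ), IsGermBiholo φ ι ∧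
    ∃ (s : ℕ) (e : Fin s → (Fin n →₀ ℕ)) (c : Fin s → ℂ),
      -- the monomials `e j` have weighted degree strictly greater than `d`
      (∀ j, d < ∑ i, w i * e j i) ∧
      -- their residue classes in the local algebra `A_Q` are `ℂ`-linearly independent
      LinearIndependent ℂ (fun j => Ideal.Quotient.mk
        (Ideal.span (Set.range fun i => pderiv i Q)) (monomial (e j) (1:ℂ))) ∧
      -- `f ∘ φ⁻¹ = Q + Σ_j c_j e_j`
      (∀ᶠ z in 𝓝 (0 : Fin n → ℂ),
        f (ι z) = eval z Q + ∑ j, c j * eval z (monomial (e j) (1:ℂ))) := by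
  classical
  have hQ : IsWeightedHomogeneous w Q d := fun m hm => by
    rw [weight_eq_sum]
    exact hQqh m (mem_support_iff.2 hm)
  have hwd := weight_le_degree hw hQ hQcrit hQsing
  obtain ⟨N₀, hN₀⟩ := exists_monomial_mem_jacobian hw hQ hQsing
  obtain ⟨N, hdN, hN⟩ : ∃ N, d ≤ N ∧ ∀ m, N ≤ Finsupp.weight w m →
      monomial m (1 : ℂ) ∈ Ideal.span (Set.range fun i => pderiv i Q) :=
    ⟨max N₀ d, le_max_right _ _, fun m hm => hN₀ m ((le_max_left _ _).trans hm)⟩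
  obtain ⟨κ, a, ha, hli, hspan⟩ :=
    exists_monomial_family w d (Ideal.span (Set.range fun i => pderiv i Q))
  have hQan : AnalyticAt ℂ (fun z : Fin n → ℂ => eval z Q) 0 :=
    analyticAt_eval_comp (fun i => analyticAt_coord i 0) Q
  have hfQ : germ f hf - aeval coord Q ∈ wIdeal w coord (d + 1) := by
    obtain ⟨r, hr, h⟩ := hford
    rw [aeval_coord, germ_sub]
    exact mem_wIdeal_of_tendsto hw (hf.sub hQan) hr h
  obtain ⟨W, hW0, hW⟩ : ∃ W, 0 < W ∧ ∀ i, w i ≤ W := ⟨∑ i, w i + 1, by omega, fun i =>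
    (Finset.single_le_sum (fun _ _ => Nat.zero_le _) (Finset.mem_univ i)).trans (by omega)⟩
  obtain ⟨φ, ι, hφ, P, hP, hfι, hR⟩ :=
    exists_normalization hw hQ hwd ha hspan hf hfQ (W * (N + N + 1))
  have hPw := le_weight_of_mem_span ha hP
  -- the remainder lies in `𝔪 J(Q + P)²`
  have hpow := span_coord_pow_le_jacobian hw hQ hwd hdN hN hPw
  have hR' := (wIdeal_anti w coord (Nat.le_add_left _ _)).trans
    (wIdeal_le_span_pow hW hW0 coord (N + N + 1)) hR
  rw [pow_succ', pow_add, ← mul_assoc] at hR'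
  obtain ⟨c₁, hc₁, hRc⟩ := exists_sum_of_mem_mul_span
    (Ideal.mul_mono (Ideal.mul_mono le_rfl hpow) hpow hR')
  choose c₂ hc₂ hc₁c using fun j => exists_sum_of_mem_mul_span (hc₁ j)
  choose α hα hαc using fun i j => germ_surj (c₂ j i)
  have hα0 : ∀ i j, α i j 0 = 0 := fun i j => by
    rw [← evalZero_germ _ (hα i j), ← hαc]
    exact evalZero_of_mem (hc₂ j i)
  have hcrit : ∀ i, eval (0 : Fin n → ℂ) (pderiv i (Q + P)) = 0 := by
    intro i
    rw [map_add, map_add, hQcrit, zero_add, P.as_sum, map_sum, map_sum]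
    refine Finset.sum_eq_zero fun m hm => eval_zero_of_isWeightedHomogeneous
      (isWeightedHomogeneous_pderiv (isWeightedHomogeneous_monomial w m (coeff m P) rfl) i) ?_
    have := hPw m hm
    have := hwd i
    omega
  -- by Tougeron the remainder is absorbed by a further change of coordinates
  obtain ⟨φ₂, ι₂, hφ₂, hT⟩ := tougeron (Q + P) hcrit α hα hα0
  have hfg : ∀ᶠ z in 𝓝 (0 : Fin n → ℂ), f (ι z) = eval (φ₂ z) (Q + P) := by
    have e : germ (fun z => f (ι z)) hfι - aeval coord (Q + P)
        = ∑ i, ∑ j, germ (α i j) (hα i j)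
          * (aeval coord (pderiv i (Q + P)) * aeval coord (pderiv j (Q + P))) := by
      rw [hRc, Finset.sum_comm]
      refine Finset.sum_congr rfl fun j _ => ?_
      rw [hc₁c, Finset.sum_mul]
      refine Finset.sum_congr rfl fun i _ => ?_
      rw [hαc, mul_assoc]
    simp only [aeval_coord, germ_mul, germ_sub] at e
    have e' : ∀ i j, AnalyticAt ℂ (fun z => α i j z
        * (eval z (pderiv i (Q + P)) * eval z (pderiv j (Q + P)))) 0 := fun i j =>
      (hα i j).mul ((analyticAt_eval_comp (fun i => analyticAt_coord i 0) _).mul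
        (analyticAt_eval_comp (fun i => analyticAt_coord i 0) _))
    have e1 := fun i => germ_sum Finset.univ (fun j z => α i j z
        * (eval z (pderiv i (Q + P)) * eval z (pderiv j (Q + P)))) (e' i)
    simp only [e1] at e
    rw [germ_sum Finset.univ (fun i z => ∑ j, α i j z
        * (eval z (pderiv i (Q + P)) * eval z (pderiv j (Q + P))))
        (fun i => Finset.analyticAt_fun_sum _ fun j _ => e' i j), germ_eq_iff] at e
    filter_upwards [e, hT] with z h1 h2
    rw [h2, ← h1]
    ring
  obtain ⟨c, rfl⟩ := Finsupp.mem_span_range_iff_exists_finsupp.1 hP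
  let q : Fin c.support.card ≃ c.support := c.support.equivFin.symm
  refine ⟨φ₂ ∘ φ, ι ∘ ι₂, hφ₂.comp hφ, c.support.card, fun j => a (q j), fun j => c (q j),
    fun j => ?_, ?_, ?_⟩
  · rw [← weight_eq_sum]
    exact ha _
  · exact hli.comp (fun j => (q j : κ)) (Subtype.val_injective.comp q.injective)
  · filter_upwards [hφ₂.symm.tendsto.eventually hfg, hφ₂.2.2.2.2.2] with z h1 h2
    rw [Function.comp_apply, h1, h2, map_add]
    congr 1
    rw [Equiv.sum_comp q (fun x : c.support => c x * eval z (monomial (a x) (1 : ℂ))),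
      Finset.sum_coe_sort c.support (fun x => c x * eval z (monomial (a x) (1 : ℂ)))]
    simp [Finsupp.sum, smul_eval]
end
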